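/- Let k be a number field. Then the set k^× − k^{×2} of nonzero elements of k that are not squares is diophantine over k. -/

import Mathlib

/-- A subset `A ⊆ k^n` is diophantine over `k` if there exist `m ∈ ℕ` and finitely many
polynomials `f₁, …, f_r ∈ k[x₁, …, x_{n+m}]` such that
`A = {a ∈ k^n : ∃ b ∈ k^m, f_i(a,b) = 0 for all i}`. -/
def IsDiophantine (k : Type*) [Field k] {n : ℕ} (A : Set (Fin n → k)) : Prop :=
  ∃ (m r : ℕ) (f : Fin r → MvPolynomial (Fin (n + m)) k),
    A = {a : Fin n → k | ∃ b : Fin m → k,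
      ∀ i : Fin r, MvPolynomial.eval (Fin.append a b) (f i) = 0}

/-- A subset of `k` is diophantine if the corresponding subset of `k¹` is. -/
def IsDiophantineSet (k : Type*) [Field k] (A : Set k) : Prop :=
  IsDiophantine k {x : Fin 1 → k | x 0 ∈ A}

open Finset

/-- An additive map from an integer lattice to a finite group of order less than `(M + 1) ^ #κ`
kills a nonzero vector with entries of absolute value at most `M`. -/
theorem exists_small_mem_ker {κ G : Type*} [Fintype κ] [AddCommGroup G] [Finite G]
    (φ : (κ → ℤ) →+ G) (M : ℕ) (h : Nat.card G < (M + 1) ^ Fintype.card κ) :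
    ∃ v : κ → ℤ, v ≠ 0 ∧ (∀ i, |v i| ≤ M) ∧ φ v = 0 := by
  classical
  have := Fintype.ofFinite G
  have hc : Fintype.card G < Fintype.card (κ → Fin (M + 1)) := by
    rw [← Nat.card_eq_fintype_card]; simpa using h
  obtain ⟨x, y, hxy, he⟩ := Fintype.exists_ne_map_eq_of_card_lt
    (fun x : κ → Fin (M + 1) => φ (fun i => ((x i : ℕ) : ℤ))) hc
  refine ⟨fun i => ((x i : ℕ) : ℤ) - ((y i : ℕ) : ℤ), fun h0 => hxy ?_, fun i => ?_, ?_⟩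
  · funext i
    have := congrFun h0 i
    apply Fin.ext
    simp only [Pi.zero_apply] at this
    omega
  · have := (x i).2
    have := (y i).2
    show |((x i : ℕ) : ℤ) - ((y i : ℕ) : ℤ)| ≤ M
    rw [abs_le]; constructor <;> omega
  · have : φ ((fun i => ((x i : ℕ) : ℤ)) - (fun i => ((y i : ℕ) : ℤ))) = 0 := by
      rw [map_sub, sub_eq_zero]; exact he
    exact this

section Lattice

variable {R ι : Type*} [CommRing R] [Fintype ι]

/-- All coordinates of `z` in the basis `b` are at most `X` in absolute value. -/
def Module.Basis.InBox (b : Module.Basis ι ℤ R) (X : ℕ) (z : R) : Prop := ∀ i, |b.repr z i| ≤ X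

variable (b : Module.Basis ι ℤ R)

omit [Fintype ι] in
theorem inBox_sub {X Y : ℕ} {x y : R} (hx : b.InBox X x) (hy : b.InBox Y y) :
    b.InBox (X + Y) (x - y) := by
  intro i
  have h1 := hx i
  have h2 := hy i
  simp only [map_sub, Finsupp.sub_apply]
  push_cast
  exact (abs_sub _ _).trans (add_le_add h1 h2)

omit [Fintype ι] in
theorem inBox_add {X Y : ℕ} {x y : R} (hx : b.InBox X x) (hy : b.InBox Y y) :
    b.InBox (X + Y) (x + y) := by
  intro i
  have h1 := hx i
  have h2 := hy i
  simp only [map_add, Finsupp.add_apply]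
  push_cast
  exact (abs_add_le _ _).trans (add_le_add h1 h2)

theorem inBox_mul : ∃ C : ℕ, ∀ X Y : ℕ, ∀ x y : R, b.InBox X x → b.InBox Y y →
    b.InBox (C * X * Y) (x * y) := by
  classical
  let c : ι → ι → ι → ℤ := fun i j k => b.repr (b j * b k) i
  refine ⟨∑ i, ∑ j, ∑ k, (c i j k).natAbs, fun X Y x y hx hy i => ?_⟩
  have key : b.repr (x * y) i = ∑ j, ∑ k, b.repr x j * b.repr y k * c i j k := by
    conv_lhs => rw [← b.sum_repr x, ← b.sum_repr y, Finset.sum_mul_sum]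
    simp only [smul_mul_smul_comm, map_sum, map_smul, Finsupp.coe_finsetSum, Finset.sum_apply,
      Finsupp.smul_apply, smul_eq_mul, c]
  rw [key]
  calc |∑ j, ∑ k, b.repr x j * b.repr y k * c i j k|
      ≤ ∑ j, ∑ k, |b.repr x j * b.repr y k * c i j k| :=
        (Finset.abs_sum_le_sum_abs _ _).trans
          (Finset.sum_le_sum fun j _ => Finset.abs_sum_le_sum_abs _ _)
    _ ≤ ∑ j, ∑ k, (X : ℤ) * Y * |c i j k| := by
        refine Finset.sum_le_sum fun j _ => Finset.sum_le_sum fun k _ => ?_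
        rw [abs_mul, abs_mul]
        exact mul_le_mul_of_nonneg_right
          (mul_le_mul (hx j) (hy k) (abs_nonneg _) (by positivity)) (abs_nonneg _)
    _ = (X : ℤ) * Y * ∑ j, ∑ k, |c i j k| := by simp only [Finset.mul_sum]
    _ ≤ (X : ℤ) * Y * ∑ i, ∑ j, ∑ k, |c i j k| := by
        refine mul_le_mul_of_nonneg_left ?_ (by positivity)
        exact Finset.single_le_sum (f := fun i => ∑ j, ∑ k, |c i j k|)
          (fun i _ => Finset.sum_nonneg fun j _ => Finset.sum_nonneg fun k _ => abs_nonneg _)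
          (Finset.mem_univ i)
    _ = _ := by push_cast; ring

theorem norm_le_of_inBox : ∃ C : ℕ, 0 < C ∧ ∀ X : ℕ, ∀ x : R, b.InBox X x →
    (Algebra.norm ℤ x).natAbs ≤ C * X ^ Fintype.card ι := by
  classical
  obtain ⟨C, hC⟩ := inBox_mul b
  have hb : ∀ j, b.InBox 1 (b j) := by
    intro j i
    simp only [Module.Basis.repr_self, Finsupp.single_apply]
    split_ifs <;> simp
  refine ⟨(Fintype.card ι).factorial * (C + 1) ^ Fintype.card ι, by positivity,
    fun X x hx => ?_⟩
  have hent : ∀ i j, |Algebra.leftMulMatrix b x i j| ≤ ((C + 1 : ℕ) : ℤ) * X := by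
    intro i j
    rw [Algebra.leftMulMatrix_eq_repr_mul]
    refine (hC X 1 x (b j) hx (hb j) i).trans ?_
    push_cast
    nlinarith [Nat.zero_le X]
  have := Matrix.det_le (abv := AbsoluteValue.abs) (A := Algebra.leftMulMatrix b x) hent
  rw [← Algebra.norm_eq_matrix_det] at this
  zify
  simp only [AbsoluteValue.abs_apply, nsmul_eq_mul] at this
  refine this.trans (le_of_eq ?_)
  push_cast; rw [mul_pow]; ring

end Lattice

section Lattice

variable {R ι : Type*} [CommRing R] [Fintype ι] (b : Module.Basis ι ℤ R)

open Classical in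
/-- The finite set of elements whose coordinates are at most `X` in absolute value. -/
noncomputable def Module.Basis.box (X : ℕ) : Finset R :=
  (Fintype.piFinset fun _ : ι => Finset.Icc (-(X : ℤ)) X).map b.equivFun.symm.toEquiv.toEmbedding

theorem mem_box {X : ℕ} {z : R} : z ∈ b.box X ↔ b.InBox X z := by
  classical
  simp only [Module.Basis.box, Finset.mem_map_equiv, Fintype.mem_piFinset, Finset.mem_Icc,
    Module.Basis.InBox, abs_le]
  rfl

theorem card_box (X : ℕ) : #(b.box X) = (2 * X + 1) ^ Fintype.card ι := by
  classical
  simp only [Module.Basis.box, Finset.card_map, Fintype.card_piFinset, Int.card_Icc,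
    Finset.prod_const, Finset.card_univ]
  congr 1
  omega

variable [IsDedekindDomain R] [Module.Free ℤ R] [Module.Finite ℤ R]

theorem exists_inBox_sub_mul : ∃ C : ℕ, 0 < C ∧ ∀ M : ℕ, ∀ β : R, β ≠ 0 → b.InBox M β →
    ∀ z : R, ∃ u : R, b.InBox (C * M) (z - β * u) := by
  obtain ⟨C, hC⟩ := inBox_mul b
  refine ⟨C + 1, by positivity, fun M β hβ hM z => ?_⟩
  obtain ⟨D, hD, β', hβ'⟩ : ∃ D : ℕ, D ≠ 0 ∧ ∃ β' : R, (D : R) = β * β' := by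
    refine ⟨Ideal.absNorm (Ideal.span {β}), ?_, ?_⟩
    · rw [Ne, Ideal.absNorm_eq_zero_iff]; simpa using hβ
    · exact Ideal.mem_span_singleton.mp (Ideal.absNorm_mem _)
  let u : R := b.equivFun.symm fun i => b.repr (β' * z) i / (D : ℤ)
  have hu : ∀ i, b.repr u i = b.repr (β' * z) i / (D : ℤ) := fun i =>
    congrFun (b.equivFun.apply_symm_apply _) i
  have hr : b.InBox D (β' * z - (D : R) * u) := by
    intro i
    have h1 : (D : R) * u = (D : ℤ) • u := by simp
    rw [h1, map_sub, map_smul, Finsupp.sub_apply, Finsupp.smul_apply, hu, smul_eq_mul]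
    have h2 := Int.emod_add_mul_ediv (b.repr (β' * z) i) D
    have h3 := Int.emod_nonneg (b.repr (β' * z) i) (b := D) (by exact_mod_cast hD)
    have h4 := Int.emod_lt_of_pos (b.repr (β' * z) i) (b := D) (by positivity)
    rw [abs_le]; constructor <;> linarith
  refine ⟨u, fun i => ?_⟩
  have h5 := hC M D β _ hM hr i
  have h6 : β * (β' * z - (D : R) * u) = (D : ℤ) • (z - β * u) := by
    rw [zsmul_eq_mul, Int.cast_natCast]
    linear_combination - z * hβ'
  rw [h6, map_smul, Finsupp.smul_apply, smul_eq_mul, abs_mul] at h5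
  have hD' : (0 : ℤ) < D := by positivity
  simp only [Nat.abs_cast] at h5
  have h7 : |b.repr (z - β * u) i| ≤ C * M := by
    push_cast at h5
    nlinarith
  push_cast
  nlinarith

theorem exists_mem_inBox {I : Ideal R} (hI : I ≠ ⊥) (M : ℕ)
    (hM : Ideal.absNorm I < (M + 1) ^ Fintype.card ι) : ∃ β ∈ I, β ≠ 0 ∧ b.InBox M β := by
  have : Finite (R ⧸ I) := Ideal.finiteQuotientOfFreeOfNeBot I hI
  obtain ⟨v, hv0, hv, hvI⟩ := exists_small_mem_ker
    ((Ideal.Quotient.mk I).toAddMonoidHom.comp b.equivFun.symm.toAddEquiv.toAddMonoidHom) M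
    (by simpa [Ideal.absNorm_apply, Submodule.cardQuot_apply] using hM)
  refine ⟨b.equivFun.symm v, Ideal.Quotient.eq_zero_iff_mem.mp hvI, (LinearEquiv.map_ne_zero_iff _).mpr hv0,
    fun i => ?_⟩
  rw [show b.repr (b.equivFun.symm v) i = v i from congrFun (b.equivFun.apply_symm_apply v) i]
  exact hv i

/-- Every residue class modulo an ideal has a representative of size about the `n`-th root of the
norm of the ideal. -/
theorem exists_inBox_sub_mem : ∃ C : ℕ, 0 < C ∧ ∀ I : Ideal R, I ≠ ⊥ → ∀ M : ℕ,
    Ideal.absNorm I < (M + 1) ^ Fintype.card ι → ∀ z : R, ∃ q : R, b.InBox (C * M) q ∧ z - q ∈ I := by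
  obtain ⟨C, hC0, hC⟩ := exists_inBox_sub_mul b
  refine ⟨C, hC0, fun I hI M hM z => ?_⟩
  obtain ⟨β, hβI, hβ0, hβ⟩ := exists_mem_inBox b hI M hM
  obtain ⟨u, hu⟩ := hC M β hβ0 hβ z
  exact ⟨z - β * u, hu, by simpa using I.mul_mem_right u hβI⟩

omit [Module.Finite ℤ R] in
open Classical in
/-- Two-sided count of the points of an ideal in a box. -/
theorem card_box_inter_ideal (I : Ideal R) [Finite (R ⧸ I)] (D X : ℕ)
    (h : ∀ z : R, ∃ q : R, b.InBox D q ∧ z - q ∈ I) :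
    Ideal.absNorm I * #{z ∈ b.box X | z ∈ I} ≤ (2 * (X + D) + 1) ^ Fintype.card ι ∧
    (D ≤ X → (2 * (X - D) + 1) ^ Fintype.card ι ≤ Ideal.absNorm I * #{z ∈ b.box X | z ∈ I}) := by
  have := Fintype.ofFinite (R ⧸ I)
  have hq : ∀ a : R ⧸ I, ∃ q : R, b.InBox D q ∧ Ideal.Quotient.mk I q = a := by
    intro a
    obtain ⟨z, rfl⟩ := Ideal.Quotient.mk_surjective a
    obtain ⟨q, hq, hz⟩ := h z
    exact ⟨q, hq, (Ideal.Quotient.eq.mpr hz).symm⟩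
  choose q hqD hqa using hq
  have hN : Ideal.absNorm I * #{z ∈ b.box X | z ∈ I} =
      #((Finset.univ : Finset (R ⧸ I)) ×ˢ {z ∈ b.box X | z ∈ I}) := by
    rw [Finset.card_product, Finset.card_univ, Ideal.absNorm_apply, Submodule.cardQuot_apply,
      Nat.card_eq_fintype_card]
  rw [hN]
  constructor
  · rw [← card_box b]
    refine Finset.card_le_card_of_injOn (fun p => p.2 + q p.1) ?_ ?_
    · rintro ⟨a, z⟩ hp
      simp only [Finset.coe_product, Finset.coe_univ, Set.mem_prod, Finset.mem_coe,
        Finset.mem_filter, mem_box] at hp ⊢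
      exact inBox_add b hp.2.1 (hqD a)
    · rintro ⟨a, z⟩ hp ⟨a', z'⟩ hp' he
      simp only [Finset.coe_product, Finset.coe_univ, Set.mem_prod, Finset.mem_coe,
        Finset.mem_filter, mem_box] at hp hp' he
      have hz := Ideal.Quotient.eq_zero_iff_mem.mpr hp.2.2
      have hz' := Ideal.Quotient.eq_zero_iff_mem.mpr hp'.2.2
      have : a = a' := by
        rw [← hqa a, ← hqa a']
        have := congrArg (Ideal.Quotient.mk I) he
        simpa [hz, hz'] using this
      subst this
      simpa using he
  · intro hDX
    rw [← card_box b]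
    refine Finset.card_le_card_of_injOn
      (fun z => (Ideal.Quotient.mk I z, z - q (Ideal.Quotient.mk I z))) ?_ ?_
    · intro z hz
      simp only [Finset.coe_product, Finset.coe_univ, Set.mem_prod, Finset.mem_coe, Set.mem_univ,
        Finset.mem_filter, mem_box, true_and] at hz ⊢
      refine ⟨?_, ?_⟩
      · have := inBox_sub b hz (hqD (Ideal.Quotient.mk I z))
        rwa [Nat.sub_add_cancel hDX] at this
      · rw [← Ideal.Quotient.eq, hqa]
    · intro z _ z' _ he
      simp only [Prod.mk.injEq] at he
      have h2 := he.2
      rw [he.1] at h2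
      simpa using h2

theorem pow_succ_sub_pow_succ_le {x y : ℝ} (hy : 0 ≤ y) (hxy : y ≤ x) (n : ℕ) :
    x ^ (n + 1) - y ^ (n + 1) ≤ (n + 1) * (x - y) * x ^ n := by
  induction n with
  | zero => simp
  | succ n ih =>
    have h1 : y ^ (n + 1) ≤ x ^ (n + 1) := pow_le_pow_left₀ hy hxy _
    have h2 := mul_le_mul_of_nonneg_left ih (hy.trans hxy)
    have h3 := mul_le_mul_of_nonneg_left h1 (sub_nonneg.mpr hxy)
    push_cast
    calc x ^ (n + 1 + 1) - y ^ (n + 1 + 1)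
        = x * (x ^ (n + 1) - y ^ (n + 1)) + (x - y) * y ^ (n + 1) := by ring
      _ ≤ x * ((n + 1) * (x - y) * x ^ n) + (x - y) * x ^ (n + 1) := add_le_add h2 h3
      _ = _ := by ring

open Classical in
/-- The number of points of an ideal in a box, with an error term of the order of the boundary. -/
theorem abs_card_box_inter_ideal_sub_le [Nonempty ι] (A : ℝ) (hA : 0 < A) :
    ∃ C : ℝ, 0 < C ∧ ∀ I : Ideal R, I ≠ ⊥ → ∀ X : ℕ, 1 ≤ X →
      (Ideal.absNorm I : ℝ) ≤ A * X ^ Fintype.card ι →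
      |(Ideal.absNorm I : ℝ) * #{z ∈ b.box X | z ∈ I} - (2 * X + 1) ^ Fintype.card ι| ≤
        C * (Ideal.absNorm I : ℝ) ^ (1 / (Fintype.card ι : ℝ)) * X ^ (Fintype.card ι - 1) := by
  obtain ⟨C₀, hC₀, hC⟩ := exists_inBox_sub_mem b
  obtain ⟨m, hm⟩ : ∃ m, Fintype.card ι = m + 1 :=
    Nat.exists_eq_succ_of_ne_zero Fintype.card_ne_zero
  rw [hm] at hC ⊢
  set r : ℝ := 1 / ((m + 1 : ℕ) : ℝ) with hr
  have hr0 : 0 < r := by positivity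
  set K : ℝ := 3 + 2 * C₀ * A ^ r with hK
  have hK0 : 0 < K := by positivity
  refine ⟨(m + 1) * (2 * C₀) * K ^ m, by positivity, fun I hI X hX hN => ?_⟩
  have : Finite (R ⧸ I) := Ideal.finiteQuotientOfFreeOfNeBot I hI
  set N := Ideal.absNorm I
  set ν : ℝ := (N : ℝ) ^ r with hν
  have hν0 : 0 ≤ ν := by positivity
  have hνN : ν ^ (m + 1) = N := by
    rw [hν, hr, one_div]
    exact Real.rpow_inv_natCast_pow (by positivity) (by omega)
  have hMlt : N < (⌊ν⌋₊ + 1) ^ (m + 1) := by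
    have : (N : ℝ) < ((⌊ν⌋₊ : ℝ) + 1) ^ (m + 1) := by
      rw [← hνN]
      exact pow_lt_pow_left₀ (Nat.lt_floor_add_one ν) hν0 (by omega)
    exact_mod_cast this
  have hM : (⌊ν⌋₊ : ℝ) ≤ ν := Nat.floor_le hν0
  have hX1 : (1 : ℝ) ≤ X := by exact_mod_cast hX
  have hνX : ν ≤ A ^ r * X := by
    calc ν ≤ (A * (X : ℝ) ^ (m + 1)) ^ r := Real.rpow_le_rpow (by positivity) hN hr0.le
      _ = A ^ r * X := by
        rw [Real.mul_rpow hA.le (by positivity), hr, one_div,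
          Real.pow_rpow_inv_natCast (by positivity) (by omega)]
  obtain ⟨hup, hlo⟩ := card_box_inter_ideal b I (C₀ * ⌊ν⌋₊) X (hC I hI _ hMlt)
  rw [hm] at hup hlo
  set D := C₀ * ⌊ν⌋₊ with hD
  have hDν : (D : ℝ) ≤ C₀ * ν := by
    rw [hD]; push_cast; exact mul_le_mul_of_nonneg_left hM (by positivity)
  have hD0 : (0 : ℝ) ≤ D := by positivity
  set S : ℝ := (N : ℝ) * #{z ∈ b.box X | z ∈ I} with hS
  have hup' : S ≤ (2 * X + 1 + 2 * D) ^ (m + 1) := by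
    have : S ≤ (2 * (X + D) + 1) ^ (m + 1) := by rw [hS]; exact_mod_cast hup
    refine this.trans (le_of_eq ?_)
    ring
  have ha : (0 : ℝ) ≤ 2 * X + 1 := by positivity
  have hKX : 2 * (X : ℝ) + 1 + 2 * D ≤ K * X := by
    have : (D : ℝ) ≤ C₀ * (A ^ r * X) := hDν.trans (mul_le_mul_of_nonneg_left hνX (by positivity))
    rw [hK]; nlinarith
  have hfin : ((m : ℝ) + 1) * (2 * D) * (2 * X + 1 + 2 * D) ^ m ≤
      (m + 1) * (2 * C₀) * K ^ m * ν * X ^ m := by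
    calc ((m : ℝ) + 1) * (2 * D) * (2 * X + 1 + 2 * D) ^ m
        ≤ (m + 1) * (2 * (C₀ * ν)) * (K * X) ^ m := by gcongr
      _ = _ := by rw [mul_pow]; ring
  simp only [Nat.add_sub_cancel]
  refine le_trans ?_ hfin
  have hmono : (2 * (X : ℝ) + 1) ^ m ≤ (2 * X + 1 + 2 * D) ^ m :=
    pow_le_pow_left₀ ha (by linarith) m
  rw [abs_le]
  constructor
  · by_cases hDX : D ≤ X
    · have hlo' : (2 * (X : ℝ) + 1 - 2 * D) ^ (m + 1) ≤ S := by
        have : ((2 * ((X - D : ℕ) : ℝ) + 1)) ^ (m + 1) ≤ S := by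
          rw [hS]; exact_mod_cast hlo hDX
        refine le_trans (le_of_eq ?_) this
        rw [Nat.cast_sub hDX]; ring
      have hDX' : (D : ℝ) ≤ X := by exact_mod_cast hDX
      have h1 := pow_succ_sub_pow_succ_le (x := 2 * (X : ℝ) + 1) (y := 2 * X + 1 - 2 * D)
        (by linarith) (by linarith) m
      have h2 : ((m : ℝ) + 1) * (2 * D) * (2 * X + 1) ^ m ≤
          (m + 1) * (2 * D) * (2 * X + 1 + 2 * D) ^ m := by gcongr
      have h3 : (2 * (X : ℝ) + 1) - (2 * X + 1 - 2 * D) = 2 * D := by ring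
      rw [h3] at h1
      linarith
    · have hS0 : 0 ≤ S := by positivity
      have hDX' : (X : ℝ) + 1 ≤ D := by exact_mod_cast (not_le.mp hDX)
      have h1 : (2 * (X : ℝ) + 1) ^ (m + 1) ≤
          ((m : ℝ) + 1) * (2 * D) * (2 * X + 1 + 2 * D) ^ m := by
        rw [pow_succ']
        refine mul_le_mul ?_ hmono (by positivity) (by positivity)
        have : (0 : ℝ) ≤ m := by positivity
        nlinarith
      linarith
  · have h1 := pow_succ_sub_pow_succ_le (x := 2 * (X : ℝ) + 1 + 2 * D) (y := 2 * X + 1)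
      ha (by linarith) m
    have h3 : (2 * (X : ℝ) + 1 + 2 * D) - (2 * X + 1) = 2 * D := by ring
    rw [h3] at h1
    linarith

end Lattice

theorem sum_mul_le_sum_mul_of_antitone {a b w : ℕ → ℝ}
    (hab : ∀ m, ∑ k ∈ Icc 1 m, a k ≤ ∑ k ∈ Icc 1 m, b k)
    (hw : ∀ k, 1 ≤ k → w (k + 1) ≤ w k) (hw0 : ∀ k, 0 ≤ w k) (Y : ℕ) :
    ∑ k ∈ Icc 1 Y, a k * w k ≤ ∑ k ∈ Icc 1 Y, b k * w k := by
  have key : w Y * (∑ k ∈ Icc 1 Y, b k - ∑ k ∈ Icc 1 Y, a k) ≤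
      ∑ k ∈ Icc 1 Y, b k * w k - ∑ k ∈ Icc 1 Y, a k * w k := by
    induction Y with
    | zero => simp
    | succ Y ih =>
      simp only [Finset.sum_Icc_succ_top (Nat.le_add_left 1 Y)]
      rcases Nat.eq_zero_or_pos Y with rfl | hY
      · simp; linarith
      · have := mul_le_mul_of_nonneg_right (hw Y hY) (sub_nonneg.mpr (hab Y))
        linarith
  have := mul_nonneg (hw0 Y) (sub_nonneg.mpr (hab Y))
  linarith

theorem abs_sum_mul_le_of_antitone {a w : ℕ → ℝ} {B : ℝ}
    (ha : ∀ m, |∑ k ∈ Icc 1 m, a k| ≤ B)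
    (hw : ∀ k, 1 ≤ k → w (k + 1) ≤ w k) (hw0 : ∀ k, 0 ≤ w k) (Y : ℕ) :
    |∑ k ∈ Icc 1 Y, a k * w k| ≤ B * w 1 := by
  have hB : 0 ≤ B := (abs_nonneg _).trans (ha 0)
  have hb : ∀ m, 1 ≤ m → ∀ w : ℕ → ℝ, ∑ k ∈ Icc 1 m, (if k = 1 then B else 0) * w k = B * w 1 := by
    intro m hm w
    rw [Finset.sum_eq_single_of_mem 1 (by simpa using hm)]
    · simp
    · intro k _ hk; simp [hk]
  rcases Nat.eq_zero_or_pos Y with rfl | hY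
  · simpa using mul_nonneg hB (hw0 1)
  have hb1 : ∀ m, 1 ≤ m → ∑ k ∈ Icc 1 m, (if k = 1 then B else 0) = B := fun m hm => by
    simpa using hb m hm 1
  rw [abs_le']
  constructor
  · rw [← hb Y hY w]
    refine sum_mul_le_sum_mul_of_antitone (fun m => ?_) hw hw0 Y
    rcases Nat.eq_zero_or_pos m with rfl | hm
    · simp
    · rw [hb1 m hm]; exact (le_abs_self _).trans (ha m)
  · rw [← hb Y hY w, ← Finset.sum_neg_distrib]
    simp only [← neg_mul]
    refine sum_mul_le_sum_mul_of_antitone (a := fun k => - a k) (fun m => ?_) hw hw0 Y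
    rcases Nat.eq_zero_or_pos m with rfl | hm
    · simp
    · rw [hb1 m hm, Finset.sum_neg_distrib]; exact (neg_le_abs _).trans (ha m)

theorem sum_rpow_inv_sub_one_le {n : ℕ} (hn : 0 < n) (Y : ℕ) :
    ∑ k ∈ Icc 1 Y, (k : ℝ) ^ (1 / (n : ℝ) - 1) ≤ n * (Y : ℝ) ^ (1 / (n : ℝ)) := by
  set r : ℝ := 1 / (n : ℝ) with hr
  have hn' : (1 : ℝ) ≤ n := by exact_mod_cast hn
  have hr0 : 0 < r := by positivity
  have hr1 : r ≤ 1 := by rw [hr, div_le_one (by positivity)]; exact hn'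
  have hnr : n * r = 1 := by rw [hr]; field_simp
  induction Y with
  | zero => simp [Real.zero_rpow hr0.ne']
  | succ Y ih =>
    rw [Finset.sum_Icc_succ_top (Nat.le_add_left 1 Y)]
    have hs : (0 : ℝ) < ((Y + 1 : ℕ) : ℝ) := by positivity
    have hb := rpow_one_add_le_one_add_mul_self (s := -(1 / ((Y + 1 : ℕ) : ℝ))) (p := r) (by
      rw [neg_le_neg_iff, div_le_one hs]; push_cast; linarith [Nat.cast_nonneg (α := ℝ) Y])
      hr0.le hr1
    have h1 : 1 + -(1 / ((Y + 1 : ℕ) : ℝ)) = (Y : ℝ) / ((Y + 1 : ℕ) : ℝ) := by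
      rw [eq_div_iff hs.ne', add_mul, neg_mul, one_div_mul_cancel hs.ne']; push_cast; ring
    rw [h1, Real.div_rpow (by positivity) hs.le, div_le_iff₀ (by positivity)] at hb
    have h2 : ((Y + 1 : ℕ) : ℝ) ^ (r - 1) = ((Y + 1 : ℕ) : ℝ) ^ r * (1 / ((Y + 1 : ℕ) : ℝ)) := by
      rw [Real.rpow_sub_one hs.ne', div_eq_mul_one_div]
    rw [h2]
    have h3 := mul_le_mul_of_nonneg_left hb (by positivity : (0 : ℝ) ≤ n)
    have h4 : (n : ℝ) * ((1 + r * -(1 / ((Y + 1 : ℕ) : ℝ))) * ((Y + 1 : ℕ) : ℝ) ^ r) =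
      n * ((Y + 1 : ℕ) : ℝ) ^ r - (n * r) * (((Y + 1 : ℕ) : ℝ) ^ r * (1 / ((Y + 1 : ℕ) : ℝ))) := by
      ring
    rw [h4, hnr] at h3
    linarith

section Ideals

variable (R : Type*) [CommRing R] [IsDedekindDomain R] [Module.Free ℤ R] [Module.Finite ℤ R]
  [CharZero R]

/-- The nonzero ideals of norm at most `Y`. -/
noncomputable def idealsNormLE (Y : ℕ) : Finset (Ideal R) := by
  classical
  exact (Ideal.finite_setOfPred_absNorm_le (S := R) Y).toFinset.filter (· ≠ ⊥)

/-- The number of ideals of norm `k`. -/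
noncomputable abbrev idealCount (k : ℕ) : ℕ := Nat.card {I : Ideal R // Ideal.absNorm I = k}

variable {R}

theorem mem_idealsNormLE {Y : ℕ} {I : Ideal R} :
    I ∈ idealsNormLE R Y ↔ Ideal.absNorm I ≤ Y ∧ I ≠ ⊥ := by
  classical
  simp [idealsNormLE]

variable (R) in
theorem sum_idealsNormLE (Y : ℕ) (g : ℕ → ℝ) :
    ∑ I ∈ idealsNormLE R Y, g (Ideal.absNorm I) = ∑ k ∈ Icc 1 Y, idealCount R k * g k := by
  classical
  rw [← Finset.sum_fiberwise_of_maps_to (s := idealsNormLE R Y) (t := Icc 1 Y)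
    (g := fun I => Ideal.absNorm I)]
  · refine Finset.sum_congr rfl fun k hk => ?_
    rw [Finset.sum_congr rfl (g := fun _ => g k) (fun I hI => by rw [(Finset.mem_filter.mp hI).2]),
      Finset.sum_const, nsmul_eq_mul]
    congr 2
    rw [Finset.mem_Icc] at hk
    refine (Nat.subtype_card _ fun I => ?_).symm
    rw [Finset.mem_filter, mem_idealsNormLE]
    refine ⟨fun h => h.2, fun h => ⟨⟨h.trans_le hk.2, ?_⟩, h⟩⟩
    rintro rfl
    rw [Ideal.absNorm_bot] at h
    omega
  · intro I hI
    rw [mem_idealsNormLE] at hI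
    rw [Finset.mem_Icc]
    exact ⟨Nat.one_le_iff_ne_zero.mpr (by rw [Ne, Ideal.absNorm_eq_zero_iff]; exact hI.2), hI.1⟩

theorem sum_divisors_eq_zero {ρ : ℕ → ℝ} (hmul : ∀ m n, ρ (m * n) = ρ m * ρ n)
    (hval : ∀ m, m ≠ 0 → ρ m = 1 ∨ ρ m = -1) {J : Ideal R} (hJ : ρ (Ideal.absNorm J) = -1)
    {γ : R} (hγ : γ ≠ 0) (hprin : ρ (Ideal.absNorm (Ideal.span {γ})) = 1) {Y : ℕ}
    (hY : Ideal.absNorm (Ideal.span {γ}) ≤ Y) [DecidablePred fun I => γ ∈ I * J] :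
    ∑ I ∈ idealsNormLE R Y with γ ∈ I * J, ρ (Ideal.absNorm I) = 0 := by
  have hspan : Ideal.span {γ} ≠ ⊥ := by simpa using hγ
  have hdvd : ∀ I ∈ (idealsNormLE R Y).filter (fun I => γ ∈ I * J),
      ∃ I', Ideal.span {γ} = I * J * I' := by
    intro I hI
    exact Ideal.dvd_iff_le.mpr ((Ideal.span_singleton_le_iff_mem _).mpr (Finset.mem_filter.mp hI).2)
  choose! g hg using hdvd
  have hmem : ∀ I ∈ (idealsNormLE R Y).filter (fun I => γ ∈ I * J),
      g I ∈ (idealsNormLE R Y).filter (fun I => γ ∈ I * J) := by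
    intro I hI
    have h := hg I hI
    rw [Finset.mem_filter, mem_idealsNormLE]
    refine ⟨⟨?_, ?_⟩, ?_⟩
    · refine le_trans (Nat.le_of_dvd ?_ ?_) hY
      · exact Nat.pos_of_ne_zero (by rwa [Ne, Ideal.absNorm_eq_zero_iff])
      · rw [h, map_mul]; exact dvd_mul_left _ _
    · intro h0; rw [h0, Ideal.mul_bot] at h; exact hspan h
    · have := Ideal.mem_span_singleton_self γ
      rw [h] at this
      have e : I * J * g I = g I * J * I := by rw [mul_comm, mul_comm I J, ← mul_assoc]
      rw [e] at this
      exact (Ideal.mul_le_left (I := g I * J) (J := I)) this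
  have hneg : ∀ I ∈ (idealsNormLE R Y).filter (fun I => γ ∈ I * J),
      ρ (Ideal.absNorm I) + ρ (Ideal.absNorm (g I)) = 0 := by
    intro I hI
    have h := hprin
    rw [hg I hI, map_mul, map_mul, hmul, hmul, hJ] at h
    have h0 : ∀ I ∈ (idealsNormLE R Y).filter (fun I => γ ∈ I * J), Ideal.absNorm I ≠ 0 := by
      intro I hI
      rw [Ne, Ideal.absNorm_eq_zero_iff]
      exact (mem_idealsNormLE.mp (Finset.mem_filter.mp hI).1).2
    rcases hval _ (h0 I hI) with h1 | h1 <;> rcases hval _ (h0 _ (hmem I hI)) with h2 | h2 <;>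
      rw [h1, h2] at h <;> first | (rw [h1, h2]; norm_num; done) | (exfalso; norm_num at h)
  refine Finset.sum_involution (fun I _ => g I) hneg ?_ hmem ?_
  · intro I hI h0 he
    have := hneg I hI
    rw [he] at this
    exact h0 (by linarith)
  · intro I hI
    have h1 := hg I hI
    have h2 := hg _ (hmem I hI)
    rw [h1] at h2
    have hne : g I * J ≠ ⊥ := by
      intro h0
      refine hspan ?_
      rw [h1, mul_assoc, mul_comm J, h0, Ideal.mul_bot]
    have : g I * J * I = g I * J * g (g I) := by
      rw [← h2, mul_comm (I * J), mul_comm I J, mul_assoc]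
    exact (mul_left_cancel₀ hne this).symm

/-- If a completely multiplicative sign `ρ` is trivial on norms of principal ideals but not on norms
of ideals, then the partial sums of `∑ ρ(N I) / N I` are bounded. -/
theorem exists_abs_sum_idealCount_mul_div_le {ρ : ℕ → ℝ} (hmul : ∀ m n, ρ (m * n) = ρ m * ρ n)
    (hval : ∀ m, m ≠ 0 → ρ m = 1 ∨ ρ m = -1) {J : Ideal R} (hJ0 : J ≠ ⊥)
    (hJ : ρ (Ideal.absNorm J) = -1)
    (hprin : ∀ γ : R, γ ≠ 0 → ρ (Ideal.absNorm (Ideal.span {γ})) = 1)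
    {C₁ : ℝ} (hcount : ∀ Y, ∑ k ∈ Icc 1 Y, (idealCount R k : ℝ) ≤ C₁ * Y) :
    ∃ B : ℝ, ∀ Y, |∑ k ∈ Icc 1 Y, idealCount R k * (ρ k / k)| ≤ B := by
  classical
  let b := Module.Free.chooseBasis ℤ R
  have : Nonempty (Module.Free.ChooseBasisIndex ℤ R) := b.index_nonempty
  obtain ⟨A₀, hA₀, hnorm⟩ := norm_le_of_inBox b
  obtain ⟨n, hn⟩ : ∃ n, Fintype.card (Module.Free.ChooseBasisIndex ℤ R) = n + 1 :=
    Nat.exists_eq_succ_of_ne_zero Fintype.card_ne_zero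
  set j := Ideal.absNorm J with hj
  have hj0 : 0 < j := Nat.pos_of_ne_zero (by rwa [hj, Ne, Ideal.absNorm_eq_zero_iff])
  have hj0' : (0 : ℝ) < j := by exact_mod_cast hj0
  have hA₀' : (0 : ℝ) < A₀ := by exact_mod_cast hA₀
  obtain ⟨C, hC0, hC⟩ := abs_card_box_inter_ideal_sub_le b (A₀ * j : ℝ) (by positivity)
  rw [hn] at hC hnorm
  simp only [Nat.add_sub_cancel] at hC
  set r : ℝ := 1 / ((n + 1 : ℕ) : ℝ) with hr
  have hr0 : 0 < r := by positivity
  have hC₁ : 0 ≤ C₁ := by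
    have := hcount 1
    have h2 : (0 : ℝ) ≤ ∑ k ∈ Icc 1 1, (idealCount R k : ℝ) := by positivity
    simp at this h2; linarith
  have hsize : ∀ Y, (#(idealsNormLE R Y) : ℝ) ≤ C₁ * Y := by
    intro Y
    have := sum_idealsNormLE R Y (fun _ => 1)
    simp only [Finset.sum_const, nsmul_eq_mul, mul_one] at this
    rw [this]; exact hcount Y
  have habs : ∀ m, m ≠ 0 → |ρ m| = 1 := by
    intro m hm
    rcases hval m hm with h | h <;> simp [h]
  -- the partial sums along norm bounds of boxes
  have hbox : ∃ B₀ : ℝ, ∀ X : ℕ, 1 ≤ X →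
      |∑ k ∈ Icc 1 (A₀ * X ^ (n + 1)), idealCount R k * (ρ k / k)| ≤ B₀ := by
    refine ⟨j * (C * (j : ℝ) ^ (r - 1) * (C₁ * ((n + 1 : ℕ) * (A₀ : ℝ) ^ r)) + C₁ * A₀),
      fun X hX => ?_⟩
    have hX' : (1 : ℝ) ≤ X := by exact_mod_cast hX
    set Y := A₀ * X ^ (n + 1) with hY
    set c : Ideal R → ℕ := fun I => #{z ∈ b.box X | z ∈ I * J} with hc
    have hswap : ∑ I ∈ idealsNormLE R Y, ρ (Ideal.absNorm I) * ((c I : ℝ) - 1) = 0 := by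
      have h1 : ∑ γ ∈ (b.box X).erase 0, ∑ I ∈ idealsNormLE R Y with γ ∈ I * J,
          ρ (Ideal.absNorm I) = 0 := by
        refine Finset.sum_eq_zero fun γ hγ => ?_
        rw [Finset.mem_erase, mem_box] at hγ
        refine sum_divisors_eq_zero hmul hval hJ hγ.1 (hprin γ hγ.1) ?_
        rw [Ideal.absNorm_span_singleton]
        exact hnorm X γ hγ.2
      rw [← h1]
      simp only [Finset.sum_filter]
      rw [Finset.sum_comm]
      refine Finset.sum_congr rfl fun I _ => ?_
      rw [← Finset.sum_filter, Finset.sum_const, nsmul_eq_mul, mul_comm]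
      congr 1
      rw [Finset.filter_erase, Finset.card_erase_of_mem, Nat.cast_sub]
      · simp [hc]
      · exact Finset.card_pos.mpr ⟨0, by simp [mem_box, Module.Basis.InBox]⟩
      · simp [mem_box, Module.Basis.InBox]
    set a : ℝ := (2 * X + 1) ^ (n + 1) with ha
    have hterm : ∀ I ∈ idealsNormLE R Y, |a / j * (ρ (Ideal.absNorm I) / Ideal.absNorm I) -
        ρ (Ideal.absNorm I) * c I| ≤
        C * (j : ℝ) ^ (r - 1) * X ^ n * (Ideal.absNorm I : ℝ) ^ (r - 1) := by
      intro I hI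
      rw [mem_idealsNormLE] at hI
      have hI0 : Ideal.absNorm I ≠ 0 := by rw [Ne, Ideal.absNorm_eq_zero_iff]; exact hI.2
      have hIpos : (0 : ℝ) < Ideal.absNorm I := by positivity
      have hIJ : I * J ≠ ⊥ := mul_ne_zero hI.2 hJ0
      have hIY : (Ideal.absNorm I : ℝ) ≤ A₀ * X ^ (n + 1) := by exact_mod_cast hI.1
      have h1 := hC (I * J) hIJ X hX (by
        rw [map_mul]; push_cast
        nlinarith)
      rw [map_mul] at h1
      push_cast at h1
      have e1 : a / j * (ρ (Ideal.absNorm I) / Ideal.absNorm I) - ρ (Ideal.absNorm I) * c I =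
          -(ρ (Ideal.absNorm I) * ((Ideal.absNorm I * j * c I - a) / (Ideal.absNorm I * j))) := by
        field_simp; ring
      rw [e1, abs_neg, abs_mul, habs _ hI0, one_mul, abs_div,
        abs_of_pos (by positivity : (0 : ℝ) < Ideal.absNorm I * j), div_le_iff₀ (by positivity)]
      refine h1.trans (le_of_eq ?_)
      rw [Real.mul_rpow hIpos.le hj0'.le, Real.rpow_sub_one hj0'.ne', Real.rpow_sub_one hIpos.ne']
      field_simp
    have hrs : ∑ I ∈ idealsNormLE R Y, (Ideal.absNorm I : ℝ) ^ (r - 1) ≤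
        C₁ * ((n + 1 : ℕ) * (A₀ : ℝ) ^ r) * X := by
      rw [sum_idealsNormLE R Y fun k => (k : ℝ) ^ (r - 1)]
      have h1 := sum_mul_le_sum_mul_of_antitone (a := fun k => (idealCount R k : ℝ))
        (b := fun _ => C₁) (w := fun k => (k : ℝ) ^ (r - 1)) (fun m => by
          simpa [mul_comm] using hcount m) (fun k hk => by
          have : (0 : ℝ) < k := by positivity
          refine Real.rpow_le_rpow_of_nonpos this (by push_cast; linarith) ?_
          rw [hr, sub_nonpos, div_le_one (by positivity)]
          exact_mod_cast Nat.le_add_left 1 n) (fun k => by positivity) Y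
      refine h1.trans ?_
      rw [← Finset.mul_sum]
      have h2 := sum_rpow_inv_sub_one_le (Nat.succ_pos n) Y
      have h3 : (Y : ℝ) ^ r = (A₀ : ℝ) ^ r * X := by
        rw [hY]; push_cast
        rw [Real.mul_rpow hA₀'.le (by positivity), hr, one_div,
          Real.pow_rpow_inv_natCast (by positivity) (by omega)]
      calc C₁ * ∑ k ∈ Icc 1 Y, (k : ℝ) ^ (r - 1) ≤ C₁ * ((n + 1 : ℕ) * (Y : ℝ) ^ r) :=
            mul_le_mul_of_nonneg_left h2 hC₁
        _ = _ := by rw [h3]; ring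
    have hρ : |∑ I ∈ idealsNormLE R Y, ρ (Ideal.absNorm I)| ≤ C₁ * A₀ * X ^ (n + 1) := by
      refine (Finset.abs_sum_le_sum_abs _ _).trans ?_
      rw [Finset.sum_congr rfl (g := fun _ => (1 : ℝ)) (fun I hI => habs _ (by
        rw [Ne, Ideal.absNorm_eq_zero_iff]; exact (mem_idealsNormLE.mp hI).2))]
      simp only [Finset.sum_const, nsmul_eq_mul, mul_one]
      refine (hsize Y).trans (le_of_eq ?_)
      rw [hY]; push_cast; ring
    set T := ∑ k ∈ Icc 1 Y, idealCount R k * (ρ k / k) with hT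
    have hTI : T = ∑ I ∈ idealsNormLE R Y, ρ (Ideal.absNorm I) / Ideal.absNorm I :=
      (sum_idealsNormLE R Y fun k => ρ k / k).symm
    have hmain : a / j * T = ∑ I ∈ idealsNormLE R Y,
        (a / j * (ρ (Ideal.absNorm I) / Ideal.absNorm I) - ρ (Ideal.absNorm I) * c I) +
        ∑ I ∈ idealsNormLE R Y, ρ (Ideal.absNorm I) := by
      rw [hTI, Finset.mul_sum, Finset.sum_sub_distrib]
      simp only [mul_sub, mul_one, Finset.sum_sub_distrib] at hswap
      linarith
    have hb1 : |a / j * T| ≤ (C * (j : ℝ) ^ (r - 1) * (C₁ * ((n + 1 : ℕ) * (A₀ : ℝ) ^ r)) + C₁ * A₀) *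
        X ^ (n + 1) := by
      rw [hmain]
      refine (abs_add_le _ _).trans ?_
      have h1 : |∑ I ∈ idealsNormLE R Y,
          (a / j * (ρ (Ideal.absNorm I) / Ideal.absNorm I) - ρ (Ideal.absNorm I) * c I)| ≤
          C * (j : ℝ) ^ (r - 1) * X ^ n * (C₁ * ((n + 1 : ℕ) * (A₀ : ℝ) ^ r) * X) := by
        refine (Finset.abs_sum_le_sum_abs _ _).trans ((Finset.sum_le_sum hterm).trans ?_)
        rw [← Finset.mul_sum]
        exact mul_le_mul_of_nonneg_left hrs (by positivity)
      calc _ ≤ _ := add_le_add h1 hρ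
        _ = _ := by ring
    have hXa : (X : ℝ) ^ (n + 1) ≤ a := by
      rw [ha]; gcongr; linarith
    have hXpos : (0 : ℝ) < X ^ (n + 1) := by positivity
    have hb2 : X ^ (n + 1) / j * |T| ≤ |a / j * T| := by
      rw [abs_mul, abs_of_nonneg (by positivity : 0 ≤ a / j)]
      gcongr
    have hb3 := hb2.trans hb1
    rw [div_mul_eq_mul_div, div_le_iff₀ hj0'] at hb3
    refine le_of_mul_le_mul_left (hb3.trans (le_of_eq ?_)) hXpos
    ring
  obtain ⟨B₀, hB₀⟩ := hbox
  have htail : ∀ k : ℕ, 1 ≤ k →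
      |(idealCount R k : ℝ) * (ρ k / k)| ≤ idealCount R k * (1 / k) := by
    intro k hk
    rw [abs_mul, abs_div, habs k (by omega), Nat.abs_cast, Nat.abs_cast]
  refine ⟨max (C₁ * A₀) (B₀ + C₁ * 2 ^ (n + 1)), fun Y => ?_⟩
  by_cases hYA : Y < A₀
  · refine le_trans ?_ (le_max_left _ _)
    refine (Finset.abs_sum_le_sum_abs _ _).trans ?_
    calc ∑ k ∈ Icc 1 Y, |(idealCount R k : ℝ) * (ρ k / k)|
        ≤ ∑ k ∈ Icc 1 Y, (idealCount R k : ℝ) := by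
          refine Finset.sum_le_sum fun k hk => (htail k (Finset.mem_Icc.mp hk).1).trans ?_
          have : (1 : ℝ) ≤ k := by exact_mod_cast (Finset.mem_Icc.mp hk).1
          refine mul_le_of_le_one_right (by positivity) ?_
          rw [div_le_one (by positivity)]; exact this
      _ ≤ C₁ * Y := hcount Y
      _ ≤ C₁ * A₀ := by gcongr
  · rw [not_lt] at hYA
    refine le_trans ?_ (le_max_right _ _)
    obtain ⟨X, hX1, hXY, hYX⟩ : ∃ X : ℕ, 1 ≤ X ∧ A₀ * X ^ (n + 1) ≤ Y ∧
        Y < A₀ * (X + 1) ^ (n + 1) := by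
      set P : ℕ → Prop := fun X => A₀ * X ^ (n + 1) ≤ Y
      have hP1 : P 1 := by simpa [P] using hYA
      have hle : 1 ≤ Y := hA₀.trans_le hYA
      refine ⟨Nat.findGreatest P Y, Nat.le_findGreatest hle hP1,
        Nat.findGreatest_spec (P := P) hle hP1, ?_⟩
      by_contra! hcon
      have hbig : Nat.findGreatest P Y + 1 ≤ Y := by
        refine le_trans ?_ hcon
        calc Nat.findGreatest P Y + 1 ≤ (Nat.findGreatest P Y + 1) ^ (n + 1) :=
              Nat.le_self_pow (by omega) _
          _ ≤ _ := Nat.le_mul_of_pos_left _ hA₀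
      have := Nat.le_findGreatest (P := P) hbig hcon
      omega
    set Y₀ := A₀ * X ^ (n + 1) with hY₀
    have hX' : (1 : ℝ) ≤ X := by exact_mod_cast hX1
    have hY₀pos : 0 < Y₀ := by positivity
    have hsplit : ∑ k ∈ Icc 1 Y, (idealCount R k : ℝ) * (ρ k / k) =
        ∑ k ∈ Icc 1 Y₀, (idealCount R k : ℝ) * (ρ k / k) +
        ∑ k ∈ Ioc Y₀ Y, (idealCount R k : ℝ) * (ρ k / k) := by
      rw [← Finset.sum_union]
      · congr 1; ext k; simp only [Finset.mem_union, Finset.mem_Icc, Finset.mem_Ioc]; omega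
      · rw [Finset.disjoint_left]; intro k; simp only [Finset.mem_Icc, Finset.mem_Ioc]; omega
    rw [hsplit]
    refine (abs_add_le _ _).trans (add_le_add (hB₀ X hX1) ?_)
    refine (Finset.abs_sum_le_sum_abs _ _).trans ?_
    calc ∑ k ∈ Ioc Y₀ Y, |(idealCount R k : ℝ) * (ρ k / k)|
        ≤ ∑ k ∈ Ioc Y₀ Y, (idealCount R k : ℝ) * (1 / Y₀) := by
          refine Finset.sum_le_sum fun k hk => ?_
          rw [Finset.mem_Ioc] at hk
          refine (htail k (by omega)).trans ?_
          have : (Y₀ : ℝ) ≤ k := by exact_mod_cast hk.1.le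
          gcongr
      _ ≤ ∑ k ∈ Icc 1 Y, (idealCount R k : ℝ) * (1 / Y₀) := by
          refine Finset.sum_le_sum_of_subset_of_nonneg ?_ fun _ _ _ => by positivity
          intro k; simp only [Finset.mem_Icc, Finset.mem_Ioc]; omega
      _ = (∑ k ∈ Icc 1 Y, (idealCount R k : ℝ)) * (1 / Y₀) := by rw [Finset.sum_mul]
      _ ≤ C₁ * Y * (1 / Y₀) := by gcongr; exact hcount Y
      _ ≤ C₁ * (2 ^ (n + 1) * Y₀) * (1 / Y₀) := by
          gcongr
          have h1 : (Y : ℝ) ≤ A₀ * (X + 1) ^ (n + 1) := by exact_mod_cast hYX.le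
          refine h1.trans ?_
          rw [hY₀]; push_cast
          calc (A₀ : ℝ) * (X + 1) ^ (n + 1) ≤ A₀ * (2 * X) ^ (n + 1) := by gcongr; linarith
            _ = _ := by rw [mul_pow]; ring
      _ = C₁ * 2 ^ (n + 1) := by
          have : (0 : ℝ) < Y₀ := by exact_mod_cast hY₀pos
          field_simp

end Ideals

section Euler

open IsDedekindDomain UniqueFactorizationMonoid

variable (R : Type*) [CommRing R] [IsDedekindDomain R] [Module.Free ℤ R] [Module.Finite ℤ R]
  [CharZero R]

theorem infinite_heightOneSpectrum : Infinite (HeightOneSpectrum R) := by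
  have key : ∀ p : Nat.Primes, ∃ P : HeightOneSpectrum R, ((p : ℕ) : R) ∈ P.asIdeal := by
    intro p
    have hne : Ideal.span {((p : ℕ) : R)} ≠ ⊤ := by
      intro h
      have h1 := congrArg Ideal.absNorm h
      rw [Ideal.absNorm_top, Ideal.absNorm_span_singleton,
        show ((p : ℕ) : R) = algebraMap ℤ R (p : ℕ) by simp, Algebra.norm_algebraMap,
        Int.natAbs_pow, Int.natAbs_natCast] at h1
      have h2 := (Nat.pow_eq_one.mp h1).resolve_right Module.finrank_pos.ne'
      exact p.2.one_lt.ne' h2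
    obtain ⟨M, hM, hle⟩ := Ideal.exists_le_maximal _ hne
    have hmem := hle (Ideal.mem_span_singleton_self _)
    refine ⟨⟨M, hM.isPrime, ?_⟩, hmem⟩
    rintro rfl
    rw [Ideal.mem_bot, Nat.cast_eq_zero] at hmem
    exact p.2.ne_zero hmem
  choose P hP using key
  refine Infinite.of_injective P fun p q hpq => ?_
  by_contra hne
  have hc : IsCoprime ((p : ℕ) : R) ((q : ℕ) : R) :=
    ((Nat.coprime_primes p.2 q.2).mpr fun h => hne (Subtype.ext h)).cast
  obtain ⟨a, b, hab⟩ := hc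
  have hq := hP q
  rw [← hpq] at hq
  refine (P p).isPrime.ne_top ((Ideal.eq_top_iff_one _).mpr ?_)
  rw [← hab]
  exact Ideal.add_mem _ (Ideal.mul_mem_left _ _ (hP p)) (Ideal.mul_mem_left _ _ hq)

theorem countable_ideal : Countable (Ideal R) := by
  rw [← Set.countable_univ_iff]
  have : (Set.univ : Set (Ideal R)) = ⋃ k : ℕ, {I | Ideal.absNorm I = k} := by
    ext I; simp
  rw [this]
  exact Set.countable_iUnion fun k => (Ideal.finite_setOfPred_absNorm_eq k).countable

theorem exists_primes_equiv : Nonempty (Nat.Primes ≃ HeightOneSpectrum R) := by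
  have := infinite_heightOneSpectrum R
  have := countable_ideal R
  have : Countable (HeightOneSpectrum R) :=
    Function.Injective.countable (f := HeightOneSpectrum.asIdeal) fun _ _ h =>
      HeightOneSpectrum.ext h
  exact nonempty_equiv_of_countable

variable {R}

/-- The multiplicative map from positive integers to ideals sending primes to primes. -/
noncomputable def idealOfPNat (e : Nat.Primes ≃ HeightOneSpectrum R) (n : ℕ+) : Ideal R :=
  (Multiset.map (fun p => (e p).asIdeal) n.factorMultiset).prod

omit [IsDedekindDomain R] [Module.Free ℤ R] [Module.Finite ℤ R] [CharZero R] in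
theorem idealOfPNat_one (e : Nat.Primes ≃ HeightOneSpectrum R) : idealOfPNat e 1 = 1 := by
  rw [idealOfPNat, PNat.factorMultiset_one]
  exact congrArg Multiset.prod (Multiset.map_zero _)

omit [IsDedekindDomain R] [Module.Free ℤ R] [Module.Finite ℤ R] [CharZero R] in
theorem idealOfPNat_mul (e : Nat.Primes ≃ HeightOneSpectrum R) (m n : ℕ+) :
    idealOfPNat e (m * n) = idealOfPNat e m * idealOfPNat e n := by
  rw [idealOfPNat, PNat.factorMultiset_mul, idealOfPNat, idealOfPNat, ← Multiset.prod_add]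
  exact congrArg Multiset.prod (Multiset.map_add _ _ _)

/-- The multiplicative bijection from `ℕ` to ideals sending primes to primes. -/
noncomputable def idealOfNat (e : Nat.Primes ≃ HeightOneSpectrum R) : ℕ →*₀ Ideal R where
  toFun n := if h : 0 < n then idealOfPNat e (n.toPNat h) else 0
  map_zero' := by simp
  map_one' := by
    rw [dif_pos one_pos]
    exact idealOfPNat_one e
  map_mul' m n := by
    rcases Nat.eq_zero_or_pos m with rfl | hm
    · simp
    rcases Nat.eq_zero_or_pos n with rfl | hn
    · simp
    rw [dif_pos hm, dif_pos hn, dif_pos (Nat.mul_pos hm hn), ← idealOfPNat_mul]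
    rfl

omit [IsDedekindDomain R] [Module.Free ℤ R] [Module.Finite ℤ R] [CharZero R] in
theorem idealOfNat_coe (e : Nat.Primes ≃ HeightOneSpectrum R) (n : ℕ+) :
    idealOfNat e n = (Multiset.map (fun p => (e p).asIdeal) n.factorMultiset).prod :=
  dif_pos n.pos

theorem normalizedFactors_idealOfNat (e : Nat.Primes ≃ HeightOneSpectrum R) (n : ℕ+) :
    normalizedFactors (idealOfNat e n) =
      Multiset.map (fun p => (e p).asIdeal) (n.factorMultiset) := by
  rw [idealOfNat_coe, normalizedFactors_prod_of_prime]
  intro P hP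
  obtain ⟨p, -, rfl⟩ := Multiset.mem_map.mp hP
  exact (e p).prime

omit [IsDedekindDomain R] [Module.Free ℤ R] [Module.Finite ℤ R] [CharZero R] in
theorem idealOfNat_prime (e : Nat.Primes ≃ HeightOneSpectrum R) (p : Nat.Primes) :
    idealOfNat e p = (e p).asIdeal := by
  have h := idealOfNat_coe e (p : ℕ+)
  rw [PNat.factorMultiset_ofPrime] at h
  refine h.trans ?_
  exact (congrArg Multiset.prod (Multiset.map_singleton _ _)).trans (Multiset.prod_singleton _)

theorem idealOfNat_bijective (e : Nat.Primes ≃ HeightOneSpectrum R) :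
    Function.Bijective (idealOfNat e) := by
  have hne : ∀ n : ℕ+, idealOfNat e n ≠ 0 := by
    intro n
    rw [idealOfNat_coe]
    refine Multiset.prod_ne_zero fun h => ?_
    obtain ⟨p, -, hp⟩ := Multiset.mem_map.mp h
    exact (e p).ne_bot hp
  have hinj : Function.Injective fun p => (e p).asIdeal := fun p q h =>
    e.injective (HeightOneSpectrum.ext h)
  constructor
  · intro m n hmn
    rcases Nat.eq_zero_or_pos m with rfl | hm
    · rcases Nat.eq_zero_or_pos n with rfl | hn
      · rfl
      · rw [map_zero] at hmn
        exact absurd hmn.symm (hne ⟨n, hn⟩)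
    rcases Nat.eq_zero_or_pos n with rfl | hn
    · rw [map_zero] at hmn
      exact absurd hmn (hne ⟨m, hm⟩)
    have key : ∀ a b : ℕ+, idealOfNat e a = idealOfNat e b → a = b := by
      intro a b hab
      have h := congrArg normalizedFactors hab
      rw [normalizedFactors_idealOfNat, normalizedFactors_idealOfNat] at h
      exact PNat.factorMultisetEquiv.injective (Multiset.map_injective hinj h)
    exact congrArg PNat.val (key ⟨m, hm⟩ ⟨n, hn⟩ hmn)
  · intro I
    rcases eq_or_ne I 0 with rfl | hI
    · exact ⟨0, map_zero _⟩
    have hlift : ∃ T : Multiset (HeightOneSpectrum R),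
        Multiset.map HeightOneSpectrum.asIdeal T = normalizedFactors I := by
      have : CanLift (Ideal R) (HeightOneSpectrum R) HeightOneSpectrum.asIdeal Prime :=
        ⟨fun P hP => ⟨⟨P, Ideal.isPrime_of_prime hP, hP.ne_zero⟩, rfl⟩⟩
      lift normalizedFactors I to Multiset (HeightOneSpectrum R) using
        (fun P hP => prime_of_normalized_factor P hP) with T hT
      exact ⟨T, rfl⟩
    obtain ⟨T, hT⟩ := hlift
    let v : PrimeMultiset := Multiset.map e.symm T
    refine ⟨(v.prod : ℕ+), ?_⟩
    rw [idealOfNat_coe, PrimeMultiset.factorMultiset_prod]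
    have : Multiset.map (fun p => (e p).asIdeal) v = normalizedFactors I := by
      rw [← hT]
      change Multiset.map _ (Multiset.map e.symm T) = _
      rw [Multiset.map_map]
      refine Multiset.map_congr rfl fun x _ => ?_
      simp
    rw [this]
    exact associated_iff_eq.mp (prod_normalizedFactors hI)

/-- The Euler product of a completely multiplicative function on ideals. -/
theorem hasProd_ideal (g : Ideal R →*₀ ℝ) (hg : Summable fun I => ‖g I‖) :
    HasProd (fun P : HeightOneSpectrum R => (1 - g P.asIdeal)⁻¹) (∑' I, g I) := by
  obtain ⟨e⟩ := exists_primes_equiv R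
  have hs : Summable fun n : ℕ => ‖g (idealOfNat e n)‖ :=
    hg.comp_injective (idealOfNat_bijective e).1
  have h := EulerProduct.eulerProduct_completely_multiplicative_hasProd
    (f := g.comp (idealOfNat e)) hs
  have h2 : ∑' n, (g.comp (idealOfNat e)) n = ∑' I, g I :=
    (Equiv.ofBijective _ (idealOfNat_bijective e)).tsum_eq g
  rw [h2] at h
  rw [← e.hasProd_iff]
  have h3 : (fun P : HeightOneSpectrum R => (1 - g P.asIdeal)⁻¹) ∘ e =
      fun p : Nat.Primes => (1 - (g.comp (idealOfNat e)) p)⁻¹ := by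
    ext p
    change (1 - g (e p).asIdeal)⁻¹ = (1 - g (idealOfNat e p))⁻¹
    rw [idealOfNat_prime]
  rw [h3]
  exact h

end Euler

section Sums

open Filter Topology

variable {R : Type*} [CommRing R] [IsDedekindDomain R] [Module.Free ℤ R] [Module.Finite ℤ R]
  [CharZero R]

open Classical in
theorem sum_insert_bot_idealsNormLE (Y : ℕ) {g : ℕ → ℝ} (hg : g 0 = 0) :
    ∑ I ∈ insert ⊥ (idealsNormLE R Y), g (Ideal.absNorm I) =
      ∑ k ∈ Icc 1 Y, idealCount R k * g k := by
  rw [Finset.sum_insert (by simp [mem_idealsNormLE]), sum_idealsNormLE, Ideal.absNorm_bot, hg,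
    zero_add]

omit [Module.Finite ℤ R] [CharZero R] in
theorem sum_idealCount_mul_rpow_le {C₁ : ℝ}
    (hcount : ∀ Y, ∑ k ∈ Icc 1 Y, (idealCount R k : ℝ) ≤ C₁ * Y) {s : ℝ} (hs : 1 < s) (Y : ℕ) :
    ∑ k ∈ Icc 1 Y, (idealCount R k : ℝ) * (k : ℝ) ^ (-s) ≤ C₁ * ∑' k : ℕ, (k : ℝ) ^ (-s) := by
  have hC : 0 ≤ C₁ := by
    have := hcount 1
    rw [Nat.cast_one, mul_one] at this
    exact (Finset.sum_nonneg fun k _ => Nat.cast_nonneg _).trans this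
  refine (sum_mul_le_sum_mul_of_antitone (b := fun _ => C₁) (w := fun k : ℕ => (k : ℝ) ^ (-s))
    (fun m => ?_) (fun k hk => ?_) (fun k => by positivity) Y).trans ?_
  · rw [Finset.sum_const, nsmul_eq_mul, Nat.card_Icc, Nat.add_sub_cancel, mul_comm]
    exact hcount m
  · have : (0 : ℝ) < k := by exact_mod_cast hk
    exact Real.rpow_le_rpow_of_nonpos this (by push_cast; linarith) (by linarith)
  · rw [← Finset.mul_sum]
    refine mul_le_mul_of_nonneg_left ?_ hC
    exact (Real.summable_nat_rpow.mpr (by linarith)).sum_le_tsum _ fun k _ => by positivity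

theorem summable_absNorm_rpow {C₁ : ℝ}
    (hcount : ∀ Y, ∑ k ∈ Icc 1 Y, (idealCount R k : ℝ) ≤ C₁ * Y) {s : ℝ} (hs : 1 < s) :
    Summable fun I : Ideal R => (Ideal.absNorm I : ℝ) ^ (-s) := by
  classical
  refine summable_of_sum_le (c := C₁ * ∑' k : ℕ, (k : ℝ) ^ (-s)) (fun I => by positivity) fun u => ?_
  refine le_trans ?_ (sum_idealCount_mul_rpow_le hcount hs (u.sup Ideal.absNorm))
  rw [← sum_insert_bot_idealsNormLE (R := R) (u.sup Ideal.absNorm)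
    (g := fun k : ℕ => (k : ℝ) ^ (-s))
    (by rw [Nat.cast_zero, Real.zero_rpow (by linarith)])]
  refine Finset.sum_le_sum_of_subset_of_nonneg (fun I hI => ?_) fun I _ _ => by positivity
  rw [Finset.mem_insert, mem_idealsNormLE]
  by_cases h : I = ⊥
  · exact Or.inl h
  · exact Or.inr ⟨Finset.le_sup hI, h⟩

theorem tendsto_sum_idealCount {g : ℕ → ℝ} (hg : g 0 = 0)
    (hsum : Summable fun I : Ideal R => g (Ideal.absNorm I)) :
    Tendsto (fun Y => ∑ k ∈ Icc 1 Y, idealCount R k * g k) atTop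
      (𝓝 (∑' I : Ideal R, g (Ideal.absNorm I))) := by
  classical
  have h : Tendsto (fun Y => insert ⊥ (idealsNormLE R Y)) atTop atTop := by
    refine tendsto_atTop_finset_of_monotone (fun Y Z hYZ I hI => ?_) fun I => ⟨Ideal.absNorm I, ?_⟩
    · rw [Finset.mem_insert, mem_idealsNormLE] at hI ⊢
      exact hI.imp_right fun h => ⟨h.1.trans hYZ, h.2⟩
    · rw [Finset.mem_insert, mem_idealsNormLE]
      by_cases h : I = ⊥
      · exact Or.inl h
      · exact Or.inr ⟨le_rfl, h⟩
  refine (hsum.hasSum.comp h).congr fun Y => ?_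
  exact sum_insert_bot_idealsNormLE Y hg

theorem abs_neg_log_one_sub_sub_le {x : ℝ} (hx : |x| ≤ 1 / 2) :
    |Real.log (1 - x)⁻¹ - x| ≤ 2 * x ^ 2 := by
  have h := Real.abs_log_sub_add_sum_range_le (x := x) (by linarith) 1
  simp only [Finset.sum_range_one, zero_add, pow_one, Nat.cast_zero, div_one] at h
  rw [Real.log_inv, ← abs_neg, show -(-Real.log (1 - x) - x) = x + Real.log (1 - x) by ring]
  refine h.trans ?_
  rw [div_le_iff₀ (by linarith), ← sq_abs x]
  norm_num
  nlinarith [sq_nonneg |x|]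

open IsDedekindDomain

omit [CharZero R] in
theorem two_le_absNorm (P : HeightOneSpectrum R) : 2 ≤ Ideal.absNorm P.asIdeal := by
  have h0 : Ideal.absNorm P.asIdeal ≠ 0 := by
    rw [Ne, Ideal.absNorm_eq_zero_iff]; exact P.ne_bot
  have h1 : Ideal.absNorm P.asIdeal ≠ 1 := by
    rw [Ne, Ideal.absNorm_eq_one_iff]; exact P.isPrime.ne_top
  omega

omit [IsDedekindDomain R] [Module.Free ℤ R] [Module.Finite ℤ R] [CharZero R] in
theorem summable_prime_of_summable {f : Ideal R → ℝ} (hf : Summable f) :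
    Summable fun P : HeightOneSpectrum R => f P.asIdeal :=
  hf.comp_injective fun _ _ h => HeightOneSpectrum.ext h

/-- The logarithm of an Euler product is the sum over the primes up to a bounded error. -/
theorem abs_log_tsum_sub_le {C₁ : ℝ}
    (hcount : ∀ Y, ∑ k ∈ Icc 1 Y, (idealCount R k : ℝ) ≤ C₁ * Y) {s : ℝ} (hs : 1 < s)
    {ρ : ℕ → ℝ} (hmul : ∀ m n, ρ (m * n) = ρ m * ρ n)
    (hval : ∀ m, m ≠ 0 → ρ m = 1 ∨ ρ m = -1) :
    0 < ∑' I : Ideal R, ρ (Ideal.absNorm I) * (Ideal.absNorm I : ℝ) ^ (-s) ∧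
    |Real.log (∑' I : Ideal R, ρ (Ideal.absNorm I) * (Ideal.absNorm I : ℝ) ^ (-s)) -
      ∑' P : HeightOneSpectrum R,
        ρ (Ideal.absNorm P.asIdeal) * (Ideal.absNorm P.asIdeal : ℝ) ^ (-s)| ≤
      2 * ∑' P : HeightOneSpectrum R, (Ideal.absNorm P.asIdeal : ℝ) ^ (-2 : ℝ) := by
  have hρ1 : ρ 1 = 1 := by
    have := hmul 1 1
    rcases hval 1 one_ne_zero with h | h
    · exact h
    · rw [mul_one, h] at this; norm_num at this
  let g : Ideal R →*₀ ℝ :=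
    { toFun := fun I => ρ (Ideal.absNorm I) * (Ideal.absNorm I : ℝ) ^ (-s)
      map_zero' := by
        rw [map_zero, Nat.cast_zero, Real.zero_rpow (by linarith), mul_zero]
      map_one' := by rw [map_one, hρ1, Nat.cast_one, Real.one_rpow, mul_one]
      map_mul' := fun I J => by
        rw [map_mul, hmul, Nat.cast_mul,
          Real.mul_rpow (Nat.cast_nonneg _) (Nat.cast_nonneg _)]
        ring }
  have hgI : ∀ I, g I = ρ (Ideal.absNorm I) * (Ideal.absNorm I : ℝ) ^ (-s) := fun I => rfl
  have hnorm : ∀ I, ‖g I‖ = (Ideal.absNorm I : ℝ) ^ (-s) := by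
    intro I
    rw [hgI, norm_mul, Real.norm_of_nonneg (by positivity : (0 : ℝ) ≤ _ ^ (-s))]
    by_cases h : Ideal.absNorm I = 0
    · rw [h, Nat.cast_zero, Real.zero_rpow (by linarith), mul_zero]
    · rcases hval _ h with h | h <;> simp [h]
  have hs1 := summable_absNorm_rpow (R := R) hcount hs
  have hs2 : Summable fun I => ‖g I‖ := by simpa only [hnorm] using hs1
  have hprod := hasProd_ideal g hs2
  have hsmall : ∀ P : HeightOneSpectrum R, |g P.asIdeal| ≤ 1 / 2 := by
    intro P
    rw [← Real.norm_eq_abs, hnorm]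
    have h2 : (2 : ℝ) ≤ Ideal.absNorm P.asIdeal := by exact_mod_cast two_le_absNorm P
    calc (Ideal.absNorm P.asIdeal : ℝ) ^ (-s) ≤ (Ideal.absNorm P.asIdeal : ℝ) ^ (-1 : ℝ) :=
          Real.rpow_le_rpow_of_exponent_le (by linarith) (by linarith)
      _ = (Ideal.absNorm P.asIdeal : ℝ)⁻¹ := Real.rpow_neg_one _
      _ ≤ 2⁻¹ := inv_anti₀ (by norm_num) h2
      _ = 1 / 2 := by norm_num
  have hsP : Summable fun P : HeightOneSpectrum R => g P.asIdeal :=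
    summable_prime_of_summable hs2.of_norm
  have hpos : ∀ P : HeightOneSpectrum R, 0 < (1 - g P.asIdeal)⁻¹ := fun P => by
    have := abs_le.mp (hsmall P)
    exact inv_pos.mpr (by linarith)
  have hlog : Summable fun P : HeightOneSpectrum R => Real.log (1 - g P.asIdeal)⁻¹ := by
    have h := (Real.summable_log_one_add_of_summable hsP.neg).neg
    refine h.congr fun P => ?_
    rw [Real.log_inv, sub_eq_add_neg]
  have hexp := Real.rexp_tsum_eq_tprod hpos hlog
  rw [hprod.tprod_eq] at hexp
  change 0 < ∑' I, g I ∧ |Real.log (∑' I, g I) - ∑' P : HeightOneSpectrum R, g P.asIdeal| ≤ _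
  rw [← hexp, Real.log_exp, ← hlog.tsum_sub hsP, ← tsum_mul_left]
  refine ⟨Real.exp_pos _, ?_⟩
  have hsq := summable_prime_of_summable (summable_absNorm_rpow (R := R) hcount one_lt_two)
  rw [← Real.norm_eq_abs]
  refine tsum_of_norm_bounded (hsq.mul_left 2).hasSum fun P => ?_
  rw [Real.norm_eq_abs]
  refine (abs_neg_log_one_sub_sub_le (hsmall P)).trans ?_
  have h2 : (1 : ℝ) ≤ Ideal.absNorm P.asIdeal := by
    exact_mod_cast one_le_two.trans (two_le_absNorm P)
  rw [← sq_abs, ← Real.norm_eq_abs, hnorm, ← Real.rpow_natCast, ← Real.rpow_mul (by positivity)]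
  refine mul_le_mul_of_nonneg_left ?_ (by norm_num)
  refine Real.rpow_le_rpow_of_exponent_le h2 ?_
  push_cast
  linarith

/-- If a completely multiplicative sign is trivial on norms of principal ideals but not on norms of
ideals, then its sum over primes is bounded above near `1`. -/
theorem exists_tsum_prime_le {ρ : ℕ → ℝ} (hmul : ∀ m n, ρ (m * n) = ρ m * ρ n)
    (hval : ∀ m, m ≠ 0 → ρ m = 1 ∨ ρ m = -1) {J : Ideal R} (hJ0 : J ≠ ⊥)
    (hJ : ρ (Ideal.absNorm J) = -1)
    (hprin : ∀ γ : R, γ ≠ 0 → ρ (Ideal.absNorm (Ideal.span {γ})) = 1)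
    {C₁ : ℝ} (hcount : ∀ Y, ∑ k ∈ Icc 1 Y, (idealCount R k : ℝ) ≤ C₁ * Y) :
    ∃ C : ℝ, ∀ s : ℝ, 1 < s → ∑' P : HeightOneSpectrum R,
        ρ (Ideal.absNorm P.asIdeal) * (Ideal.absNorm P.asIdeal : ℝ) ^ (-s) ≤ C := by
  obtain ⟨B, hB⟩ := exists_abs_sum_idealCount_mul_div_le hmul hval hJ0 hJ hprin hcount
  refine ⟨Real.log B + 2 * ∑' P : HeightOneSpectrum R, (Ideal.absNorm P.asIdeal : ℝ) ^ (-2 : ℝ),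
    fun s hs => ?_⟩
  obtain ⟨hpos, hlog⟩ := abs_log_tsum_sub_le hcount hs hmul hval
  have hle : ∑' I : Ideal R, ρ (Ideal.absNorm I) * (Ideal.absNorm I : ℝ) ^ (-s) ≤ B := by
    have hsum : Summable fun I : Ideal R =>
        ρ (Ideal.absNorm I) * (Ideal.absNorm I : ℝ) ^ (-s) := by
      by_contra h
      rw [tsum_eq_zero_of_not_summable h] at hpos
      exact hpos.false
    refine le_of_tendsto (tendsto_sum_idealCount (g := fun k => ρ k * (k : ℝ) ^ (-s))
      (by rw [Nat.cast_zero, Real.zero_rpow (by linarith), mul_zero]) hsum) ?_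
    refine Eventually.of_forall fun Y => ?_
    have h := abs_sum_mul_le_of_antitone (w := fun k : ℕ => (k : ℝ) ^ (-(s - 1))) hB
      (fun k hk => Real.rpow_le_rpow_of_nonpos (by exact_mod_cast hk) (by push_cast; linarith)
        (by linarith)) (fun k => by positivity) Y
    rw [Nat.cast_one, Real.one_rpow, mul_one] at h
    refine le_trans (le_of_eq (Finset.sum_congr rfl fun k hk => ?_)) ((le_abs_self _).trans h)
    have hk0 : (0 : ℝ) < k := by exact_mod_cast (Finset.mem_Icc.mp hk).1
    rw [show -s = -(s - 1) + -1 by ring, Real.rpow_add hk0, Real.rpow_neg_one]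
    ring
  have := Real.log_le_log hpos hle
  have := (abs_le.mp hlog).1
  linarith

end Sums

section Zeta

open Filter Topology NumberField IsDedekindDomain

variable (F : Type*) [Field F] [NumberField F]

theorem exists_sum_idealCount_le :
    ∃ C₁ : ℝ, ∀ Y, ∑ k ∈ Icc 1 Y, (idealCount (𝓞 F) k : ℝ) ≤ C₁ * Y := by
  have h := (NumberField.Ideal.tendsto_norm_le_div_atTop₀ F).comp
    (tendsto_natCast_atTop_atTop (R := ℝ))
  obtain ⟨C, hC⟩ := h.bddAbove_range
  refine ⟨C, fun Y => ?_⟩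
  rcases Nat.eq_zero_or_pos Y with rfl | hY
  · simp
  have h2 := hC ⟨Y, rfl⟩
  have hY' : (0 : ℝ) < Y := by exact_mod_cast hY
  rw [Function.comp_apply, div_le_iff₀ hY'] at h2
  refine le_trans (le_of_eq ?_) h2
  have h3 := sum_idealsNormLE (𝓞 F) Y fun _ => 1
  simp only [mul_one] at h3
  rw [← h3, Finset.sum_const, nsmul_eq_mul, mul_one, Nat.cast_inj]
  rw [← Nat.card_eq_finsetCard]
  refine Nat.card_congr
    { toFun := fun I => ⟨⟨I.1, mem_nonZeroDivisors_of_ne_zero (mem_idealsNormLE.mp I.2).2⟩, ?_⟩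
      invFun := fun I => ⟨I.1.1, mem_idealsNormLE.mpr ⟨?_, nonZeroDivisors.coe_ne_zero I.1⟩⟩
      left_inv := fun I => rfl
      right_inv := fun I => rfl }
  · exact_mod_cast (mem_idealsNormLE.mp I.2).1
  · exact_mod_cast I.2

theorem summable_prime_rpow {s : ℝ} (hs : 1 < s) :
    Summable fun P : HeightOneSpectrum (𝓞 F) => (Ideal.absNorm P.asIdeal : ℝ) ^ (-s) := by
  obtain ⟨C₁, hC₁⟩ := exists_sum_idealCount_le F
  exact summable_prime_of_summable (summable_absNorm_rpow hC₁ hs)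

theorem dedekindZeta_eq_tsum {s : ℝ} (hs : 1 < s) :
    dedekindZeta F s = ((∑' I : Ideal (𝓞 F), (Ideal.absNorm I : ℝ) ^ (-s) : ℝ) : ℂ) := by
  obtain ⟨C₁, hC₁⟩ := exists_sum_idealCount_le F
  have h0 : ((0 : ℕ) : ℝ) ^ (-s) = 0 := by rw [Nat.cast_zero, Real.zero_rpow (by linarith)]
  have hlim := tendsto_sum_idealCount (g := fun k : ℕ => (k : ℝ) ^ (-s)) h0
    (summable_absNorm_rpow (R := 𝓞 F) hC₁ hs)
  have hpart : ∀ Y : ℕ, ∑ k ∈ range (Y + 1), (idealCount (𝓞 F) k : ℝ) * (k : ℝ) ^ (-s) =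
      ∑ k ∈ Icc 1 Y, (idealCount (𝓞 F) k : ℝ) * (k : ℝ) ^ (-s) := by
    intro Y
    refine (Finset.sum_subset (fun k hk => ?_) fun k hk hk' => ?_).symm
    · rw [Finset.mem_Icc] at hk
      exact Finset.mem_range.mpr (by omega)
    · rw [Finset.mem_range] at hk
      rw [Finset.mem_Icc] at hk'
      rw [show k = 0 by omega, h0, mul_zero]
  have hsum : Summable fun k : ℕ => (idealCount (𝓞 F) k : ℝ) * (k : ℝ) ^ (-s) := by
    refine summable_of_sum_range_le (c := C₁ * ∑' k : ℕ, (k : ℝ) ^ (-s))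
      (fun k => by positivity) fun n => ?_
    refine le_trans ?_ ((hpart n).le.trans (sum_idealCount_mul_rpow_le hC₁ hs n))
    exact Finset.sum_le_sum_of_subset_of_nonneg (Finset.range_mono n.le_succ)
      fun k _ _ => by positivity
  have hlim2 := (hsum.hasSum.tendsto_sum_nat.comp (tendsto_add_atTop_nat 1)).congr hpart
  rw [tendsto_nhds_unique hlim hlim2, Complex.ofReal_tsum]
  refine tsum_congr fun k => ?_
  rcases Nat.eq_zero_or_pos k with rfl | hk
  · rw [LSeries.term_zero, h0, mul_zero, Complex.ofReal_zero]
  · rw [LSeries.term_of_ne_zero hk.ne', Complex.ofReal_mul, Complex.ofReal_cpow (Nat.cast_nonneg _),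
      Complex.ofReal_neg, Complex.cpow_neg, Complex.ofReal_natCast, Complex.ofReal_natCast,
      div_eq_mul_inv]

/-- The sum over primes of `N(P)⁻ˢ` is `-log (s - 1)` up to a bounded error. -/
theorem exists_abs_tsum_prime_add_log_le : ∃ C : ℝ, ∀ᶠ s in 𝓝[>] (1 : ℝ),
    |∑' P : HeightOneSpectrum (𝓞 F), (Ideal.absNorm P.asIdeal : ℝ) ^ (-s) + Real.log (s - 1)| ≤ C
    := by
  obtain ⟨C₁, hC₁⟩ := exists_sum_idealCount_le F
  set Z : ℝ → ℝ := fun s => ∑' I : Ideal (𝓞 F), (Ideal.absNorm I : ℝ) ^ (-s) with hZ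
  have hlim : Tendsto (fun s : ℝ => (s - 1) * Z s) (𝓝[>] 1) (𝓝 (dedekindZeta_residue F)) := by
    have h := (Complex.continuous_re.tendsto _).comp (tendsto_sub_one_mul_dedekindZeta_nhdsGT F)
    rw [Complex.ofReal_re] at h
    refine h.congr' ?_
    filter_upwards [self_mem_nhdsWithin] with s hs
    rw [Function.comp_apply, dedekindZeta_eq_tsum F hs, ← Complex.ofReal_one,
      ← Complex.ofReal_sub, ← Complex.ofReal_mul, Complex.ofReal_re]
  have hlog := hlim.log (dedekindZeta_residue_pos F).ne'
  set L := Real.log (dedekindZeta_residue F)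
  refine ⟨|L| + 1 + 2 * ∑' P : HeightOneSpectrum (𝓞 F), (Ideal.absNorm P.asIdeal : ℝ) ^ (-2 : ℝ),
    ?_⟩
  have hev := hlog.abs.eventually (eventually_lt_nhds (lt_add_one |L|))
  filter_upwards [hev, self_mem_nhdsWithin] with s h1 (hs : 1 < s)
  obtain ⟨hpos, hle⟩ := abs_log_tsum_sub_le hC₁ hs (ρ := fun _ => 1) (fun _ _ => by simp)
    (fun _ _ => Or.inl rfl)
  simp only [one_mul] at hpos hle
  rw [Real.log_mul (by linarith) hpos.ne'] at h1
  rw [abs_le] at hle ⊢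
  have h2 := abs_lt.mp h1
  constructor <;> linarith

end Zeta

section Splitting

open Filter Topology IsDedekindDomain

variable {R S : Type*} [CommRing R] [IsDedekindDomain R] [Module.Free ℤ R] [Module.Finite ℤ R]
  [CharZero R] [CommRing S] [IsDedekindDomain S] [Module.Free ℤ S] [Module.Finite ℤ S]
  [CharZero S] [Algebra R S] [Module.Finite R S] [Module.Flat R S]

omit [Module.Free ℤ R] [Module.Finite ℤ R] [CharZero R] [Module.Finite ℤ S] in
theorem tsum_fiber (P : HeightOneSpectrum R) [Fintype (P.asIdeal.primesOver S)] (h : ℕ → ℝ) :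
    ∑' Q : (fun Q : HeightOneSpectrum S => Q.under R) ⁻¹' {P}, h (Ideal.absNorm Q.1.asIdeal) =
      ∑ q : P.asIdeal.primesOver S, h (Ideal.absNorm q.1) := by
  let e : (fun Q : HeightOneSpectrum S => Q.under R) ⁻¹' {P} ≃ P.asIdeal.primesOver S :=
    { toFun := fun Q => ⟨Q.1.asIdeal, Q.1.isPrime,
        ⟨(congrArg HeightOneSpectrum.asIdeal (Set.mem_singleton_iff.mp Q.2)).symm⟩⟩
      invFun := fun q => ⟨⟨q.1, q.2.1, by
          have := q.2.2
          exact Ideal.ne_bot_of_liesOver_of_ne_bot P.ne_bot q.1⟩,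
        HeightOneSpectrum.ext q.2.2.over.symm⟩
      left_inv := fun Q => rfl
      right_inv := fun q => rfl }
  rw [← tsum_fintype (L := SummationFilter.unconditional _), ← e.tsum_eq]
  rfl

variable (hrank : Module.finrank R S = 2)
include hrank

omit [Module.Free ℤ R] [Module.Finite ℤ R] [CharZero R] [IsDedekindDomain S] [Module.Free ℤ S]
  [Module.Finite ℤ S] [CharZero S] in
theorem card_primesOver_le (P : HeightOneSpectrum R) [Fintype (P.asIdeal.primesOver S)] :
    Fintype.card (P.asIdeal.primesOver S) ≤ 2 := by
  rw [← hrank, ← Ideal.sum_ramification_inertia_eq_finrank P.asIdeal S, Fintype.card,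
    Finset.card_eq_sum_ones]
  refine Finset.sum_le_sum fun q _ => ?_
  have := q.2.1
  exact Nat.mul_pos (Ideal.ramificationIdx_pos q.1 R) (Ideal.inertiaDeg_pos q.1 R)

omit [Module.Free ℤ R] [Module.Finite ℤ R] [CharZero R] [Module.Free ℤ S] [Module.Finite ℤ S]
  [CharZero S] in
theorem inertiaDeg_eq_one_of_ne (P : HeightOneSpectrum R) {q q' : P.asIdeal.primesOver S}
    (hne : q ≠ q') : q.1.inertiaDeg R = 1 := by
  classical
  have := Fintype.ofFinite (P.asIdeal.primesOver S)
  have hpos : ∀ q : P.asIdeal.primesOver S, 0 < q.1.ramificationIdx R ∧ 0 < q.1.inertiaDeg R :=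
    fun q => by
      have := q.2.1
      exact ⟨Ideal.ramificationIdx_pos q.1 R, Ideal.inertiaDeg_pos q.1 R⟩
  have h := Ideal.sum_ramification_inertia_eq_finrank P.asIdeal S
  rw [hrank] at h
  have h2 : ∑ x ∈ {q, q'}, x.1.ramificationIdx R * x.1.inertiaDeg R ≤ 2 := by
    rw [← h]
    exact Finset.sum_le_sum_of_subset (Finset.subset_univ _)
  rw [Finset.sum_pair hne] at h2
  have h3 := hpos q
  have h4 := hpos q'
  have h5 := Nat.mul_pos h4.1 h4.2
  have h6 := Nat.le_mul_of_pos_left (q.1.inertiaDeg R) h3.1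
  omega

omit [Module.Finite ℤ R] [CharZero R] [Module.Finite ℤ S] in
theorem sum_primesOver_of_isSquare (P : HeightOneSpectrum R)
    [Fintype (P.asIdeal.primesOver S)] {m : R} {w : S} (hw : w ^ 2 = algebraMap R S m)
    (σ : S ≃ₐ[R] S) (hσ : σ w = -w) (hP : 4 * m ∉ P.asIdeal) {a : R} (ha : a ^ 2 - m ∈ P.asIdeal)
    (h : ℕ → ℝ) :
    ∑ q : P.asIdeal.primesOver S, h (Ideal.absNorm q.1) = 2 * h (Ideal.absNorm P.asIdeal) := by
  have hex : ∃ q q' : P.asIdeal.primesOver S, q ≠ q' := by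
    have := P.isMaximal
    obtain ⟨q, hq, hqo⟩ := Ideal.exists_maximal_ideal_liesOver_of_isIntegral (S := S) P.asIdeal
    have hqp := hq.isPrime
    have hmem : ∀ x : R, algebraMap R S x ∈ q → x ∈ P.asIdeal := fun x hx => by
      rw [hqo.over]; exact hx
    have hmem' : ∀ x ∈ P.asIdeal, algebraMap R S x ∈ q := fun x hx => by
      rw [hqo.over] at hx; exact hx
    have hσo : (Ideal.comap σ q).LiesOver P.asIdeal := by
      refine ⟨?_⟩
      ext x
      rw [Ideal.under_def, Ideal.mem_comap, Ideal.mem_comap, AlgEquiv.commutes]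
      exact ⟨hmem' x, hmem x⟩
    refine ⟨⟨q, hqp, hqo⟩, ⟨Ideal.comap σ q, Ideal.comap_isPrime σ q, hσo⟩, fun heq => ?_⟩
    have heq' : q = Ideal.comap σ q := congrArg Subtype.val heq
    have hfac : (algebraMap R S a - w) * (algebraMap R S a + w) ∈ q := by
      have := hmem' _ ha
      rw [map_sub, map_pow, ← hw] at this
      convert this using 1
      ring
    have hboth : algebraMap R S a - w ∈ q ∧ algebraMap R S a + w ∈ q := by
      rcases hqp.mem_or_mem hfac with h1 | h1
      · refine ⟨h1, ?_⟩
        rw [heq', Ideal.mem_comap, map_sub, hσ, AlgEquiv.commutes, sub_neg_eq_add] at h1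
        exact h1
      · refine ⟨?_, h1⟩
        rw [heq', Ideal.mem_comap, map_add, hσ, AlgEquiv.commutes, ← sub_eq_add_neg] at h1
        exact h1
    have h2a : algebraMap R S (2 * a) ∈ q := by
      have := q.add_mem hboth.1 hboth.2
      convert this using 1
      rw [map_mul, map_ofNat]
      ring
    have h2a' := hmem _ h2a
    refine hP ?_
    have h4 := P.asIdeal.sub_mem (P.asIdeal.mul_mem_left (2 * a) h2a')
      (P.asIdeal.mul_mem_left 4 ha)
    convert h4 using 1
    ring
  obtain ⟨q₀, q₁, hne⟩ := hex
  have hnorm : ∀ q : P.asIdeal.primesOver S, Ideal.absNorm q.1 = Ideal.absNorm P.asIdeal := by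
    intro q
    have h1 : q.1.inertiaDeg R = 1 := by
      by_cases h0 : q = q₀
      · rw [h0]; exact inertiaDeg_eq_one_of_ne hrank P hne
      · exact inertiaDeg_eq_one_of_ne hrank P h0
    have := q.2.1
    have := q.2.2
    rw [← Ideal.absNorm_pow_inertiaDeg P.asIdeal q.1, h1, pow_one]
  have hcard : Fintype.card (P.asIdeal.primesOver S) = 2 :=
    le_antisymm (card_primesOver_le hrank P) (Fintype.one_lt_card_iff.mpr ⟨q₀, q₁, hne⟩)
  rw [Finset.sum_congr rfl fun q _ => by rw [hnorm q], Finset.sum_const, Finset.card_univ, hcard,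
    nsmul_eq_mul, Nat.cast_ofNat]

omit [CharZero R] [Module.Finite ℤ S] [CharZero S] in
theorem sum_primesOver_le_of_not_isSquare (P : HeightOneSpectrum R)
    [Fintype (P.asIdeal.primesOver S)] {m : R} {w : S} (hw : w ^ 2 = algebraMap R S m)
    (hP : ∀ a : R, a ^ 2 - m ∉ P.asIdeal) {s : ℝ} (hs : 1 < s) :
    ∑ q : P.asIdeal.primesOver S, (Ideal.absNorm q.1 : ℝ) ^ (-s) ≤
      2 * (Ideal.absNorm P.asIdeal : ℝ) ^ (-2 : ℝ) := by
  have hdeg : ∀ q : P.asIdeal.primesOver S, 2 ≤ q.1.inertiaDeg R := by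
    intro q
    have hqp := q.2.1
    have hqo := q.2.2
    have hpm := P.isMaximal
    have hqm : q.1.IsMaximal := Ideal.isMaximal_of_isIntegral_of_isMaximal_comap (R := R) q.1
      (by rw [← Ideal.under_def, ← hqo.over]; exact hpm)
    by_contra hlt
    have h1 : q.1.inertiaDeg R = 1 := by
      have := Ideal.inertiaDeg_pos q.1 R
      omega
    rw [Ideal.inertiaDeg_eq_of_isMaximal P.asIdeal q.1] at h1
    let : Field (R ⧸ P.asIdeal) := Ideal.Quotient.field _
    let : Field (S ⧸ q.1) := Ideal.Quotient.field _
    obtain ⟨c, hc⟩ := (finrank_eq_one_iff_of_nonzero' (1 : S ⧸ q.1) one_ne_zero).mp h1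
      (Ideal.Quotient.mk _ w)
    obtain ⟨a, rfl⟩ := Ideal.Quotient.mk_surjective c
    rw [Algebra.smul_def, mul_one, Ideal.Quotient.algebraMap_mk_of_liesOver] at hc
    have h3 : algebraMap R S a - w ∈ q.1 := Ideal.Quotient.eq.mp hc
    refine hP a ?_
    rw [hqo.over, Ideal.under_def, Ideal.mem_comap, map_sub, map_pow, ← hw]
    have := q.1.mul_mem_right (algebraMap R S a + w) h3
    convert this using 1
    ring
  have hNP : (1 : ℝ) ≤ Ideal.absNorm P.asIdeal := by
    exact_mod_cast one_le_two.trans (two_le_absNorm P)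
  refine (Finset.sum_le_sum (g := fun _ => (Ideal.absNorm P.asIdeal : ℝ) ^ (-2 : ℝ))
    fun q _ => ?_).trans ?_
  · have := q.2.1
    have := q.2.2
    rw [← Ideal.absNorm_pow_inertiaDeg P.asIdeal q.1, Nat.cast_pow, ← Real.rpow_natCast,
      ← Real.rpow_mul (by positivity)]
    refine Real.rpow_le_rpow_of_exponent_le hNP ?_
    have : (2 : ℝ) ≤ q.1.inertiaDeg R := by exact_mod_cast hdeg q
    nlinarith
  · rw [Finset.sum_const, nsmul_eq_mul, Finset.card_univ]
    refine mul_le_mul_of_nonneg_right ?_ (by positivity)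
    exact_mod_cast card_primesOver_le hrank P

omit [CharZero R] [Module.Finite ℤ S] [CharZero S] in
theorem sum_primesOver_le_two (P : HeightOneSpectrum R)
    [Fintype (P.asIdeal.primesOver S)] {s : ℝ} (hs : 1 < s) :
    ∑ q : P.asIdeal.primesOver S, (Ideal.absNorm q.1 : ℝ) ^ (-s) ≤ 2 := by
  refine (Finset.sum_le_sum (g := fun _ => (1 : ℝ)) fun q _ => ?_).trans ?_
  · have := q.2.1
    have := q.2.2
    have h1 := two_le_absNorm P
    rw [← Ideal.absNorm_pow_inertiaDeg P.asIdeal q.1]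
    refine Real.rpow_le_one_of_one_le_of_nonpos ?_ (by linarith)
    exact_mod_cast Nat.one_le_pow _ _ (by omega)
  · rw [Finset.sum_const, nsmul_eq_mul, Finset.card_univ, mul_one]
    exact_mod_cast card_primesOver_le hrank P

omit [Module.Finite ℤ S] in
open Classical in
/-- The prime sum of a quadratic extension is twice the sum over the primes modulo which the
radicand is a square, up to a bounded error. -/
theorem exists_abs_tsum_prime_sub_le {m : R} (hm : m ≠ 0) {w : S} (hw : w ^ 2 = algebraMap R S m)
    (σ : S ≃ₐ[R] S) (hσ : σ w = -w) {D : R} (hD : D ≠ 0)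
    (hRs : ∀ s : ℝ, 1 < s → Summable fun P : HeightOneSpectrum R =>
      (Ideal.absNorm P.asIdeal : ℝ) ^ (-s))
    (hSs : ∀ s : ℝ, 1 < s → Summable fun P : HeightOneSpectrum S =>
      (Ideal.absNorm P.asIdeal : ℝ) ^ (-s)) :
    ∃ C : ℝ, ∀ s : ℝ, 1 < s →
      |∑' Q : HeightOneSpectrum S, (Ideal.absNorm Q.asIdeal : ℝ) ^ (-s) -
        2 * ∑' P : HeightOneSpectrum R, (if D * (4 * m) ∉ P.asIdeal ∧ ∃ a, a ^ 2 - m ∈ P.asIdeal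
          then (Ideal.absNorm P.asIdeal : ℝ) ^ (-s) else 0)| ≤ C := by
  have := fun P : HeightOneSpectrum R => Fintype.ofFinite (P.asIdeal.primesOver S)
  have hD4 : D * (4 * m) ≠ 0 := mul_ne_zero hD (mul_ne_zero (OfNat.ofNat_ne_zero 4) hm)
  let bnd : HeightOneSpectrum R → ℝ := fun P => 2 * (Ideal.absNorm P.asIdeal : ℝ) ^ (-2 : ℝ) +
    if D * (4 * m) ∈ P.asIdeal then 2 else 0
  have hbnd : Summable bnd := by
    refine ((hRs 2 one_lt_two).mul_left 2).add (summable_of_hasFiniteSupport ?_)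
    have hfin := Ideal.finite_factors (I := Ideal.span {D * (4 * m)})
      (by rwa [Ne, Ideal.zero_eq_bot, Ideal.span_singleton_eq_bot])
    refine hfin.subset fun P hP => ?_
    rw [Function.mem_support] at hP
    have : D * (4 * m) ∈ P.asIdeal := by
      by_contra h
      exact hP (if_neg h)
    exact Ideal.dvd_span_singleton.mpr this
  refine ⟨∑' P, bnd P, fun s hs => ?_⟩
  have h1 := (hSs s hs).hasSum.tsum_fiberwise fun Q => Q.under R
  simp only [tsum_fiber _ fun n : ℕ => (n : ℝ) ^ (-s)] at h1
  have h2 : Summable fun P : HeightOneSpectrum R =>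
      if D * (4 * m) ∉ P.asIdeal ∧ ∃ a, a ^ 2 - m ∈ P.asIdeal
        then (Ideal.absNorm P.asIdeal : ℝ) ^ (-s) else 0 := by
    refine (hRs s hs).of_nonneg_of_le (fun P => ?_) fun P => ?_
    · split_ifs <;> positivity
    · split_ifs
      · exact le_rfl
      · positivity
  have h3 := h1.sub (h2.hasSum.mul_left 2)
  rw [← h3.tsum_eq, ← Real.norm_eq_abs]
  refine tsum_of_norm_bounded hbnd.hasSum fun P => ?_
  rw [Real.norm_eq_abs]
  have hnn : 0 ≤ ∑ q : P.asIdeal.primesOver S, (Ideal.absNorm q.1 : ℝ) ^ (-s) :=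
    Finset.sum_nonneg fun q _ => by positivity
  have hnn2 : 0 ≤ (Ideal.absNorm P.asIdeal : ℝ) ^ (-2 : ℝ) := by positivity
  by_cases hbad : D * (4 * m) ∈ P.asIdeal
  · rw [if_neg fun h => h.1 hbad, mul_zero, sub_zero, abs_of_nonneg hnn]
    have := sum_primesOver_le_two (S := S) hrank P hs
    simp only [bnd, if_pos hbad]
    linarith
  · simp only [bnd, if_neg hbad, add_zero]
    by_cases hsq : ∃ a, a ^ 2 - m ∈ P.asIdeal
    · rw [if_pos ⟨hbad, hsq⟩]
      obtain ⟨a, ha⟩ := hsq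
      rw [sum_primesOver_of_isSquare hrank P hw σ hσ
        (fun h => hbad (P.asIdeal.mul_mem_left _ h)) ha fun n : ℕ => (n : ℝ) ^ (-s), sub_self,
        abs_zero]
      positivity
    · rw [if_neg fun h => hsq h.2, mul_zero, sub_zero, abs_of_nonneg hnn]
      exact sum_primesOver_le_of_not_isSquare hrank P hw (fun a ha => hsq ⟨a, ha⟩) hs

end Splitting

section Quadratic

open Filter Topology IsDedekindDomain NumberField

open Classical in
/-- The sum of `N(P)⁻ˢ` over the primes `P` not containing `B` modulo which `m` is a square. -/
noncomputable def squarePrimeSum {R : Type*} [CommRing R] [IsDedekindDomain R] [Module.Free ℤ R]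
    (B m : R) (s : ℝ) : ℝ :=
  ∑' P : HeightOneSpectrum R, if B ∉ P.asIdeal ∧ ∃ a, a ^ 2 - m ∈ P.asIdeal
    then (Ideal.absNorm P.asIdeal : ℝ) ^ (-s) else 0

theorem exists_abs_squarePrimeSum_add_log_le_of_extension {F E : Type*} [Field F]
    [NumberField F] [Field E] [NumberField E] [Algebra F E] (hrank : Module.finrank F E = 2) {m : 𝓞 F} (hm : m ≠ 0) {w : E}
    (hw : w ^ 2 = algebraMap F E m) (σ : E ≃ₐ[F] E) (hσ : σ w = -w) {D : 𝓞 F} (hD : D ≠ 0) :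
    ∃ C : ℝ, ∀ᶠ s in 𝓝[>] (1 : ℝ),
      |2 * squarePrimeSum (D * (4 * m)) m s + Real.log (s - 1)| ≤ C := by
  have hwint : IsIntegral ℤ w := by
    have : IsIntegral ℤ (w ^ 2) := by
      rw [hw]
      exact (RingOfIntegers.isIntegral_coe m).algebraMap
    exact IsIntegral.of_pow two_pos this
  let w' : 𝓞 E := ⟨w, hwint⟩
  have hw' : w' ^ 2 = algebraMap (𝓞 F) (𝓞 E) m := by
    apply RingOfIntegers.ext
    exact hw
  let σ' : 𝓞 E ≃ₐ[𝓞 F] 𝓞 E :=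
    AlgEquiv.ofRingEquiv (f := RingOfIntegers.mapRingEquiv σ) fun x => by
      apply RingOfIntegers.ext
      exact σ.commutes (x : F)
  have hσ' : σ' w' = -w' := by
    apply RingOfIntegers.ext
    exact hσ
  have hrank' : Module.finrank (𝓞 F) (𝓞 E) = 2 := by
    rw [← hrank, IsFractionRing.finrank_eq (𝓞 F) F (𝓞 E) E]
  obtain ⟨C, hC⟩ := exists_abs_tsum_prime_sub_le hrank' hm hw' σ' hσ' hD
    (fun s hs => summable_prime_rpow F hs) (fun s hs => summable_prime_rpow E hs)
  obtain ⟨C', hC'⟩ := exists_abs_tsum_prime_add_log_le E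
  refine ⟨C + C', ?_⟩
  filter_upwards [hC', self_mem_nhdsWithin] with s h1 hs
  have h2 := hC s hs
  rw [abs_le] at h1 h2 ⊢
  unfold squarePrimeSum
  constructor <;> linarith [h1.1, h1.2, h2.1, h2.2]

theorem exists_abs_squarePrimeSum_add_log_le {F : Type*} [Field F] [NumberField F] {m : 𝓞 F}
    (hm : ¬ IsSquare (m : F)) {D : 𝓞 F} (hD : D ≠ 0) :
    ∃ C : ℝ, ∀ᶠ s in 𝓝[>] (1 : ℝ),
      |2 * squarePrimeSum (D * (4 * m)) m s + Real.log (s - 1)| ≤ C := by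
  have hm0 : m ≠ 0 := by
    rintro rfl
    exact hm (by simp)
  have hfact : Fact (∀ r : F, r ^ 2 ≠ (m : F) + 0 * r) := ⟨fun r hr => hm ⟨r, by
    rw [← sq, hr, zero_mul, add_zero]⟩⟩
  have : CharZero (QuadraticAlgebra F (m : F) 0) := charZero_of_injective_algebraMap
    (algebraMap F (QuadraticAlgebra F (m : F) 0)).injective
  have : NumberField (QuadraticAlgebra F (m : F) 0) := { to_finiteDimensional := Module.Finite.trans F _ }
  refine exists_abs_squarePrimeSum_add_log_le_of_extension (E := QuadraticAlgebra F (m : F) 0)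
    (QuadraticAlgebra.finrank_eq_two (m : F) 0) hm0 (w := ⟨0, 1⟩) ?_
    (AlgEquiv.ofRingEquiv (f := starRingAut) fun x => ?_) ?_ hD
  · ext <;> simp [sq, QuadraticAlgebra.algebraMap_eq]
  · ext <;> simp [QuadraticAlgebra.algebraMap_eq]
  · ext <;> simp

theorem not_eventually_neg_log_sub_one_le (C : ℝ) :
    ¬ ∀ᶠ s in 𝓝[>] (1 : ℝ), -Real.log (s - 1) ≤ C := by
  intro h
  have h1 : Tendsto (fun s : ℝ => s - 1) (𝓝[>] 1) (𝓝[>] 0) := by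
    refine tendsto_nhdsWithin_iff.mpr ⟨?_, ?_⟩
    · have : Tendsto (fun s : ℝ => s - 1) (𝓝 1) (𝓝 (1 - 1)) := tendsto_id.sub_const 1
      rw [sub_self] at this
      exact this.mono_left nhdsWithin_le_nhds
    · filter_upwards [self_mem_nhdsWithin] with s hs
      exact sub_pos.mpr (Set.mem_Ioi.mp hs)
  have h2 := (Real.tendsto_log_nhdsGT_zero.comp h1).eventually (eventually_lt_atBot (-C))
  obtain ⟨s, hs1, hs2⟩ := (h.and h2).exists
  simp only [Function.comp] at hs2
  linarith

open Classical in
theorem exists_absNorm_eq_neg_one {F : Type*} [Field F] [NumberField F] {ρ : ℕ → ℝ}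
    (hmul : ∀ m n, ρ (m * n) = ρ m * ρ n) (hval : ∀ m, m ≠ 0 → ρ m = 1 ∨ ρ m = -1)
    {c d : 𝓞 F} (hc : ¬ IsSquare (c : F)) (hd : ¬ IsSquare (d : F))
    (hcd : ¬ IsSquare ((c * d : 𝓞 F) : F))
    (hρ : ∀ P : HeightOneSpectrum (𝓞 F), 4 * (c * d) ∉ P.asIdeal →
      ρ (Ideal.absNorm P.asIdeal) = (if ∃ a, a ^ 2 - c ∈ P.asIdeal then 1 else 0) +
        (if ∃ a, a ^ 2 - d ∈ P.asIdeal then 1 else 0) -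
        (if ∃ a, a ^ 2 - c * d ∈ P.asIdeal then 1 else 0)) :
    ∃ γ : 𝓞 F, γ ≠ 0 ∧ ρ (Ideal.absNorm (Ideal.span {γ})) = -1 := by
  by_contra! hno
  have hprin : ∀ γ : 𝓞 F, γ ≠ 0 → ρ (Ideal.absNorm (Ideal.span {γ})) = 1 := fun γ hγ =>
    (hval _ (by rwa [Ne, Ideal.absNorm_eq_zero_iff, Ideal.span_singleton_eq_bot])).resolve_right
      (hno γ hγ)
  have hc0 : c ≠ 0 := by
    rintro rfl
    exact hc (by simp)
  have hd0 : d ≠ 0 := by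
    rintro rfl
    exact hd (by simp)
  have hB0 : 4 * (c * d) ≠ 0 := mul_ne_zero (OfNat.ofNat_ne_zero 4) (mul_ne_zero hc0 hd0)
  obtain ⟨C₁, h₁⟩ := exists_abs_squarePrimeSum_add_log_le hc hd0
  obtain ⟨C₂, h₂⟩ := exists_abs_squarePrimeSum_add_log_le hd hc0
  obtain ⟨C₃, h₃⟩ := exists_abs_squarePrimeSum_add_log_le hcd (one_ne_zero (α := 𝓞 F))
  rw [show d * (4 * c) = 4 * (c * d) by ring] at h₁
  rw [show c * (4 * d) = 4 * (c * d) by ring] at h₂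
  rw [one_mul] at h₃
  let bnd : HeightOneSpectrum (𝓞 F) → ℝ := fun P => if 4 * (c * d) ∈ P.asIdeal then 1 else 0
  have hbnd : Summable bnd := by
    refine summable_of_hasFiniteSupport ?_
    have hfin := Ideal.finite_factors (I := Ideal.span {4 * (c * d)})
      (by rwa [Ne, Ideal.zero_eq_bot, Ideal.span_singleton_eq_bot])
    refine hfin.subset fun P hP => ?_
    rw [Function.mem_support] at hP
    have : 4 * (c * d) ∈ P.asIdeal := by
      by_contra h
      exact hP (if_neg h)
    exact Ideal.dvd_span_singleton.mpr this
  have hN : ∀ P : HeightOneSpectrum (𝓞 F), 1 ≤ Ideal.absNorm P.asIdeal := fun P =>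
    one_le_two.trans (two_le_absNorm P)
  have hvalP : ∀ P : HeightOneSpectrum (𝓞 F), |ρ (Ideal.absNorm P.asIdeal)| = 1 := fun P => by
    rcases hval _ (Nat.one_le_iff_ne_zero.mp (hN P)) with h | h <;> rw [h] <;> simp
  have hsum : ∀ s : ℝ, 1 < s →
      |∑' P : HeightOneSpectrum (𝓞 F), ρ (Ideal.absNorm P.asIdeal) *
        (Ideal.absNorm P.asIdeal : ℝ) ^ (-s) -
        (squarePrimeSum (4 * (c * d)) c s + squarePrimeSum (4 * (c * d)) d s -
          squarePrimeSum (4 * (c * d)) (c * d) s)| ≤ ∑' P, bnd P := by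
    intro s hs
    have hF := summable_prime_rpow F hs
    have hm : ∀ m : 𝓞 F, Summable fun P : HeightOneSpectrum (𝓞 F) =>
        if 4 * (c * d) ∉ P.asIdeal ∧ ∃ a, a ^ 2 - m ∈ P.asIdeal
          then (Ideal.absNorm P.asIdeal : ℝ) ^ (-s) else 0 := by
      refine fun m => hF.of_nonneg_of_le (fun P => ?_) fun P => ?_
      · split_ifs <;> positivity
      · split_ifs
        · exact le_rfl
        · positivity
    have hρs : Summable fun P : HeightOneSpectrum (𝓞 F) => ρ (Ideal.absNorm P.asIdeal) *
        (Ideal.absNorm P.asIdeal : ℝ) ^ (-s) := by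
      refine Summable.of_norm_bounded hF fun P => ?_
      rw [norm_mul, Real.norm_eq_abs, hvalP, one_mul, Real.norm_of_nonneg (by positivity)]
    have h := hρs.hasSum.sub (((hm c).hasSum.add (hm d).hasSum).sub (hm (c * d)).hasSum)
    unfold squarePrimeSum
    rw [← h.tsum_eq, ← Real.norm_eq_abs]
    refine tsum_of_norm_bounded hbnd.hasSum fun P => ?_
    rw [Real.norm_eq_abs]
    by_cases hbad : 4 * (c * d) ∈ P.asIdeal
    · simp only [hbad, not_true_eq_false, false_and, if_false, bnd, if_true, add_zero, sub_zero]
      rw [abs_mul, hvalP, one_mul, abs_of_nonneg (by positivity)]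
      exact Real.rpow_le_one_of_one_le_of_nonpos (by exact_mod_cast hN P) (by linarith)
    · simp only [hbad, not_false_eq_true, true_and, if_false, bnd]
      rw [hρ P hbad]
      refine le_of_eq (abs_eq_zero.mpr ?_)
      split_ifs <;> ring
  by_cases hex : ∃ P : HeightOneSpectrum (𝓞 F), ρ (Ideal.absNorm P.asIdeal) = -1
  · obtain ⟨P, hP⟩ := hex
    obtain ⟨C₀, hC₀⟩ := exists_sum_idealCount_le F
    obtain ⟨C, hC⟩ := exists_tsum_prime_le hmul hval P.ne_bot hP hprin hC₀
    refine not_eventually_neg_log_sub_one_le (2 * (∑' P, bnd P) + 2 * C + C₁ + C₂ + C₃) ?_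
    filter_upwards [h₁, h₂, h₃, self_mem_nhdsWithin] with s h1 h2 h3 hs
    have h4 := hsum s hs
    have h5 := hC s hs
    rw [abs_le] at h1 h2 h3 h4
    linarith [h1.1, h2.1, h3.2, h4.1]
  · push Not at hex
    have hone : ∀ P : HeightOneSpectrum (𝓞 F), ρ (Ideal.absNorm P.asIdeal) = 1 := fun P =>
      (hval _ (Nat.one_le_iff_ne_zero.mp (hN P))).resolve_right (hex P)
    obtain ⟨C, hC⟩ := exists_abs_tsum_prime_add_log_le F
    refine not_eventually_neg_log_sub_one_le (2 * (∑' P, bnd P) + 2 * C + C₁ + C₂ + C₃) ?_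
    filter_upwards [h₁, h₂, h₃, hC, self_mem_nhdsWithin] with s h1 h2 h3 h5 hs
    have h4 := hsum s hs
    simp only [hone, one_mul] at h4
    rw [abs_le] at h1 h2 h3 h4 h5
    linarith [h1.2, h2.2, h3.1, h4.2, h5.1]

end Quadratic

section Sign

open Classical in
/-- The completely multiplicative function sending the primes modulo which neither `c` nor `d` is
a square to `-1`, and all other primes to `1`. -/
noncomputable def nonresidueSign (c d : ℕ) (n : ℕ) : ℝ :=
  if n = 0 then 0 else (n.primeFactorsList.map fun p =>
    if IsSquare (c : ZMod p) ∨ IsSquare (d : ZMod p) then (1 : ℝ) else -1).prod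

variable (c d : ℕ)

@[simp] theorem nonresidueSign_zero : nonresidueSign c d 0 = 0 := if_pos rfl

@[simp] theorem nonresidueSign_one : nonresidueSign c d 1 = 1 := by simp [nonresidueSign]

theorem nonresidueSign_mul (m n : ℕ) :
    nonresidueSign c d (m * n) = nonresidueSign c d m * nonresidueSign c d n := by
  rcases eq_or_ne m 0 with rfl | hm
  · simp
  rcases eq_or_ne n 0 with rfl | hn
  · simp
  rw [nonresidueSign, nonresidueSign, nonresidueSign, if_neg hm, if_neg hn,
    if_neg (mul_ne_zero hm hn), ((Nat.perm_primeFactorsList_mul hm hn).map _).prod_eq,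
    List.map_append, List.prod_append]

theorem nonresidueSign_pow (m n : ℕ) :
    nonresidueSign c d (m ^ n) = nonresidueSign c d m ^ n := by
  induction n with
  | zero => simp
  | succ n ih => rw [pow_succ, nonresidueSign_mul, ih, pow_succ]

open Classical in
theorem nonresidueSign_prime {p : ℕ} (hp : p.Prime) : nonresidueSign c d p =
    if IsSquare (c : ZMod p) ∨ IsSquare (d : ZMod p) then 1 else -1 := by
  simp [nonresidueSign, hp.ne_zero, Nat.primeFactorsList_prime hp]

theorem nonresidueSign_eq_or {n : ℕ} (hn : n ≠ 0) :
    nonresidueSign c d n = 1 ∨ nonresidueSign c d n = -1 := by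
  induction n using Nat.recOnMul with
  | zero => exact absurd rfl hn
  | one => simp
  | prime p hp =>
    rw [nonresidueSign_prime c d hp]
    split_ifs <;> simp
  | mul a b ha hb =>
    rw [nonresidueSign_mul]
    rcases ha (left_ne_zero_of_mul hn) with h | h <;>
    rcases hb (right_ne_zero_of_mul hn) with h' | h' <;> rw [h, h'] <;> simp

theorem nonresidueSign_mul_self {n : ℕ} (hn : n ≠ 0) :
    nonresidueSign c d n * nonresidueSign c d n = 1 := by
  rcases nonresidueSign_eq_or c d hn with h | h <;> rw [h] <;> simp

theorem nonresidueSign_eq_one {n : ℕ} (hn : n ≠ 0)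
    (h : ∀ p : ℕ, p.Prime → p ∣ n → IsSquare (c : ZMod p) ∨ IsSquare (d : ZMod p)) :
    nonresidueSign c d n = 1 := by
  induction n using Nat.recOnMul with
  | zero => exact absurd rfl hn
  | one => simp
  | prime p hp => rw [nonresidueSign_prime c d hp, if_pos (h p hp dvd_rfl)]
  | mul a b ha hb =>
    rw [nonresidueSign_mul, ha (left_ne_zero_of_mul hn) fun p hp hpa => h p hp (hpa.mul_right b),
      hb (right_ne_zero_of_mul hn) fun p hp hpb => h p hp (hpb.mul_left a), one_mul]

theorem nonresidueSign_eq_legendreSym [Fact c.Prime] {n : ℕ} (hn : n ≠ 0)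
    (h : ∀ p : ℕ, p.Prime → p ∣ n →
      ((p : ZMod c) ≠ 0 ∧ (IsSquare (p : ZMod c) ↔ IsSquare (c : ZMod p) ∨ IsSquare (d : ZMod p)))) :
    nonresidueSign c d n = legendreSym c n := by
  induction n using Nat.recOnMul with
  | zero => exact absurd rfl hn
  | one => simp
  | prime p hp =>
    obtain ⟨h0, hsq⟩ := h p hp dvd_rfl
    rw [nonresidueSign_prime c d hp]
    split_ifs with h1
    · rw [(legendreSym.eq_one_iff c (by exact_mod_cast h0)).mpr (by exact_mod_cast hsq.mpr h1)]
      simp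
    · rw [(legendreSym.eq_neg_one_iff c).mpr
        (by rw [Int.cast_natCast]; exact fun h2 => h1 (hsq.mp h2))]
      simp
  | mul a b ha hb =>
    rw [nonresidueSign_mul, ha (left_ne_zero_of_mul hn) fun p hp hpa => h p hp (hpa.mul_right b),
      hb (right_ne_zero_of_mul hn) fun p hp hpb => h p hp (hpb.mul_left a), Nat.cast_mul,
      legendreSym.mul, Int.cast_mul]

theorem isSquare_zmod_of_dvd_sub {p : ℕ} (hp : p.Prime) {m x y : ℤ} (hxy : IsCoprime x y)
    (h : (p : ℤ) ∣ x ^ 2 - m * y ^ 2) : IsSquare (m : ZMod p) := by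
  have : Fact p.Prime := ⟨hp⟩
  have h1 : (x : ZMod p) ^ 2 = m * (y : ZMod p) ^ 2 := by
    have := (ZMod.intCast_zmod_eq_zero_iff_dvd _ p).mpr h
    push_cast at this
    exact sub_eq_zero.mp this
  have hy : (y : ZMod p) ≠ 0 := by
    intro hy
    rw [hy, zero_pow two_ne_zero, mul_zero] at h1
    have hx : (x : ZMod p) = 0 := pow_eq_zero_iff two_ne_zero |>.mp h1
    obtain ⟨a, b, hab⟩ := hxy
    have := congrArg (Int.cast : ℤ → ZMod p) hab
    push_cast at this
    rw [hx, hy, mul_zero, mul_zero, add_zero] at this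
    exact zero_ne_one this
  refine ⟨x / y, ?_⟩
  field_simp
  exact h1.symm

end Sign

section SignOfForm

variable {c d : ℕ}

theorem nonresidueSign_sq_sub_mul_sq_of_isCoprime {m : ℤ}
    (h : ∀ x y : ℤ, IsCoprime x y → x ^ 2 - m * y ^ 2 ≠ 0 →
      nonresidueSign c d (x ^ 2 - m * y ^ 2).natAbs = 1)
    (x y : ℤ) (hxy : x ^ 2 - m * y ^ 2 ≠ 0) :
    nonresidueSign c d (x ^ 2 - m * y ^ 2).natAbs = 1 := by
  have hg : 0 < Int.gcd x y := by
    rw [Int.gcd_pos_iff]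
    by_contra! h0
    rw [h0.1, h0.2] at hxy
    simp at hxy
  obtain ⟨x', y', hcop, hx, hy⟩ := Int.exists_gcd_one hg
  have heq : x ^ 2 - m * y ^ 2 = (x' ^ 2 - m * y' ^ 2) * (Int.gcd x y : ℤ) ^ 2 := by
    calc x ^ 2 - m * y ^ 2 = (x' * Int.gcd x y) ^ 2 - m * (y' * Int.gcd x y) ^ 2 := by
          rw [← hx, ← hy]
      _ = _ := by ring
  have h0 : x' ^ 2 - m * y' ^ 2 ≠ 0 := fun h0 => hxy (by rw [heq, h0, zero_mul])
  rw [heq, Int.natAbs_mul, nonresidueSign_mul, h x' y' (Int.isCoprime_iff_gcd_eq_one.mpr hcop) h0,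
    Int.natAbs_pow, Int.natAbs_natCast, sq, nonresidueSign_mul,
    nonresidueSign_mul_self c d hg.ne', one_mul]

theorem nonresidueSign_sq_sub_mul_sq_left (x y : ℤ) (hxy : x ^ 2 - (c : ℤ) * y ^ 2 ≠ 0) :
    nonresidueSign c d (x ^ 2 - (c : ℤ) * y ^ 2).natAbs = 1 := by
  refine nonresidueSign_sq_sub_mul_sq_of_isCoprime (fun x y hcop h0 => ?_) x y hxy
  refine nonresidueSign_eq_one c d (Int.natAbs_ne_zero.mpr h0) fun p hp hdvd => Or.inl ?_
  have := isSquare_zmod_of_dvd_sub hp hcop (Int.natCast_dvd.mpr hdvd)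
  simpa using this

theorem nonresidueSign_sq_sub_mul_sq_right (x y : ℤ) (hxy : x ^ 2 - (d : ℤ) * y ^ 2 ≠ 0) :
    nonresidueSign c d (x ^ 2 - (d : ℤ) * y ^ 2).natAbs = 1 := by
  refine nonresidueSign_sq_sub_mul_sq_of_isCoprime (fun x y hcop h0 => ?_) x y hxy
  refine nonresidueSign_eq_one c d (Int.natAbs_ne_zero.mpr h0) fun p hp hdvd => Or.inr ?_
  have := isSquare_zmod_of_dvd_sub hp hcop (Int.natCast_dvd.mpr hdvd)
  simpa using this

theorem isSquare_left_of_isSquare_mul {K : Type*} [Field K] {a b : K} (hb : b ≠ 0)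
    (hab : IsSquare (a * b)) (h : IsSquare b) : IsSquare a := by
  have := hab.div h
  rwa [mul_div_cancel_right₀ a hb] at this

variable (hc : c.Prime) (hd : d.Prime) (hc8 : c % 8 = 1) (hd2 : d ≠ 2) (hdc0 : d ≠ c)
  (hdc : IsSquare (d : ZMod c))

include hc hd hc8 hd2 hdc0 hdc

theorem isSquare_left_or_right_iff {p : ℕ} (hp : p.Prime) (hpc : p ≠ c)
    (hcd : IsSquare ((c * d : ℕ) : ZMod p)) :
    IsSquare (p : ZMod c) ↔ IsSquare (c : ZMod p) ∨ IsSquare (d : ZMod p) := by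
  have : Fact c.Prime := ⟨hc⟩
  have : Fact p.Prime := ⟨hp⟩
  have hc2 : c ≠ 2 := by omega
  rcases eq_or_ne p 2 with rfl | hp2
  · refine iff_of_true ?_ (Or.inl (FiniteField.isSquare_of_char_two (ZMod.ringChar_zmod_n 2) _))
    exact_mod_cast (ZMod.exists_sq_eq_two_iff hc2).mpr (Or.inl hc8)
  · rw [ZMod.exists_sq_eq_prime_iff_of_mod_four_eq_one (by omega) hp2]
    rcases eq_or_ne p d with rfl | hpd
    · refine iff_of_true ?_ (Or.inr ?_)
      · rwa [← ZMod.exists_sq_eq_prime_iff_of_mod_four_eq_one (by omega) hp2]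
      · rw [CharP.cast_eq_zero]
        exact IsSquare.zero
    · refine ⟨Or.inl, fun h => ?_⟩
      have hd0 : (d : ZMod p) ≠ 0 := by
        rw [Ne, ZMod.natCast_eq_zero_iff, Nat.prime_dvd_prime_iff_eq hp hd]
        exact hpd
      rw [Nat.cast_mul] at hcd
      rcases h with h | h
      · exact h
      · exact isSquare_left_of_isSquare_mul hd0 hcd h

theorem nonresidueSign_sq_sub_mul_sq_mul (x y : ℤ)
    (hxy : x ^ 2 - ((c * d : ℕ) : ℤ) * y ^ 2 ≠ 0) :
    nonresidueSign c d (x ^ 2 - ((c * d : ℕ) : ℤ) * y ^ 2).natAbs = 1 := by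
  have : Fact c.Prime := ⟨hc⟩
  refine nonresidueSign_sq_sub_mul_sq_of_isCoprime (fun x y hcop h0 => ?_) x y hxy
  set W := x ^ 2 - ((c * d : ℕ) : ℤ) * y ^ 2 with hW
  have hsq : ∀ p : ℕ, p.Prime → p ∣ W.natAbs → IsSquare ((c * d : ℕ) : ZMod p) :=
    fun p hp hdvd => by
      have := isSquare_zmod_of_dvd_sub hp hcop (Int.natCast_dvd.mpr hdvd)
      simpa using this
  have hone : ∀ u : ℤ, u ≠ 0 → u.natAbs ∣ W.natAbs → (u : ZMod c) ≠ 0 → IsSquare (u : ZMod c) →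
      nonresidueSign c d u.natAbs = 1 := by
    intro u hu hdvd hu0 husq
    have hu0' : ((u.natAbs : ℤ) : ZMod c) ≠ 0 := by
      rw [Ne, ZMod.intCast_zmod_eq_zero_iff_dvd, Int.dvd_natAbs,
        ← ZMod.intCast_zmod_eq_zero_iff_dvd]
      exact hu0
    have husq' : IsSquare ((u.natAbs : ℤ) : ZMod c) := by
      rcases Int.natAbs_eq u with h | h
      · rwa [← h]
      · have h1 : ((u.natAbs : ℤ) : ZMod c) = -1 * (u : ZMod c) := by
          conv_rhs => rw [h]
          push_cast
          ring
        rw [h1]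
        exact (ZMod.exists_sq_eq_neg_one_iff.mpr (by omega)).mul husq
    rw [nonresidueSign_eq_legendreSym c d (Int.natAbs_ne_zero.mpr hu) fun p hp hpu => ?_,
      (legendreSym.eq_one_iff c hu0').mpr husq', Int.cast_one]
    have hpc : p ≠ c := by
      rintro rfl
      exact hu0' (by rw [ZMod.intCast_zmod_eq_zero_iff_dvd]; exact_mod_cast hpu)
    refine ⟨?_, isSquare_left_or_right_iff hc hd hc8 hd2 hdc0 hdc hp hpc
      (hsq p hp (hpu.trans hdvd))⟩
    rw [Ne, ZMod.natCast_eq_zero_iff, Nat.prime_dvd_prime_iff_eq hc hp]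
    exact hpc.symm
  by_cases hcW : (x : ZMod c) = 0
  · obtain ⟨x', rfl⟩ := (ZMod.intCast_zmod_eq_zero_iff_dvd x c).mp hcW
    have hfac : W = c * (c * x' ^ 2 - d * y ^ 2) := by
      rw [hW]
      push_cast
      ring
    have hu0 : c * x' ^ 2 - d * y ^ 2 ≠ 0 := fun h => h0 (by rw [hfac, h, mul_zero])
    have hy : (y : ZMod c) ≠ 0 := by
      intro hy
      obtain ⟨a, b, hab⟩ := hcop
      have := congrArg (Int.cast : ℤ → ZMod c) hab
      push_cast at this
      rw [hy] at this
      simp at this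
    have hd0 : (d : ZMod c) ≠ 0 := by
      rw [Ne, ZMod.natCast_eq_zero_iff, Nat.prime_dvd_prime_iff_eq hc hd]
      exact hdc0.symm
    have hcast : ((c * x' ^ 2 - d * y ^ 2 : ℤ) : ZMod c) = -1 * (d * (y : ZMod c) ^ 2) := by
      push_cast
      rw [CharP.cast_eq_zero]
      ring
    rw [hfac, Int.natAbs_mul, nonresidueSign_mul, Int.natAbs_natCast,
      hone _ hu0 (by rw [hfac, Int.natAbs_mul]; exact Dvd.intro_left _ rfl) ?_ ?_, mul_one,
      nonresidueSign_prime c d hc, if_pos (Or.inr hdc)]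
    · rw [hcast]
      exact mul_ne_zero (neg_ne_zero.mpr one_ne_zero) (mul_ne_zero hd0 (pow_ne_zero 2 hy))
    · rw [hcast]
      exact (ZMod.exists_sq_eq_neg_one_iff.mpr (by omega)).mul (hdc.mul (IsSquare.sq _))
  · have hcast : (W : ZMod c) = (x : ZMod c) ^ 2 := by
      rw [hW]
      push_cast
      rw [CharP.cast_eq_zero]
      ring
    refine hone W h0 dvd_rfl ?_ ?_
    · rw [hcast]
      exact pow_ne_zero 2 hcW
    · rw [hcast]
      exact IsSquare.sq _

end SignOfForm

section ResidueField

theorem pow_prime_pow_half {M : Type*} [CommMonoid M] {p : ℕ} (hp : Odd p) {a : M}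
    (ha : a ^ (p - 1) = 1) (f : ℕ) : a ^ (p ^ f / 2) = (a ^ (p / 2)) ^ f := by
  induction f with
  | zero => simp
  | succ f ih =>
    obtain ⟨j, hj⟩ := hp.pow (n := f)
    obtain ⟨k, hk⟩ := hp
    have h1 : p ^ (f + 1) / 2 = p * j + k := by
      rw [pow_succ, hj]
      have : (2 * j + 1) * p = 2 * (p * j + k) + 1 := by
        conv_rhs => rw [mul_add, ← mul_assoc, mul_comm 2 p, mul_assoc, add_assoc, ← hk]
        ring
      omega
    have h2 : p ^ f / 2 = j := by omega
    have h3 : p / 2 = k := by omega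
    have h4 : p * j = (p - 1) * j + j := by
      conv_lhs => rw [show p = p - 1 + 1 by omega, add_mul, one_mul]
    rw [h2, h3] at ih
    rw [h1, h3, pow_add, h4, pow_add, pow_mul, ha, one_pow, one_mul, ih, pow_succ]

variable {κ : Type*} [Field κ] [Fintype κ] {p f : ℕ} [Fact p.Prime] [CharP κ p]

theorem isSquare_natCast_iff_legendreSym_pow (hp2 : p ≠ 2) (hcard : Fintype.card κ = p ^ f)
    {m : ℕ} (hm : (m : ZMod p) ≠ 0) : IsSquare (m : κ) ↔ legendreSym p m ^ f = 1 := by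
  have hchar : ringChar κ = p := ringChar.eq κ p
  have hm' : (m : κ) ≠ 0 := by
    rwa [Ne, CharP.cast_eq_zero_iff κ p, ← ZMod.natCast_eq_zero_iff]
  have hpodd : Odd p := (Fact.out : p.Prime).odd_of_ne_two hp2
  have hcast : ∀ i j : ℤ, (i : ZMod p) = j → (i : κ) = j := fun i j h =>
    (CharP.intCast_eq_intCast κ p).mpr ((ZMod.intCast_eq_intCast_iff _ _ _).mp h)
  have hfermat : (m : κ) ^ (p - 1) = 1 := by
    have := hcast ((m : ℤ) ^ (p - 1)) 1 (by push_cast; exact ZMod.pow_card_sub_one_eq_one hm)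
    simpa using this
  have heuler : (m : κ) ^ (p / 2) = (legendreSym p m : ℤ) := by
    have := hcast (legendreSym p m) ((m : ℤ) ^ (p / 2))
      (by rw [legendreSym.eq_pow]; push_cast; rfl)
    rw [this]
    push_cast
    rfl
  rw [FiniteField.isSquare_iff (by rwa [hchar]) hm', hcard, pow_prime_pow_half hpodd hfermat,
    heuler]
  rcases legendreSym.eq_one_or_neg_one p (a := m) (by exact_mod_cast hm) with h | h
  · simp [h]
  · rw [h]
    rcases Nat.even_or_odd f with hf | hf
    · simp [hf.neg_one_pow]
    · have : (-1 : κ) ≠ 1 := Ring.neg_one_ne_one_of_char_ne_two (by rwa [hchar])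
      simp [hf.neg_one_pow, this]

open Classical in
theorem nonresidueSign_prime_pow {c d : ℕ} (hp2 : p ≠ 2) (hcard : Fintype.card κ = p ^ f)
    (hc : (c : ZMod p) ≠ 0) (hd : (d : ZMod p) ≠ 0) :
    nonresidueSign c d (p ^ f) = (if IsSquare (c : κ) then 1 else 0) +
      (if IsSquare (d : κ) then 1 else 0) - (if IsSquare ((c * d : ℕ) : κ) then 1 else 0) := by
  have hcd : ((c * d : ℕ) : ZMod p) ≠ 0 := by
    rw [Nat.cast_mul]
    exact mul_ne_zero hc hd
  have hc' : ((c : ℤ) : ZMod p) ≠ 0 := by exact_mod_cast hc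
  have hd' : ((d : ℤ) : ZMod p) ≠ 0 := by exact_mod_cast hd
  simp only [isSquare_natCast_iff_legendreSym_pow hp2 hcard hc,
    isSquare_natCast_iff_legendreSym_pow hp2 hcard hd,
    isSquare_natCast_iff_legendreSym_pow hp2 hcard hcd]
  rw [nonresidueSign_pow, nonresidueSign_prime c d Fact.out, Nat.cast_mul, legendreSym.mul]
  have hcs := legendreSym.eq_one_iff p hc'
  have hds := legendreSym.eq_one_iff p hd'
  rw [Int.cast_natCast] at hcs hds
  rw [← hcs, ← hds]
  rcases legendreSym.eq_one_or_neg_one p hc' with h1 | h1 <;>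
  rcases legendreSym.eq_one_or_neg_one p hd' with h2 | h2 <;>
  rcases Nat.even_or_odd f with hf | hf <;>
  rw [h1, h2] <;> norm_num [hf.neg_one_pow]

end ResidueField

section Existence

open NumberField IsDedekindDomain

theorem mem_iff_quotient_isSquare {R : Type*} [CommRing R] (P : Ideal R) (m : ℕ) :
    (∃ a, a ^ 2 - (m : R) ∈ P) ↔ IsSquare (m : R ⧸ P) := by
  constructor
  · rintro ⟨a, ha⟩
    refine ⟨Ideal.Quotient.mk P a, ?_⟩
    rw [← sub_eq_zero, ← neg_sub, neg_eq_zero, ← map_natCast (Ideal.Quotient.mk P), ← map_mul,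
      ← map_sub, Ideal.Quotient.eq_zero_iff_mem, ← sq]
    exact ha
  · rintro ⟨r, hr⟩
    obtain ⟨a, rfl⟩ := Ideal.Quotient.mk_surjective r
    refine ⟨a, ?_⟩
    rw [← Ideal.Quotient.eq_zero_iff_mem, map_sub, map_pow, map_natCast, hr, sq, sub_self]

/-- A number field in which `c`, `d` and `c * d` are not squares contains integers whose norm has
nonresidue sign `-1`. -/
theorem exists_nonresidueSign_norm_eq_neg_one {F : Type*} [Field F] [NumberField F] {c d : ℕ}
    (hc : ¬ IsSquare (c : F)) (hd : ¬ IsSquare (d : F)) (hcd : ¬ IsSquare ((c * d : ℕ) : F)) :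
    ∃ γ : 𝓞 F, γ ≠ 0 ∧ nonresidueSign c d (Algebra.norm ℤ γ).natAbs = -1 := by
  classical
  have hcoe : ∀ n : ℕ, ((n : 𝓞 F) : F) = n := fun n => map_natCast _ n
  have hres : ∀ P : HeightOneSpectrum (𝓞 F), 4 * ((c : 𝓞 F) * d) ∉ P.asIdeal →
      nonresidueSign c d (Ideal.absNorm P.asIdeal) =
        (if ∃ a, a ^ 2 - (c : 𝓞 F) ∈ P.asIdeal then 1 else 0) +
        (if ∃ a, a ^ 2 - (d : 𝓞 F) ∈ P.asIdeal then 1 else 0) -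
        (if ∃ a, a ^ 2 - (c : 𝓞 F) * d ∈ P.asIdeal then 1 else 0) := by
    intro P hP
    have := P.isMaximal
    let : Field (𝓞 F ⧸ P.asIdeal) := Ideal.Quotient.field _
    have : Finite (𝓞 F ⧸ P.asIdeal) := Ideal.finiteQuotientOfFreeOfNeBot _ P.ne_bot
    have := Fintype.ofFinite (𝓞 F ⧸ P.asIdeal)
    obtain ⟨p, f, -, hpP, hp, hf⟩ := Ideal.exists_prime_and_absNorm_eq_pow P.asIdeal
    have : Fact p.Prime := ⟨hp⟩
    have : CharP (𝓞 F ⧸ P.asIdeal) p := by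
      refine (CharP.charP_iff_prime_eq_zero hp).mpr ?_
      rw [← map_natCast (Ideal.Quotient.mk P.asIdeal), Ideal.Quotient.eq_zero_iff_mem]
      exact hpP
    have hdvd : ∀ m : ℕ, (m : 𝓞 F) ∉ P.asIdeal → ¬ p ∣ m := fun m hm ⟨n, hn⟩ => hm (by
      rw [hn, Nat.cast_mul]
      exact P.asIdeal.mul_mem_right _ hpP)
    have h4 : ¬ p ∣ 4 * (c * d) := hdvd _ (by push_cast; exact hP)
    have hp2 : p ≠ 2 := by
      rintro rfl
      exact h4 (Dvd.dvd.mul_right (by norm_num) _)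
    have hc0 : (c : ZMod p) ≠ 0 := by
      rw [Ne, ZMod.natCast_eq_zero_iff]
      exact fun h => h4 ((h.mul_right d).mul_left 4)
    have hd0 : (d : ZMod p) ≠ 0 := by
      rw [Ne, ZMod.natCast_eq_zero_iff]
      exact fun h => h4 ((h.mul_left c).mul_left 4)
    have hcard : Fintype.card (𝓞 F ⧸ P.asIdeal) = p ^ f := by
      rw [← hf, Ideal.absNorm_apply, Submodule.cardQuot_apply, Nat.card_eq_fintype_card]
    rw [← Nat.cast_mul]
    simp only [mem_iff_quotient_isSquare]
    rw [hf]
    exact nonresidueSign_prime_pow hp2 hcard hc0 hd0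
  obtain ⟨γ, hγ, h⟩ := exists_absNorm_eq_neg_one (F := F) (nonresidueSign_mul c d)
    (fun m hm => nonresidueSign_eq_or c d hm) (by rwa [hcoe]) (by rwa [hcoe])
    (by rw [← Nat.cast_mul, hcoe]; exact hcd) hres
  exact ⟨γ, hγ, by rwa [Ideal.absNorm_span_singleton] at h⟩

end Existence

section RatSign

variable {c d : ℕ}

/-- The extension of `nonresidueSign` to the rational numbers. -/
noncomputable def ratNonresidueSign (c d : ℕ) (q : ℚ) : ℝ :=
  nonresidueSign c d q.num.natAbs * nonresidueSign c d q.den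

theorem ratNonresidueSign_intCast (z : ℤ) :
    ratNonresidueSign c d z = nonresidueSign c d z.natAbs := by
  simp [ratNonresidueSign]

theorem ratNonresidueSign_div (a : ℤ) {b : ℤ} (hb : b ≠ 0) :
    ratNonresidueSign c d (a / b) = nonresidueSign c d a.natAbs * nonresidueSign c d b.natAbs := by
  set q : ℚ := a / b with hq
  have hb' : (b : ℚ) ≠ 0 := by exact_mod_cast hb
  have h1 : q.num * b = a * q.den := by
    have h2 : (q.num : ℚ) / q.den = a / b := by rw [Rat.num_div_den]
    have hden : (q.den : ℚ) ≠ 0 := by exact_mod_cast q.den_nz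
    rw [div_eq_div_iff hden hb'] at h2
    exact_mod_cast h2
  have h3 := congrArg (fun z : ℤ => nonresidueSign c d z.natAbs) h1
  simp only [Int.natAbs_mul, nonresidueSign_mul, Int.natAbs_natCast] at h3
  have h4 := nonresidueSign_mul_self c d q.den_nz
  have h5 := nonresidueSign_mul_self c d (Int.natAbs_ne_zero.mpr hb)
  rw [ratNonresidueSign]
  linear_combination (nonresidueSign c d q.den * nonresidueSign c d b.natAbs) * h3 -
    (nonresidueSign c d q.num.natAbs * nonresidueSign c d q.den) * h5 +
    (nonresidueSign c d a.natAbs * nonresidueSign c d b.natAbs) * h4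

theorem ratNonresidueSign_mul (p q : ℚ) :
    ratNonresidueSign c d (p * q) = ratNonresidueSign c d p * ratNonresidueSign c d q := by
  have hp : (p.den : ℤ) ≠ 0 := by exact_mod_cast p.den_nz
  have hq : (q.den : ℤ) ≠ 0 := by exact_mod_cast q.den_nz
  have h : p * q = ((p.num * q.num : ℤ) : ℚ) / ((p.den * q.den : ℤ) : ℚ) := by
    conv_lhs => rw [← Rat.num_div_den p, ← Rat.num_div_den q]
    push_cast
    rw [div_mul_div_comm]
  rw [h, ratNonresidueSign_div _ (mul_ne_zero hp hq), Int.natAbs_mul, Int.natAbs_mul,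
    nonresidueSign_mul, nonresidueSign_mul, Int.natAbs_natCast, Int.natAbs_natCast,
    ratNonresidueSign, ratNonresidueSign]
  ring

theorem ratNonresidueSign_mul_self {q : ℚ} (hq : q ≠ 0) :
    ratNonresidueSign c d q * ratNonresidueSign c d q = 1 := by
  have h4 := nonresidueSign_mul_self c d q.den_nz
  have h5 := nonresidueSign_mul_self c d (Int.natAbs_ne_zero.mpr (Rat.num_ne_zero.mpr hq))
  rw [ratNonresidueSign]
  linear_combination (nonresidueSign c d q.num.natAbs * nonresidueSign c d q.num.natAbs) * h4 + h5

theorem ratNonresidueSign_sq_sub_mul_sq {m : ℤ}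
    (h : ∀ x y : ℤ, x ^ 2 - m * y ^ 2 ≠ 0 → nonresidueSign c d (x ^ 2 - m * y ^ 2).natAbs = 1)
    (X Y : ℚ) (hXY : X ^ 2 - m * Y ^ 2 ≠ 0) : ratNonresidueSign c d (X ^ 2 - m * Y ^ 2) = 1 := by
  have hX : (X.den : ℚ) ≠ 0 := by exact_mod_cast X.den_nz
  have hY : (Y.den : ℚ) ≠ 0 := by exact_mod_cast Y.den_nz
  have heq : ((((X.num * Y.den) ^ 2 - m * (Y.num * X.den) ^ 2 : ℤ)) : ℚ) =
      (X ^ 2 - m * Y ^ 2) * ((X.den * Y.den) * (X.den * Y.den)) := by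
    have h1 : (X.num : ℚ) = X * X.den := (Rat.mul_den_eq_num X).symm
    have h2 : (Y.num : ℚ) = Y * Y.den := (Rat.mul_den_eq_num Y).symm
    push_cast
    rw [h1, h2]
    ring
  have hne : (X.num * Y.den) ^ 2 - m * (Y.num * X.den) ^ 2 ≠ 0 := by
    intro h0
    rw [h0, Int.cast_zero] at heq
    have hD := mul_ne_zero hX hY
    exact mul_ne_zero hXY (mul_ne_zero hD hD) heq.symm
  have := congrArg (ratNonresidueSign c d) heq
  rw [ratNonresidueSign_intCast, h _ _ hne, ratNonresidueSign_mul,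
    ratNonresidueSign_mul (X.den * Y.den : ℚ), ratNonresidueSign_mul_self (mul_ne_zero hX hY),
    mul_one] at this
  exact this.symm

end RatSign

section NormDescent

theorem det_sq_sub_smul_sq {A ι : Type*} [CommRing A] [Fintype ι] [DecidableEq ι] (m : A)
    {x y : Matrix ι ι A} (hxy : Commute x y) :
    ∃ X Y : A, (x ^ 2 - m • y ^ 2).det = X ^ 2 - m * Y ^ 2 := by
  let w : QuadraticAlgebra A m 0 := ⟨0, 1⟩
  have hw : w * w = algebraMap A _ m := by ext <;> simp [w, QuadraticAlgebra.algebraMap_eq]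
  let i : A →+* QuadraticAlgebra A m 0 := algebraMap A _
  let D : QuadraticAlgebra A m 0 := (i.mapMatrix x + w • i.mapMatrix y).det
  have hstar : star D = (i.mapMatrix x - w • i.mapMatrix y).det := by
    have h1 : star D = starRingEnd _ D := rfl
    rw [h1, RingHom.map_det]
    congr 1
    ext a b <;> simp [i, w, starRingEnd_apply, QuadraticAlgebra.algebraMap_eq]
  have hprod : (i.mapMatrix x + w • i.mapMatrix y) * (i.mapMatrix x - w • i.mapMatrix y) =
      i.mapMatrix (x ^ 2 - m • y ^ 2) := by
    have h1 : i.mapMatrix y * i.mapMatrix x = i.mapMatrix x * i.mapMatrix y := by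
      rw [← map_mul, ← map_mul, hxy.eq]
    have h2 : i.mapMatrix (m • y ^ 2) = (w * w) • (i.mapMatrix y * i.mapMatrix y) := by
      rw [hw, ← map_mul, ← sq]
      ext a b <;> simp [i]
    rw [map_sub, h2, map_pow, mul_sub, add_mul, add_mul, mul_smul_comm, mul_smul_comm,
      smul_mul_assoc, smul_mul_assoc, smul_smul, h1, sq]
    abel
  refine ⟨D.re, D.im, ?_⟩
  have h3 : i (x ^ 2 - m • y ^ 2).det = i (D.re ^ 2 - m * D.im ^ 2) := by
    rw [RingHom.map_det, ← hprod, Matrix.det_mul, ← hstar]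
    change D * star D = _
    rw [← QuadraticAlgebra.algebraMap_norm_eq_mul_star, QuadraticAlgebra.norm_def]
    congr 1
    ring
  have := congrArg QuadraticAlgebra.re h3
  simpa [i, QuadraticAlgebra.algebraMap_eq] using this

/-- The norm of `x² - m y²` has the form `X² - m Y²`. -/
theorem exists_norm_sq_sub_mul_sq_eq {A B : Type*} [CommRing A] [CommRing B] [Algebra A B]
    [Module.Free A B] [Module.Finite A B] (m : A) (x y : B) :
    ∃ X Y : A, Algebra.norm A (x ^ 2 - algebraMap A B m * y ^ 2) = X ^ 2 - m * Y ^ 2 := by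
  classical
  let b := Module.Free.chooseBasis A B
  obtain ⟨X, Y, h⟩ := det_sq_sub_smul_sq m
    (x := Algebra.leftMulMatrix b x) (y := Algebra.leftMulMatrix b y)
    ((Commute.all x y).map (Algebra.leftMulMatrix b))
  refine ⟨X, Y, ?_⟩
  rw [Algebra.norm_eq_matrix_det b, ← h, map_sub, ← Algebra.smul_def, map_smul, map_pow, map_pow]

end NormDescent

section NormSign

open NumberField

variable {k : Type*} [Field k] [NumberField k] {c d : ℕ}

/-- The sign `ratNonresidueSign` of the absolute norm. -/
noncomputable def normSign (c d : ℕ) (x : k) : ℝ := ratNonresidueSign c d (Algebra.norm ℚ x)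

theorem normSign_mul (x y : k) : normSign c d (x * y) = normSign c d x * normSign c d y := by
  rw [normSign, map_mul, ratNonresidueSign_mul, normSign, normSign]

theorem normSign_sq_sub_mul_sq {m : ℕ}
    (h : ∀ x y : ℤ, x ^ 2 - (m : ℤ) * y ^ 2 ≠ 0 →
      nonresidueSign c d (x ^ 2 - (m : ℤ) * y ^ 2).natAbs = 1)
    (x y : k) (hxy : x ^ 2 - (m : k) * y ^ 2 ≠ 0) : normSign c d (x ^ 2 - (m : k) * y ^ 2) = 1 := by
  obtain ⟨X, Y, hXY⟩ := exists_norm_sq_sub_mul_sq_eq ((m : ℤ) : ℚ) x y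
  have hm : algebraMap ℚ k ((m : ℤ) : ℚ) = m := by simp
  rw [hm] at hXY
  rw [normSign, hXY]
  refine ratNonresidueSign_sq_sub_mul_sq h X Y ?_
  rw [← hXY]
  exact Algebra.norm_ne_zero_iff.mpr hxy

theorem isSquare_or_of_isSquare_quadraticAlgebra {K : Type*} [Field K] [NeZero (2 : K)] {e m : K}
    (h : IsSquare (algebraMap K (QuadraticAlgebra K e 0) m)) : IsSquare m ∨ IsSquare (m * e) := by
  obtain ⟨s, hs⟩ := h
  have hre := congrArg QuadraticAlgebra.re hs
  have him := congrArg QuadraticAlgebra.im hs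
  simp [QuadraticAlgebra.algebraMap_eq] at hre him
  have h0 : s.re = 0 ∨ s.im = 0 := by
    have : 2 * (s.re * s.im) = 0 := by linear_combination -him
    exact mul_eq_zero.mp ((mul_eq_zero.mp this).resolve_left two_ne_zero)
  rcases h0 with h0 | h0
  · right
    refine ⟨e * s.im, ?_⟩
    rw [hre, h0]
    ring
  · left
    refine ⟨s.re, ?_⟩
    rw [hre, h0]
    ring

theorem norm_quadraticAlgebra {A : Type*} [CommRing A] {a b : A} (z : QuadraticAlgebra A a b) :
    Algebra.norm A z = z.norm := by
  rw [← QuadraticAlgebra.det_toLinearMap_eq_norm, Algebra.norm_apply]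
  congr 1

theorem norm_norm_rat {E : Type*} [Field E] [NumberField E] [Algebra k E] (z : E) :
    Algebra.norm ℚ (Algebra.norm k z) = Algebra.norm ℚ z := Algebra.norm_norm

theorem exists_norm_eq_neg_one_of_extension {E : Type*} [Field E] [NumberField E] [Algebra k E]
    (hc : ¬ IsSquare (algebraMap k E c)) (hd : ¬ IsSquare (algebraMap k E d))
    (hcd : ¬ IsSquare (algebraMap k E ((c : k) * d))) :
    ∃ z : E, normSign c d (Algebra.norm k z) = -1 := by
  obtain ⟨γ, -, hγ⟩ := exists_nonresidueSign_norm_eq_neg_one (F := E) (c := c) (d := d)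
    (by rwa [map_natCast] at hc) (by rwa [map_natCast] at hd)
    (by rwa [← Nat.cast_mul, map_natCast] at hcd)
  refine ⟨γ, ?_⟩
  rw [normSign, norm_norm_rat, ← Algebra.coe_norm_int, ratNonresidueSign_intCast, hγ]

theorem exists_normSign_eq_neg_one (hc0 : c ≠ 0) (hc : ¬ IsSquare (c : k)) (hd : ¬ IsSquare (d : k))
    (hcd : ¬ IsSquare ((c : k) * d)) {t : k} (ht : ¬ IsSquare t) (hct : ¬ IsSquare (c * t))
    (hdt : ¬ IsSquare (d * t)) (hcdt : ¬ IsSquare (c * d * t)) :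
    ∃ x y : k, normSign c d (x ^ 2 - c * t * y ^ 2) = -1 := by
  have hc0' : (c : k) ≠ 0 := by exact_mod_cast hc0
  have hcc : ∀ {u : k}, IsSquare (u * ((c : k) * c)) → IsSquare u := fun h =>
    isSquare_left_of_isSquare_mul (mul_ne_zero hc0' hc0') h ⟨c, rfl⟩
  have hfact : Fact (∀ r : k, r ^ 2 ≠ (c : k) * t + 0 * r) := ⟨fun r hr => hct ⟨r, by
    rw [← sq, hr, zero_mul, add_zero]⟩⟩
  have : CharZero (QuadraticAlgebra k (c * t : k) 0) := charZero_of_injective_algebraMap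
    (algebraMap k (QuadraticAlgebra k (c * t : k) 0)).injective
  have : NumberField (QuadraticAlgebra k (c * t : k) 0) :=
    { to_finiteDimensional := Module.Finite.trans k _ }
  obtain ⟨z, hz⟩ := exists_norm_eq_neg_one_of_extension (k := k) (c := c) (d := d)
    (E := QuadraticAlgebra k (c * t : k) 0)
    (fun h => (isSquare_or_of_isSquare_quadraticAlgebra h).elim hc fun h =>
      ht (hcc (by convert h using 1; ring)))
    (fun h => (isSquare_or_of_isSquare_quadraticAlgebra h).elim hd fun h =>
      hcdt (by convert h using 1; ring))
    (fun h => (isSquare_or_of_isSquare_quadraticAlgebra h).elim hcd fun h =>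
      hdt (hcc (by convert h using 1; ring)))
  refine ⟨z.re, z.im, ?_⟩
  rw [norm_quadraticAlgebra, QuadraticAlgebra.norm_def] at hz
  rw [← hz]
  congr 1
  ring

end NormSign

section SmallNormForm

theorem exists_pow_le_lt_pow (n N : ℕ) (hn : n ≠ 0) : ∃ M : ℕ, M ^ n ≤ N ∧ N < (M + 1) ^ n := by
  have h : ∃ M : ℕ, N < (M + 1) ^ n :=
    ⟨N, (Nat.lt_succ_self N).trans_le (Nat.le_self_pow hn _)⟩
  classical
  refine ⟨Nat.find h, ?_, Nat.find_spec h⟩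
  rcases Nat.eq_zero_or_pos (Nat.find h) with h0 | h0
  · rw [h0, zero_pow hn]
    exact Nat.zero_le _
  · have := Nat.find_min h (Nat.sub_lt h0 one_pos)
    rwa [Nat.sub_one_add_one h0.ne', not_lt] at this

/-- A quadratic form `x ^ 2 - m * y ^ 2` that splits modulo an ideal `P` takes at some nonzero
vector a value in `P` of norm bounded by a constant multiple of the index of `P`. -/
theorem exists_sq_sub_mul_sq_mem_norm_le {R ι : Type*} [CommRing R] [Fintype ι] [Nonempty ι]
    (b : Module.Basis ι ℤ R) (m : R) : ∃ C : ℕ, ∀ (P : Ideal R) [Finite (R ⧸ P)] (s : R),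
      s ^ 2 - m ∈ P → ∃ x y : R, (x ≠ 0 ∨ y ≠ 0) ∧ x ^ 2 - m * y ^ 2 ∈ P ∧
        (Algebra.norm ℤ (x ^ 2 - m * y ^ 2)).natAbs ≤ C * Nat.card (R ⧸ P) := by
  classical
  obtain ⟨C₁, hC₁⟩ := inBox_mul b
  obtain ⟨C₂, -, hC₂⟩ := norm_le_of_inBox b
  set A : ℕ := ∑ i, (b.repr m i).natAbs with hA
  have hm : b.InBox A m := fun i => by
    rw [hA, Int.abs_eq_natAbs]
    exact_mod_cast Finset.single_le_sum (f := fun i => (b.repr m i).natAbs)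
      (fun _ _ => Nat.zero_le _) (Finset.mem_univ i)
  refine ⟨C₂ * (C₁ + C₁ * A * C₁) ^ Fintype.card ι, fun P _ s hs => ?_⟩
  obtain ⟨M, hM, hM'⟩ := exists_pow_le_lt_pow (Fintype.card (ι ⊕ ι)) (Nat.card (R ⧸ P))
    Fintype.card_ne_zero
  let q : R →+ R ⧸ P := (Ideal.Quotient.mk P).toAddMonoidHom
  let lin : (ι → ℤ) →+ R := (b.equivFun.symm : (ι → ℤ) →ₗ[ℤ] R).toAddMonoidHom
  let φ : (ι ⊕ ι → ℤ) →+ R ⧸ P :=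
    { toFun := fun v => q (lin (v ∘ Sum.inl) - s * lin (v ∘ Sum.inr))
      map_zero' := by
        have h1 : (0 : ι ⊕ ι → ℤ) ∘ Sum.inl = 0 := rfl
        have h2 : (0 : ι ⊕ ι → ℤ) ∘ Sum.inr = 0 := rfl
        rw [h1, h2, map_zero, mul_zero, sub_zero, map_zero]
      map_add' := fun v w => by
        have h1 : (v + w) ∘ Sum.inl = v ∘ Sum.inl + w ∘ Sum.inl := rfl
        have h2 : (v + w) ∘ Sum.inr = v ∘ Sum.inr + w ∘ Sum.inr := rfl
        rw [h1, h2, map_add lin, map_add lin, ← map_add q]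
        congr 1
        ring }
  obtain ⟨v, hv0, hvM, hv⟩ := exists_small_mem_ker φ M hM'
  have hbox : ∀ w : ι → ℤ, (∀ i, |w i| ≤ M) → b.InBox M (lin w) := fun w hw i => by
    have : b.repr (lin w) i = w i := congrFun (b.equivFun.apply_symm_apply w) i
    rw [this]
    exact hw i
  have hx := hbox (v ∘ Sum.inl) fun i => hvM _
  have hy := hbox (v ∘ Sum.inr) fun i => hvM _
  have hlin : ∀ w : ι → ℤ, lin w = 0 → w = 0 := fun w hw =>
    b.equivFun.symm.injective (hw.trans (map_zero b.equivFun.symm).symm)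
  refine ⟨lin (v ∘ Sum.inl), lin (v ∘ Sum.inr), ?_, ?_, ?_⟩
  · by_contra! h
    refine hv0 (funext fun i => ?_)
    rcases i with i | i
    · exact congrFun (hlin _ h.1) i
    · exact congrFun (hlin _ h.2) i
  · have hmem : lin (v ∘ Sum.inl) - s * lin (v ∘ Sum.inr) ∈ P := Ideal.Quotient.eq_zero_iff_mem.mp hv
    have := P.add_mem (P.mul_mem_left (lin (v ∘ Sum.inl) + s * lin (v ∘ Sum.inr)) hmem)
      (P.mul_mem_left (lin (v ∘ Sum.inr) ^ 2) hs)
    convert this using 1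
    ring
  · have hbx := inBox_sub b (hC₁ _ _ _ _ hx hx) (hC₁ _ _ _ _ hm (hC₁ _ _ _ _ hy hy))
    rw [← sq, ← sq] at hbx
    refine (hC₂ _ _ hbx).trans ?_
    have he : C₁ * M * M + C₁ * A * (C₁ * M * M) = (C₁ + C₁ * A * C₁) * (M * M) := by ring
    rw [he, mul_pow, ← mul_assoc]
    refine Nat.mul_le_mul_left _ (le_trans (le_of_eq ?_) hM)
    rw [Fintype.card_sum, mul_pow, pow_add]

end SmallNormForm

section FiniteIndex

variable {M I : Type*} [AddCommGroup M] (w : I → M →+ ℤ) (S : Set I) (H : AddSubgroup M)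

theorem exists_mem_forall_sub_eq_zero (hfin : ∀ x, {i | w i x ≠ 0}.Finite)
    (hH : ∀ i ∉ S, ∃ h ∈ H, w i h = 1 ∧ ∀ j ∉ S, j ≠ i → w j h = 0) (x : M) :
    ∃ h ∈ H, ∀ j ∉ S, w j (x - h) = 0 := by
  classical
  suffices key : ∀ (T : Finset I) (x : M), (∀ j ∉ S, j ∉ T → w j x = 0) →
      ∃ h ∈ H, ∀ j ∉ S, w j (x - h) = 0 from
    key (hfin x).toFinset x fun j _ hj => by simpa using hj
  intro T
  induction T using Finset.induction_on with
  | empty => exact fun x hx => ⟨0, H.zero_mem, fun j hj => by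
      rw [sub_zero]; exact hx j hj (Finset.notMem_empty j)⟩
  | insert i T _ ih =>
    intro x hx
    by_cases hi : i ∈ S
    · exact ih x fun j hj hjT => hx j hj fun hm =>
        (Finset.mem_insert.mp hm).elim (fun e => hj (e ▸ hi)) hjT
    · obtain ⟨h, hhH, hh1, hh0⟩ := hH i hi
      obtain ⟨h', hh', h0⟩ := ih (x - w i x • h) fun j hj hjT => by
        rw [map_sub, map_zsmul, smul_eq_mul]
        by_cases hji : j = i
        · rw [hji, hh1, mul_one, sub_self]
        · rw [hh0 j hj hji, mul_zero, sub_zero]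
          exact hx j hj fun hm => (Finset.mem_insert.mp hm).elim hji hjT
      refine ⟨w i x • h + h', H.add_mem (H.zsmul_mem hhH _) hh', fun j hj => ?_⟩
      rw [← sub_sub]
      exact h0 j hj

theorem finite_quotient_of_two_nsmul_mem (hS : S.Finite)
    (hfin : ∀ x, {i | w i x ≠ 0}.Finite)
    (hker : (⨅ i, LinearMap.ker (w i).toIntLinearMap).FG)
    (hH : ∀ i ∉ S, ∃ h ∈ H, w i h = 1 ∧ ∀ j ∉ S, j ≠ i → w j h = 0)
    (h2 : ∀ x, 2 • x ∈ H) : Finite (M ⧸ H) := by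
  let V : Submodule ℤ M := ⨅ i ∈ Sᶜ, LinearMap.ker (w i).toIntLinearMap
  have : Finite S := hS
  have hV : V.FG := by
    let f : M →ₗ[ℤ] (S → ℤ) := LinearMap.pi fun i => (w i).toIntLinearMap
    refine Submodule.fg_of_fg_map_of_fg_inf_ker f (IsNoetherian.noetherian _) ?_
    suffices h : V ⊓ LinearMap.ker f = ⨅ i, LinearMap.ker (w i).toIntLinearMap from h ▸ hker
    ext x
    simp only [V, f, Submodule.mem_inf, Submodule.mem_iInf, LinearMap.mem_ker, Set.mem_compl_iff,
      funext_iff, LinearMap.pi_apply, AddMonoidHom.coe_toIntLinearMap, Pi.zero_apply,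
      Subtype.forall]
    exact ⟨fun h i => by_cases (h.2 i) (h.1 i), fun h => ⟨fun i _ => h i, fun i _ => h i⟩⟩
  let q : V →ₗ[ℤ] M ⧸ H := (QuotientAddGroup.mk' H).toIntLinearMap.comp V.subtype
  have hq : Function.Surjective q := by
    intro y
    obtain ⟨x, rfl⟩ := QuotientAddGroup.mk_surjective y
    obtain ⟨h, hh, h0⟩ := exists_mem_forall_sub_eq_zero w S H hfin hH x
    refine ⟨⟨x - h, ?_⟩, ?_⟩
    · simp only [V, Submodule.mem_iInf, LinearMap.mem_ker]
      exact fun i hi => h0 i hi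
    · show QuotientAddGroup.mk (x - h) = QuotientAddGroup.mk x
      rw [QuotientAddGroup.eq]
      simpa using hh
  have : Module.Finite ℤ V := Module.Finite.iff_fg.mpr hV
  have : Module.Finite ℤ (M ⧸ H) := Module.Finite.of_surjective q hq
  refine Module.finite_of_fg_torsion _ fun y => ?_
  obtain ⟨x, rfl⟩ := QuotientAddGroup.mk_surjective y
  refine ⟨⟨2, mem_nonZeroDivisors_of_ne_zero two_ne_zero⟩, ?_⟩
  show (2 : ℤ) • (QuotientAddGroup.mk x : M ⧸ H) = 0
  rw [ofNat_zsmul, ← QuotientAddGroup.mk_nsmul, QuotientAddGroup.eq_zero_iff]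
  exact h2 x

end FiniteIndex

section OrdAt

open NumberField IsDedekindDomain WithZero

variable {k : Type*} [Field k] [NumberField k]

/-- The additive order of vanishing at a prime, as a homomorphism on the additive unit group. -/
noncomputable def ordAt (P : HeightOneSpectrum (𝓞 k)) : Additive kˣ →+ ℤ :=
  -MonoidHom.toAdditiveLeft P.valuationOfNeZero

theorem ordAt_eq_iff (P : HeightOneSpectrum (𝓞 k)) (u : kˣ) (n : ℤ) :
    ordAt P (Additive.ofMul u) = n ↔ P.valuation k (u : k) = exp (-n) := by
  rw [← HeightOneSpectrum.valuationOfNeZero_eq]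
  have h1 : ordAt P (Additive.ofMul u) = -Multiplicative.toAdd (P.valuationOfNeZero u) := rfl
  have h2 : (exp (-n) : WithZero (Multiplicative ℤ)) = (Multiplicative.ofAdd (-n) : Multiplicative ℤ) := rfl
  rw [h1, h2, WithZero.coe_inj, neg_eq_iff_eq_neg]
  exact Iff.rfl

theorem ordAt_eq_zero_iff (P : HeightOneSpectrum (𝓞 k)) (u : kˣ) :
    ordAt P (Additive.ofMul u) = 0 ↔ P.valuation k (u : k) = 1 := by
  rw [ordAt_eq_iff, neg_zero, exp_zero]

theorem finite_setOf_ordAt_ne_zero (x : Additive kˣ) :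
    {P : HeightOneSpectrum (𝓞 k) | ordAt P x ≠ 0}.Finite := by
  refine ((HeightOneSpectrum.Support.finite (𝓞 k) (x.toMul : k)).union
    (HeightOneSpectrum.Support.finite (𝓞 k) ((x.toMul : k)⁻¹))).subset fun P hP => ?_
  have hne : P.valuation k (x.toMul : k) ≠ 1 := fun h => hP ((ordAt_eq_zero_iff P x.toMul).mpr h)
  rcases lt_or_gt_of_ne hne with h | h
  · right
    show 1 < P.valuation k (x.toMul : k)⁻¹
    rw [map_inv₀]
    exact (one_lt_inv₀ ((Valuation.pos_iff _).mpr x.toMul.ne_zero)).mpr h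
  · exact Or.inl h

theorem fg_iInf_ker_ordAt :
    (⨅ P : HeightOneSpectrum (𝓞 k), LinearMap.ker (ordAt P).toIntLinearMap).FG := by
  let f : Additive (𝓞 k)ˣ →ₗ[ℤ] Additive kˣ :=
    (Units.map (algebraMap (𝓞 k) k : 𝓞 k →* k)).toAdditive.toIntLinearMap
  suffices h : LinearMap.range f = ⨅ P : HeightOneSpectrum (𝓞 k),
      LinearMap.ker (ordAt P).toIntLinearMap from h ▸ Submodule.FG.of_finite
  ext x
  simp only [Submodule.mem_iInf, LinearMap.mem_ker, LinearMap.mem_range,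
    AddMonoidHom.coe_toIntLinearMap]
  constructor
  · rintro ⟨u, rfl⟩ P
    have := P.valuation_of_unit_eq (K := k) u.toMul
    show -Multiplicative.toAdd (P.valuationOfNeZero (Units.map _ u.toMul)) = 0
    rw [this, toAdd_one, neg_zero]
  · intro hx
    have h1 : ∀ P : HeightOneSpectrum (𝓞 k), P.valuation k (x.toMul : k) = 1 := fun P =>
      (ordAt_eq_zero_iff P x.toMul).mp (hx P)
    obtain ⟨a, ha⟩ := HeightOneSpectrum.mem_integers_of_valuation_le_one k (x.toMul : k)
      fun P => (h1 P).le
    obtain ⟨b, hb⟩ := HeightOneSpectrum.mem_integers_of_valuation_le_one k ((x.toMul : k)⁻¹)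
      fun P => by rw [map_inv₀, h1 P, inv_one]
    have hab : a * b = 1 := by
      apply FaithfulSMul.algebraMap_injective (𝓞 k) k
      rw [map_mul, ha, hb, map_one, mul_inv_cancel₀ x.toMul.ne_zero]
    refine ⟨Additive.ofMul ⟨a, b, hab, by rw [mul_comm, hab]⟩, ?_⟩
    exact Additive.toMul.injective (Units.ext ha)

theorem ordAt_eq_of_mem_of_norm_le {C : ℕ} {P : HeightOneSpectrum (𝓞 k)}
    (hP : C < Ideal.absNorm P.asIdeal) {h : 𝓞 k} (hmem : h ∈ P.asIdeal)
    (hN : (Algebra.norm ℤ h).natAbs ≤ C * Ideal.absNorm P.asIdeal) {u : kˣ} (hu : (u : k) = h) :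
    ordAt P (Additive.ofMul u) = 1 ∧ ∀ Q : HeightOneSpectrum (𝓞 k),
      C < Ideal.absNorm Q.asIdeal → Q ≠ P → ordAt Q (Additive.ofMul u) = 0 := by
  have h0 : h ≠ 0 := by
    rintro rfl
    exact u.ne_zero (hu.trans (map_zero (algebraMap (𝓞 k) k)))
  obtain ⟨J, hJ⟩ := Ideal.dvd_span_singleton.mpr hmem
  have hJ0 : J ≠ 0 := by
    rintro rfl
    rw [mul_zero, Ideal.zero_eq_bot, Ideal.span_singleton_eq_bot] at hJ
    exact h0 hJ
  have hJpos : 0 < Ideal.absNorm J := Nat.pos_of_ne_zero fun hz => hJ0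
    (by rw [Ideal.absNorm_eq_zero_iff] at hz; exact hz)
  have hJC : Ideal.absNorm J ≤ C := by
    rw [← Ideal.absNorm_span_singleton, hJ, map_mul, mul_comm C] at hN
    exact Nat.le_of_mul_le_mul_left hN ((Nat.zero_le _).trans_lt hP)
  have hdvd : ∀ Q : HeightOneSpectrum (𝓞 k), C < Ideal.absNorm Q.asIdeal → ¬ Q.asIdeal ∣ J :=
    fun Q hQ hd => (hQ.trans_le ((Nat.le_of_dvd hJpos (map_dvd Ideal.absNorm hd)).trans hJC)).false
  have huval : ∀ Q : HeightOneSpectrum (𝓞 k), Q.valuation k (u : k) = Q.intValuation h := fun Q => by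
    rw [hu]
    exact Q.valuation_of_algebraMap h
  refine ⟨?_, fun Q hQ hQP => ?_⟩
  · rw [ordAt_eq_iff, huval]
    refine le_antisymm ?_ ?_
    · have := (P.intValuation_le_pow_iff_mem h 1).mpr (by rwa [pow_one])
      simpa using this
    · have h2 : ¬ P.intValuation h ≤ exp (-((2 : ℕ) : ℤ)) := by
        rw [P.intValuation_le_pow_iff_dvd, hJ, sq]
        exact fun hd => hdvd P hP ((mul_dvd_mul_iff_left P.ne_bot).mp hd)
      rw [not_le] at h2
      have h3 := (P.intValuation_eq_exp_neg_multiplicity h0)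
      rw [h3, exp_lt_exp] at h2
      rw [h3, exp_le_exp]
      omega
  · rw [ordAt_eq_zero_iff, hu]
    refine (HeightOneSpectrum.valuation_eq_one_iff_notMem Q).mpr fun hm => ?_
    have := Ideal.dvd_span_singleton.mpr hm
    rw [hJ] at this
    rcases (Q.prime.dvd_or_dvd this) with h | h
    · refine hQP (HeightOneSpectrum.ext ?_)
      exact ((P.isMaximal.eq_of_le Q.isPrime.ne_top (Ideal.le_of_dvd h))).symm
    · exact hdvd Q hQ h

theorem finite_quotient_of_ordAt {S : Set (HeightOneSpectrum (𝓞 k))} (hS : S.Finite)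
    (H : AddSubgroup (Additive kˣ))
    (hH : ∀ P ∉ S, ∃ h ∈ H, ordAt P h = 1 ∧ ∀ Q ∉ S, Q ≠ P → ordAt Q h = 0)
    (h2 : ∀ x, 2 • x ∈ H) : Finite (Additive kˣ ⧸ H) :=
  finite_quotient_of_two_nsmul_mem (I := HeightOneSpectrum (𝓞 k)) (M := Additive kˣ) ordAt S H hS
    finite_setOf_ordAt_ne_zero fg_iInf_ker_ordAt hH h2

end OrdAt

section NormForm

/-- The nonzero values of the form `x ^ 2 - m * y ^ 2`, as a group of units. -/
def normFormSubgroup {K : Type*} [Field K] (m : K) : Subgroup Kˣ where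
  carrier := {u | ∃ x y : K, (u : K) = x ^ 2 - m * y ^ 2}
  one_mem' := ⟨1, 0, by simp⟩
  mul_mem' := by
    rintro a b ⟨x, y, h⟩ ⟨z, w, h'⟩
    refine ⟨x * z + m * y * w, x * w + y * z, ?_⟩
    rw [Units.val_mul, h, h']
    ring
  inv_mem' := by
    rintro a ⟨x, y, h⟩
    refine ⟨x * (a : K)⁻¹, y * (a : K)⁻¹, ?_⟩
    have ha : (a : K) ≠ 0 := a.ne_zero
    rw [Units.val_inv_eq_inv_val]
    field_simp
    rw [h]

theorem mem_normFormSubgroup {K : Type*} [Field K] {m : K} {u : Kˣ} :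
    u ∈ normFormSubgroup m ↔ ∃ x y : K, (u : K) = x ^ 2 - m * y ^ 2 := Iff.rfl

theorem isSquare_or_isSquare_or_isSquare_mul {F : Type*} [Field F] [Finite F] (a b : F) :
    IsSquare a ∨ IsSquare b ∨ IsSquare (a * b) := by
  classical
  have := Fintype.ofFinite F
  by_cases h2 : ringChar F = 2
  · exact Or.inl (FiniteField.isSquare_of_char_two h2 a)
  by_cases ha : a = 0
  · exact Or.inl (ha ▸ IsSquare.zero)
  by_cases hb : b = 0
  · exact Or.inr (Or.inl (hb ▸ IsSquare.zero))
  rw [← quadraticChar_one_iff_isSquare ha, ← quadraticChar_one_iff_isSquare hb,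
    ← quadraticChar_one_iff_isSquare (mul_ne_zero ha hb), map_mul]
  rcases quadraticChar_dichotomy ha with h | h <;> rcases quadraticChar_dichotomy hb with h' | h' <;>
    simp [h, h']

open NumberField IsDedekindDomain

variable {k : Type*} [Field k] [NumberField k]

theorem exists_normForm_mem_norm_le {m : ℕ} (hm : ¬ IsSquare (m : k)) :
    ∃ C : ℕ, ∀ P : HeightOneSpectrum (𝓞 k), IsSquare (m : 𝓞 k ⧸ P.asIdeal) →
      ∃ h : 𝓞 k, h ∈ P.asIdeal ∧ (Algebra.norm ℤ h).natAbs ≤ C * Ideal.absNorm P.asIdeal ∧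
        ∃ u ∈ normFormSubgroup (m : k), (u : k) = h := by
  have : Nonempty (Module.Free.ChooseBasisIndex ℤ (𝓞 k)) :=
    (Module.Free.chooseBasis ℤ (𝓞 k)).index_nonempty
  obtain ⟨C, hC⟩ := exists_sq_sub_mul_sq_mem_norm_le (Module.Free.chooseBasis ℤ (𝓞 k)) (m : 𝓞 k)
  refine ⟨C, fun P hP => ?_⟩
  have : Finite (𝓞 k ⧸ P.asIdeal) := Ideal.finiteQuotientOfFreeOfNeBot _ P.ne_bot
  obtain ⟨s, hs⟩ := (mem_iff_quotient_isSquare P.asIdeal m).mpr hP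
  obtain ⟨x, y, hxy, hmem, hN⟩ := hC P.asIdeal s hs
  have hcoe : ((x ^ 2 - (m : 𝓞 k) * y ^ 2 : 𝓞 k) : k) = (x : k) ^ 2 - (m : k) * (y : k) ^ 2 := by
    push_cast
    rfl
  have hne : (x : k) ^ 2 - (m : k) * (y : k) ^ 2 ≠ 0 := by
    intro h0
    by_cases hy : y = 0
    · rw [hy] at h0 hxy
      refine hxy.elim (fun hx => hx ?_) fun h => h rfl
      apply FaithfulSMul.algebraMap_injective (𝓞 k) k
      rw [map_zero]
      simpa using h0
    · have hy' : (y : k) ≠ 0 := fun h => hy (by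
        apply FaithfulSMul.algebraMap_injective (𝓞 k) k
        rw [map_zero]
        exact h)
      refine hm ⟨x / y, ?_⟩
      field_simp
      linear_combination -h0
  refine ⟨x ^ 2 - m * y ^ 2, hmem, ?_, Units.mk0 _ hne, ⟨x, y, rfl⟩, hcoe.symm⟩
  rwa [Ideal.absNorm_apply, Submodule.cardQuot_apply]

/-- The nonzero values of the three norm forms attached to `c`, `d` and `c * d` generate a
subgroup of finite index. -/
theorem exists_finset_mul_mem_sup {c d : ℕ} (hc : ¬ IsSquare (c : k)) (hd : ¬ IsSquare (d : k))
    (hcd : ¬ IsSquare ((c * d : ℕ) : k)) : ∃ Γ : Finset kˣ, ∀ v : kˣ, ∃ g ∈ Γ, g⁻¹ * v ∈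
      normFormSubgroup (c : k) ⊔ normFormSubgroup (d : k) ⊔ normFormSubgroup ((c * d : ℕ) : k) := by
  classical
  set H := normFormSubgroup (c : k) ⊔ normFormSubgroup (d : k) ⊔
    normFormSubgroup ((c * d : ℕ) : k) with hHdef
  have hHc : normFormSubgroup (c : k) ≤ H := le_sup_left.trans le_sup_left
  have hHd : normFormSubgroup (d : k) ≤ H := le_sup_right.trans le_sup_left
  have hHcd : normFormSubgroup ((c * d : ℕ) : k) ≤ H := le_sup_right
  obtain ⟨C₁, h₁⟩ := exists_normForm_mem_norm_le hc
  obtain ⟨C₂, h₂⟩ := exists_normForm_mem_norm_le hd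
  obtain ⟨C₃, h₃⟩ := exists_normForm_mem_norm_le hcd
  set C := C₁ + C₂ + C₃ with hCdef
  have key : ∀ P : HeightOneSpectrum (𝓞 k), ∃ h : 𝓞 k, h ∈ P.asIdeal ∧
      (Algebra.norm ℤ h).natAbs ≤ C * Ideal.absNorm P.asIdeal ∧ ∃ u ∈ H, (u : k) = h := by
    intro P
    have := P.isMaximal
    let : Field (𝓞 k ⧸ P.asIdeal) := Ideal.Quotient.field _
    have : Finite (𝓞 k ⧸ P.asIdeal) := Ideal.finiteQuotientOfFreeOfNeBot _ P.ne_bot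
    rcases isSquare_or_isSquare_or_isSquare_mul (c : 𝓞 k ⧸ P.asIdeal) d with h | h | h
    · obtain ⟨x, hx, hN, u, hu, hux⟩ := h₁ P h
      exact ⟨x, hx, hN.trans (Nat.mul_le_mul_right _ (by omega)), u, hHc hu, hux⟩
    · obtain ⟨x, hx, hN, u, hu, hux⟩ := h₂ P h
      exact ⟨x, hx, hN.trans (Nat.mul_le_mul_right _ (by omega)), u, hHd hu, hux⟩
    · obtain ⟨x, hx, hN, u, hu, hux⟩ := h₃ P (by rw [Nat.cast_mul]; exact h)
      exact ⟨x, hx, hN.trans (Nat.mul_le_mul_right _ (by omega)), u, hHcd hu, hux⟩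
  have hS : {P : HeightOneSpectrum (𝓞 k) | Ideal.absNorm P.asIdeal ≤ C}.Finite :=
    Set.Finite.preimage (f := fun P : HeightOneSpectrum (𝓞 k) => P.asIdeal)
      (fun _ _ _ _ h => HeightOneSpectrum.ext h) (Ideal.finite_setOfPred_absNorm_le C)
  have hfin : Finite (Additive kˣ ⧸ Subgroup.toAddSubgroup H) := by
    refine finite_quotient_of_ordAt hS (Subgroup.toAddSubgroup H) (fun P hP => ?_) fun x => ?_
    · obtain ⟨h, hmem, hN, u, hu, huh⟩ := key P
      obtain ⟨e1, e2⟩ := ordAt_eq_of_mem_of_norm_le (not_le.mp hP) hmem hN huh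
      exact ⟨Additive.ofMul u, hu, e1, fun Q hQ => e2 Q (not_le.mp hQ)⟩
    · refine hHc (show x.toMul ^ 2 ∈ normFormSubgroup (c : k) from ⟨(x.toMul : k), 0, ?_⟩)
      simp
  have := Fintype.ofFinite (Additive kˣ ⧸ Subgroup.toAddSubgroup H)
  refine ⟨Finset.univ.image fun q : Additive kˣ ⧸ Subgroup.toAddSubgroup H =>
    (Quotient.out q).toMul, fun v => ⟨_, Finset.mem_image_of_mem _ (Finset.mem_univ
      (QuotientAddGroup.mk (Additive.ofMul v))), ?_⟩⟩
  exact QuotientAddGroup.eq.mp (Quotient.out_eq (QuotientAddGroup.mk (Additive.ofMul v) :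
    Additive kˣ ⧸ Subgroup.toAddSubgroup H))

end NormForm

section Choice

theorem exists_eq_add_mul_of_mem_adjoin {F E : Type*} [Field F] [Field E] [Algebra F E] {s : E}
    {m : F} (hs : s * s = algebraMap F E m) {z : E} (hz : z ∈ IntermediateField.adjoin F {s}) :
    ∃ x y : F, z = algebraMap F E x + algebraMap F E y * s := by
  have hInt : IsIntegral F s := by
    refine IsIntegral.of_pow two_pos ?_
    rw [sq, hs]
    exact isIntegral_algebraMap
  rw [← IntermediateField.mem_toSubalgebra,
    IntermediateField.adjoin_simple_toSubalgebra_of_isAlgebraic hInt.isAlgebraic] at hz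
  induction hz using Algebra.adjoin_induction with
  | mem x hx => exact ⟨0, 1, by rw [Set.mem_singleton_iff.mp hx]; simp⟩
  | algebraMap r => exact ⟨r, 0, by simp⟩
  | add a b _ _ ha hb =>
    obtain ⟨x, y, rfl⟩ := ha
    obtain ⟨z, w, rfl⟩ := hb
    exact ⟨x + z, y + w, by simp only [map_add]; ring⟩
  | mul a b _ _ ha hb =>
    obtain ⟨x, y, rfl⟩ := ha
    obtain ⟨z, w, rfl⟩ := hb
    refine ⟨x * z + m * y * w, x * w + y * z, ?_⟩
    simp only [map_add, map_mul, ← hs]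
    ring

theorem isSquare_mul_of_adjoin_eq {F E : Type*} [Field F] [NeZero (2 : F)] [Field E] [Algebra F E]
    {s t : E} {m n : F} (hs : s * s = algebraMap F E m) (ht : t * t = algebraMap F E n)
    (hm : ¬ IsSquare m) (hn : ¬ IsSquare n)
    (h : IntermediateField.adjoin F {s} = IntermediateField.adjoin F {t}) : IsSquare (m * n) := by
  have hmem : t ∈ IntermediateField.adjoin F {s} := h ▸ IntermediateField.mem_adjoin_simple_self F t
  obtain ⟨x, y, rfl⟩ := exists_eq_add_mul_of_mem_adjoin hs hmem
  have hinj := (algebraMap F E).injective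
  have key : algebraMap F E (2 * x * y) * s = algebraMap F E (n - x ^ 2 - y ^ 2 * m) := by
    simp only [map_sub, map_mul, map_pow, ← ht, ← hs, map_ofNat]
    ring
  have hxy : 2 * x * y = 0 := by
    by_contra h0
    refine hm ⟨(n - x ^ 2 - y ^ 2 * m) / (2 * x * y), hinj ?_⟩
    have h0' : algebraMap F E (2 * x * y) ≠ 0 := fun h1 => h0 (hinj (h1.trans (map_zero _).symm))
    rw [map_mul, map_div₀, ← key, mul_div_cancel_left₀ _ h0', hs]
  have hn' : n = x ^ 2 + y ^ 2 * m := by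
    rw [hxy, map_zero, zero_mul] at key
    have := hinj (key.symm.trans (map_zero _).symm)
    linear_combination this
  rcases mul_eq_zero.mp hxy with h0 | h0
  · have hx : x = 0 := (mul_eq_zero.mp h0).resolve_left two_ne_zero
    exact ⟨y * m, by rw [hn', hx]; ring⟩
  · exact absurd ⟨x, by rw [hn', h0]; ring⟩ hn

theorem not_isSquare_mul_of_not_dvd {p b : ℕ} (hp : p.Prime) (hb : ¬ p ∣ b) :
    ¬ IsSquare (b * p) := by
  rintro ⟨r, hr⟩
  have hpr : p ∣ r := by
    have : p ∣ r * r := hr ▸ dvd_mul_left p b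
    exact (hp.dvd_mul.mp this).elim id id
  obtain ⟨t, rfl⟩ := hpr
  refine hb ⟨t * t, ?_⟩
  refine Nat.eq_of_mul_eq_mul_right hp.pos ?_
  rw [hr]
  ring

theorem not_isSquare_ratCast {n : ℕ} (h : ¬ IsSquare n) : ¬ IsSquare (n : ℚ) := by
  rwa [Rat.isSquare_natCast_iff]

variable (k : Type*) [Field k] [NumberField k]

/-- Only finitely many quadratic fields embed in a number field. -/
theorem finite_setOf_prime_isSquare_mul (a : ℕ) :
    {p : ℕ | p.Prime ∧ ¬ p ∣ a ∧ IsSquare ((a * p : ℕ) : k)}.Finite := by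
  have : Finite (IntermediateField ℚ k) :=
    Field.finite_intermediateField_of_exists_primitive_element ℚ k (Field.exists_primitive_element ℚ k)
  have hroot : ∀ p ∈ {p : ℕ | p.Prime ∧ ¬ p ∣ a ∧ IsSquare ((a * p : ℕ) : k)},
      ∃ s : k, s * s = algebraMap ℚ k ((a * p : ℕ) : ℚ) := by
    rintro p ⟨-, -, s, hs⟩
    exact ⟨s, by rw [← hs, map_natCast]⟩
  choose! s hs using hroot
  refine Set.Finite.of_injOn (f := fun p => IntermediateField.adjoin ℚ {s p}) (Set.mapsTo_univ _ _)
    (fun p hp q hq hpq => ?_) Set.finite_univ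
  have h := isSquare_mul_of_adjoin_eq (hs p hp) (hs q hq)
    (not_isSquare_ratCast (not_isSquare_mul_of_not_dvd hp.1 hp.2.1))
    (not_isSquare_ratCast (not_isSquare_mul_of_not_dvd hq.1 hq.2.1)) hpq
  by_contra hne
  refine not_isSquare_ratCast (not_isSquare_mul_of_not_dvd hq.1 (b := a * p * a) ?_) ?_
  · rw [hq.1.dvd_mul, hq.1.dvd_mul, not_or, not_or, Nat.prime_dvd_prime_iff_eq hq.1 hp.1]
    exact ⟨⟨hq.2.1, fun h => hne h.symm⟩, hq.2.1⟩
  · rw [← Nat.cast_mul] at h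
    rwa [← show a * p * (a * q) = a * p * a * q by ring]

/-- There are primes `c`, `d` with `c ≡ 1 mod 8` and `d` a residue modulo `c` such that `c`, `d`
and `c * d` are nonsquares in `k`. -/
theorem exists_primes_not_isSquare : ∃ c d : ℕ, c.Prime ∧ d.Prime ∧ c % 8 = 1 ∧ d ≠ 2 ∧ d ≠ c ∧
    IsSquare (d : ZMod c) ∧ ¬ IsSquare (c : k) ∧ ¬ IsSquare (d : k) ∧
      ¬ IsSquare ((c * d : ℕ) : k) := by
  have hB := finite_setOf_prime_isSquare_mul k 1
  obtain ⟨c, ⟨hc, hc8⟩, hcB⟩ := ((Nat.infinite_setOfPred_prime_and_eq_mod (q := 8) (a := 1)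
    isUnit_one).sdiff hB).nonempty
  have : NeZero c := ⟨hc.ne_zero⟩
  obtain ⟨d, ⟨hd, hdc⟩, hdB⟩ := ((Nat.infinite_setOfPred_prime_and_eq_mod (q := c) (a := 1)
    isUnit_one).sdiff ((hB.union (finite_setOf_prime_isSquare_mul k c)).union
      (Set.toFinite {2, c}))).nonempty
  simp only [Set.mem_union, Set.mem_insert_iff, Set.mem_singleton_iff, not_or] at hdB
  have hnd : ∀ p : ℕ, p.Prime → ¬ p ∣ 1 := fun p hp h => hp.one_lt.ne' (Nat.dvd_one.mp h)
  refine ⟨c, d, hc, hd, ?_, hdB.2.1, hdB.2.2, ⟨1, by rw [hdc, mul_one]⟩,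
    fun h => hcB ⟨hc, hnd c hc, by rwa [one_mul]⟩,
    fun h => hdB.1.1 ⟨hd, hnd d hd, by rwa [one_mul]⟩,
    fun h => hdB.1.2 ⟨hd, fun hdvd => hdB.2.2 ((Nat.prime_dvd_prime_iff_eq hd hc).mp hdvd), h⟩⟩
  have := (ZMod.natCast_eq_natCast_iff' c 1 8).mp (by rw [hc8, Nat.cast_one])
  simpa using this

end Choice

section Diophantine

open MvPolynomial

/-- The value `t` at `none` together with the values `b` at the remaining variables. -/
def optionVals {K σ : Type*} (t : K) (b : σ → K) (o : Option σ) : K := o.elim t b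

variable {K : Type*} [Field K]

/-- A diophantine description of a set of field elements with variables and equations indexed by
arbitrary finite types, the parameter being the variable `none`. -/
structure HasDiophantineDescription (A : Set K) : Prop where
  exists_system : ∃ (σ ι : Type) (_ : Finite σ) (_ : Finite ι) (f : ι → MvPolynomial (Option σ) K),
    ∀ t, t ∈ A ↔ ∃ b : σ → K, ∀ i, eval (optionVals t b) (f i) = 0

namespace HasDiophantineDescription

theorem isDiophantineSet {A : Set K} (h : HasDiophantineDescription A) : IsDiophantineSet K A := by
  obtain ⟨σ, ι, _, _, f, hf⟩ := h.exists_system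
  have := Fintype.ofFinite σ
  have := Fintype.ofFinite ι
  let e := Fintype.equivFin σ
  let e' := Fintype.equivFin ι
  let r : Option σ → Fin (1 + Fintype.card σ) := fun o =>
    o.elim (Fin.castAdd _ 0) fun s => Fin.natAdd 1 (e s)
  have hr : ∀ (a : Fin 1 → K) (b : Fin (Fintype.card σ) → K),
      Fin.append a b ∘ r = optionVals (a 0) (b ∘ e) := by
    intro a b
    funext o
    rcases o with - | s
    · exact Fin.append_left a b 0
    · exact Fin.append_right a b (e s)
  refine ⟨Fintype.card σ, Fintype.card ι, fun i => rename r (f (e'.symm i)), Set.ext fun a => ?_⟩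
  simp only [eval_rename, hr]
  refine (hf (a 0)).trans ⟨fun ⟨b, hb⟩ => ⟨b ∘ e.symm, fun i => ?_⟩, fun ⟨b, hb⟩ =>
    ⟨b ∘ e, fun i => ?_⟩⟩
  · rw [Function.comp_assoc, Equiv.symm_comp_self, Function.comp_id]
    exact hb _
  · have := hb (e' i)
    rwa [e'.symm_apply_apply] at this

theorem empty : HasDiophantineDescription (∅ : Set K) :=
  ⟨PEmpty, PUnit, inferInstance, inferInstance, fun _ => 1, fun t => by simp⟩

theorem union {A B : Set K} (hA : HasDiophantineDescription A)
    (hB : HasDiophantineDescription B) : HasDiophantineDescription (A ∪ B) := by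
  obtain ⟨σ, ι, _, _, f, hf⟩ := hA.exists_system
  obtain ⟨τ, κ, _, _, g, hg⟩ := hB.exists_system
  have hl : ∀ (t : K) (b : σ ⊕ τ → K),
      optionVals t b ∘ Option.map Sum.inl = optionVals t (b ∘ Sum.inl) := fun t b => by
    funext o
    cases o <;> rfl
  have hr : ∀ (t : K) (b : σ ⊕ τ → K),
      optionVals t b ∘ Option.map Sum.inr = optionVals t (b ∘ Sum.inr) := fun t b => by
    funext o
    cases o <;> rfl
  refine ⟨σ ⊕ τ, ι × κ, inferInstance, inferInstance,
    fun i => rename (Option.map Sum.inl) (f i.1) * rename (Option.map Sum.inr) (g i.2),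
    fun t => ?_⟩
  simp only [map_mul, eval_rename, hl, hr, mul_eq_zero, Set.mem_union, hf, hg]
  constructor
  · rintro (⟨b, hb⟩ | ⟨b, hb⟩)
    · exact ⟨Sum.elim b 0, fun i => Or.inl (hb i.1)⟩
    · exact ⟨Sum.elim 0 b, fun i => Or.inr (hb i.2)⟩
  · rintro ⟨b, hb⟩
    by_contra! h
    obtain ⟨i, hi⟩ := h.1 (b ∘ Sum.inl)
    obtain ⟨j, hj⟩ := h.2 (b ∘ Sum.inr)
    exact (hb (i, j)).elim hi hj

theorem biUnion {α : Type*} (s : Finset α) (A : α → Set K)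
    (h : ∀ a ∈ s, HasDiophantineDescription (A a)) :
    HasDiophantineDescription (⋃ a ∈ s, A a) := by
  classical
  induction s using Finset.induction_on with
  | empty => simpa using empty
  | insert a s _ ih =>
    rw [Finset.set_biUnion_insert]
    exact (h a (Finset.mem_insert_self a s)).union
      (ih fun b hb => h b (Finset.mem_insert_of_mem hb))

theorem mul_sq (m : K) : HasDiophantineDescription {t : K | ∃ y z, y * z = 1 ∧ t = m * y ^ 2} := by
  refine ⟨Fin 2, Fin 2, inferInstance, inferInstance,
    ![X (some 0) * X (some 1) - 1, X none - C m * X (some 0) ^ 2], fun t => ?_⟩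
  simp only [Fin.forall_fin_two, Matrix.cons_val_zero, Matrix.cons_val_one, map_sub, map_mul,
    map_pow, map_one, eval_X, eval_C, sub_eq_zero]
  exact ⟨fun ⟨y, z, h⟩ => ⟨![y, z], h⟩, fun ⟨b, h⟩ => ⟨b 0, b 1, h⟩⟩

theorem normForm (g l m n e : K) : HasDiophantineDescription {t : K | ∃ x y u₁ v₁ u₂ v₂ u₃ v₃ z,
    (x ^ 2 - e * t * y ^ 2) * z = 1 ∧ x ^ 2 - e * t * y ^ 2 =
      g * ((u₁ ^ 2 - l * v₁ ^ 2) * (u₂ ^ 2 - m * v₂ ^ 2) * (u₃ ^ 2 - n * v₃ ^ 2))} := by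
  refine ⟨Fin 9, Fin 2, inferInstance, inferInstance,
    ![(X (some 0) ^ 2 - C e * X none * X (some 1) ^ 2) * X (some 8) - 1,
      (X (some 0) ^ 2 - C e * X none * X (some 1) ^ 2) - C g *
        ((X (some 2) ^ 2 - C l * X (some 3) ^ 2) * (X (some 4) ^ 2 - C m * X (some 5) ^ 2) *
          (X (some 6) ^ 2 - C n * X (some 7) ^ 2))], fun t => ?_⟩
  simp only [Fin.forall_fin_two, Matrix.cons_val_zero, Matrix.cons_val_one, map_sub, map_mul,
    map_pow, map_one, eval_X, eval_C, sub_eq_zero]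
  exact ⟨fun ⟨x, y, u₁, v₁, u₂, v₂, u₃, v₃, z, h⟩ => ⟨![x, y, u₁, v₁, u₂, v₂, u₃, v₃, z], h⟩,
    fun ⟨b, h⟩ => ⟨b 0, b 1, b 2, b 3, b 4, b 5, b 6, b 7, b 8, h⟩⟩

end HasDiophantineDescription

end Diophantine

section Main

variable {k : Type*} [Field k] [NumberField k] {c d : ℕ}

theorem normSign_zero : normSign c d (0 : k) = 0 := by
  rw [normSign, Algebra.norm_zero, ← Int.cast_zero, ratNonresidueSign_intCast, Int.natAbs_zero,
    nonresidueSign_zero]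

/-- A nonzero nonsquare `t` lies in one of the square classes of `c`, `d`, `c * d`, or the form
`x ^ 2 - c * t * y ^ 2` represents an element of norm sign `-1`; norm forms identify the latter up
to finitely many classes. -/
theorem ne_zero_and_not_isSquare_iff (hc0 : c ≠ 0) (hd0 : d ≠ 0) (hc : ¬ IsSquare (c : k))
    (hd : ¬ IsSquare (d : k)) (hcd : ¬ IsSquare ((c * d : ℕ) : k))
    (hsc : ∀ x y : k, x ^ 2 - (c : k) * y ^ 2 ≠ 0 → normSign c d (x ^ 2 - (c : k) * y ^ 2) = 1)
    (hsd : ∀ x y : k, x ^ 2 - (d : k) * y ^ 2 ≠ 0 → normSign c d (x ^ 2 - (d : k) * y ^ 2) = 1)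
    (hscd : ∀ x y : k, x ^ 2 - ((c * d : ℕ) : k) * y ^ 2 ≠ 0 →
      normSign c d (x ^ 2 - ((c * d : ℕ) : k) * y ^ 2) = 1)
    {Γ : Finset kˣ} (hΓ : ∀ v : kˣ, ∃ g ∈ Γ, g⁻¹ * v ∈ normFormSubgroup (c : k) ⊔
      normFormSubgroup (d : k) ⊔ normFormSubgroup ((c * d : ℕ) : k)) (t : k) :
    (t ≠ 0 ∧ ¬ IsSquare t) ↔
      (∃ m : ℕ, (m = c ∨ m = d ∨ m = c * d) ∧ ∃ y z : k, y * z = 1 ∧ t = m * y ^ 2) ∨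
      ∃ g ∈ Γ, normSign c d (g : k) = -1 ∧ ∃ x y u₁ v₁ u₂ v₂ u₃ v₃ z : k,
        (x ^ 2 - c * t * y ^ 2) * z = 1 ∧ x ^ 2 - c * t * y ^ 2 = g * ((u₁ ^ 2 - c * v₁ ^ 2) *
          (u₂ ^ 2 - d * v₂ ^ 2) * (u₃ ^ 2 - ((c * d : ℕ) : k) * v₃ ^ 2)) := by
  have hm0 : ∀ m : ℕ, (m = c ∨ m = d ∨ m = c * d) → (m : k) ≠ 0 ∧ ¬ IsSquare (m : k) := by
    rintro m (rfl | rfl | rfl)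
    · exact ⟨Nat.cast_ne_zero.mpr hc0, hc⟩
    · exact ⟨Nat.cast_ne_zero.mpr hd0, hd⟩
    · exact ⟨Nat.cast_ne_zero.mpr (mul_ne_zero hc0 hd0), hcd⟩
  constructor
  · rintro ⟨ht0, ht⟩
    by_cases hex : ∃ m : ℕ, (m = c ∨ m = d ∨ m = c * d) ∧ IsSquare ((m : k) * t)
    · obtain ⟨m, hm, r, hr⟩ := hex
      obtain ⟨hmk, -⟩ := hm0 m hm
      have hr0 : r ≠ 0 := by
        rintro rfl
        exact mul_ne_zero hmk ht0 (hr.trans (mul_zero 0))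
      refine Or.inl ⟨m, hm, r / m, m / r, by field_simp, ?_⟩
      field_simp
      linear_combination hr
    · push Not at hex
      right
      obtain ⟨x, y, hxy⟩ := exists_normSign_eq_neg_one hc0 hc hd (by rwa [← Nat.cast_mul]) ht
        (hex c (Or.inl rfl)) (hex d (Or.inr (Or.inl rfl)))
        (by rw [← Nat.cast_mul]; exact hex (c * d) (Or.inr (Or.inr rfl)))
      have hv : x ^ 2 - c * t * y ^ 2 ≠ 0 := by
        intro h0
        rw [h0, normSign_zero] at hxy
        norm_num at hxy
      obtain ⟨g, hg, hmem⟩ := hΓ (Units.mk0 _ hv)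
      obtain ⟨w, hw, w₃, hw₃, hw123⟩ := Subgroup.mem_sup.mp hmem
      obtain ⟨w₁, hw₁, w₂, hw₂, rfl⟩ := Subgroup.mem_sup.mp hw
      obtain ⟨u₁, v₁, h₁⟩ := mem_normFormSubgroup.mp hw₁
      obtain ⟨u₂, v₂, h₂⟩ := mem_normFormSubgroup.mp hw₂
      obtain ⟨u₃, v₃, h₃⟩ := mem_normFormSubgroup.mp hw₃
      have hval : x ^ 2 - c * t * y ^ 2 = g * ((u₁ ^ 2 - c * v₁ ^ 2) * (u₂ ^ 2 - d * v₂ ^ 2) *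
          (u₃ ^ 2 - ((c * d : ℕ) : k) * v₃ ^ 2)) := by
        rw [← h₁, ← h₂, ← h₃, ← Units.val_mul, ← Units.val_mul, hw123, ← Units.val_mul,
          mul_inv_cancel_left, Units.val_mk0]
      refine ⟨g, hg, ?_, x, y, u₁, v₁, u₂, v₂, u₃, v₃, (x ^ 2 - c * t * y ^ 2)⁻¹,
        mul_inv_cancel₀ hv, hval⟩
      rw [hval, normSign_mul, normSign_mul, normSign_mul, hsc _ _ (h₁ ▸ w₁.ne_zero),
        hsd _ _ (h₂ ▸ w₂.ne_zero), hscd _ _ (h₃ ▸ w₃.ne_zero)] at hxy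
      simpa using hxy
  · rintro (⟨m, hm, y, z, hyz, rfl⟩ | ⟨g, -, hgs, x, y, u₁, v₁, u₂, v₂, u₃, v₃, z, hz, hval⟩)
    · have hy : y ≠ 0 := left_ne_zero_of_mul_eq_one hyz
      obtain ⟨hmk, hms⟩ := hm0 m hm
      exact ⟨mul_ne_zero hmk (pow_ne_zero 2 hy), fun h =>
        hms (isSquare_left_of_isSquare_mul (pow_ne_zero 2 hy) h (IsSquare.sq y))⟩
    · have hns : ¬ IsSquare t := by
        rintro ⟨s, rfl⟩
        have hv : x ^ 2 - c * (s * s) * y ^ 2 ≠ 0 := left_ne_zero_of_mul_eq_one hz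
        have h1 : normSign c d (x ^ 2 - c * (s * s) * y ^ 2) = 1 := by
          have he : x ^ 2 - c * (s * s) * y ^ 2 = x ^ 2 - c * (s * y) ^ 2 := by ring
          rw [he] at hv ⊢
          exact hsc _ _ hv
        rw [hval] at h1 hv
        have hprod := right_ne_zero_of_mul hv
        rw [normSign_mul, normSign_mul, normSign_mul, hgs,
          hsc _ _ (left_ne_zero_of_mul (left_ne_zero_of_mul hprod)),
          hsd _ _ (right_ne_zero_of_mul (left_ne_zero_of_mul hprod)),
          hscd _ _ (right_ne_zero_of_mul hprod)] at h1
        norm_num at h1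
      exact ⟨fun h0 => hns (h0 ▸ IsSquare.zero), hns⟩

end Main

/-- For any number field `k`, the set `k^× − k^{×2}` of nonzero non-squares
is diophantine over `k`. -/
theorem nonsquares_isDiophantine (k : Type*) [Field k] [NumberField k] :
    IsDiophantineSet k {t : k | t ≠ 0 ∧ ¬ ∃ s : k, s ≠ 0 ∧ s ^ 2 = t} := by
  classical
  obtain ⟨c, d, hcp, hdp, hc8, hd2, hdc, hsq, hc, hd, hcd⟩ := exists_primes_not_isSquare k
  obtain ⟨Γ, hΓ⟩ := exists_finset_mul_mem_sup hc hd hcd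
  have key := ne_zero_and_not_isSquare_iff hcp.ne_zero hdp.ne_zero hc hd hcd
    (normSign_sq_sub_mul_sq nonresidueSign_sq_sub_mul_sq_left)
    (normSign_sq_sub_mul_sq nonresidueSign_sq_sub_mul_sq_right)
    (normSign_sq_sub_mul_sq (nonresidueSign_sq_sub_mul_sq_mul hcp hdp hc8 hd2 hdc hsq)) hΓ
  refine HasDiophantineDescription.isDiophantineSet ?_
  have hset : {t : k | t ≠ 0 ∧ ¬ ∃ s : k, s ≠ 0 ∧ s ^ 2 = t} =
      (⋃ m ∈ ({c, d, c * d} : Finset ℕ), {t : k | ∃ y z, y * z = 1 ∧ t = m * y ^ 2}) ∪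
      ⋃ g ∈ Γ.filter (fun g : kˣ => normSign c d (g : k) = -1),
        {t : k | ∃ x y u₁ v₁ u₂ v₂ u₃ v₃ z, (x ^ 2 - c * t * y ^ 2) * z = 1 ∧
          x ^ 2 - c * t * y ^ 2 = (g : k) * ((u₁ ^ 2 - c * v₁ ^ 2) * (u₂ ^ 2 - d * v₂ ^ 2) *
            (u₃ ^ 2 - ((c * d : ℕ) : k) * v₃ ^ 2))} := by
    ext t
    have hleft : (t ≠ 0 ∧ ¬ ∃ s : k, s ≠ 0 ∧ s ^ 2 = t) ↔ (t ≠ 0 ∧ ¬ IsSquare t) := by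
      refine and_congr_right fun ht => not_congr ⟨fun ⟨s, _, hs⟩ => ⟨s, by rw [← hs, sq]⟩,
        fun ⟨s, hs⟩ => ⟨s, ?_, by rw [hs, sq]⟩⟩
      rintro rfl
      exact ht (hs.trans (mul_zero 0))
    rw [Set.mem_ofPred_eq, hleft, key t, Set.mem_union]
    simp only [Set.mem_iUnion, exists_prop, Finset.mem_insert, Finset.mem_singleton,
      Finset.mem_filter, Set.mem_ofPred_eq, and_assoc]
  rw [hset]
  exact (HasDiophantineDescription.biUnion _ _ fun m _ => .mul_sq _).union
    (HasDiophantineDescription.biUnion _ _ fun g _ => .normForm _ _ _ _ _)
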